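/- arXiv:2505.20960 — 8 statements merged into one kernel-verified Lean document; each statement's English description precedes it below -/
import Mathlib

section
/- Let k and n be positive integers with n < k, let F_k be the free group on generators x_1, …, x_k, and let w = x_1² x_2² ⋯ x_n² ∈ F_k be the non-orientable partial surface word. Suppose w' ∈ F_k induces the same word measure as w on every finite group, i.e. for every finite group G and every g ∈ G the number of tuples (h_1,…,h_k) ∈ G^k with w(h_1,…,h_k) = g equals the number of tuples with w'(h_1,…,h_k) = g. Then there exists an automorphism f of F_k with f(w) = w'. -/
open FreeGroup (of mk)

/-- Two words induce the same counting function on every finite group. -/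
def SameWordMeasure {α : Type} (w w' : FreeGroup α) : Prop :=
  ∀ (G : Type) [Group G] [Finite G] (g : G),
    Nat.card {h : α → G // FreeGroup.lift h w = g} =
      Nat.card {h : α → G // FreeGroup.lift h w' = g}

namespace SameWordMeasure

variable {α : Type} {w w' : FreeGroup α}

/-- Precomposition of homomorphisms to `G` with an automorphism, on tuples. -/
def autTuples (f : FreeGroup α ≃* FreeGroup α) (G : Type) [Group G] : (α → G) ≃ (α → G) :=
  (FreeGroup.lift.trans
    { toFun := fun φ : FreeGroup α →* G => φ.comp f.toMonoidHom
      invFun := fun φ => φ.comp f.symm.toMonoidHom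
      left_inv := fun φ => by ext; simp
      right_inv := fun φ => by ext; simp }).trans FreeGroup.lift.symm

theorem lift_autTuples (f : FreeGroup α ≃* FreeGroup α) {G : Type} [Group G] (h : α → G)
    (x : FreeGroup α) : FreeGroup.lift (autTuples f G h) x = FreeGroup.lift h (f x) := by
  simp [autTuples]

theorem map_right (hm : SameWordMeasure w w') (f : FreeGroup α ≃* FreeGroup α) :
    SameWordMeasure w (f w') := by
  intro G _ _ g
  rw [hm G g]
  refine (Nat.card_congr ((autTuples f G).subtypeEquiv fun h => ?_)).symm
  rw [lift_autTuples]

theorem sum_eq [Fintype α] [DecidableEq α] (hm : SameWordMeasure w w') {G : Type} [Group G]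
    [Fintype G] (Ψ : G → ℤ) :
    ∑ h : α → G, Ψ (FreeGroup.lift h w) = ∑ h : α → G, Ψ (FreeGroup.lift h w') := by
  classical
  have key : ∀ v : FreeGroup α, ∑ h : α → G, Ψ (FreeGroup.lift h v) =
      ∑ g : G, (Nat.card {h : α → G // FreeGroup.lift h v = g} : ℤ) * Ψ g := by
    intro v
    rw [← Finset.sum_fiberwise (s := Finset.univ) (g := fun h : α → G => FreeGroup.lift h v)]
    refine Finset.sum_congr rfl fun g _ => ?_
    rw [Finset.sum_congr rfl (g := fun _ => Ψ g)
      (fun h hh => by rw [(Finset.mem_filter.mp hh).2])]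
    rw [Finset.sum_const, Nat.card_eq_fintype_card, Fintype.card_subtype, nsmul_eq_mul]
  rw [key, key]
  exact Finset.sum_congr rfl fun g _ => by rw [hm G g]

end SameWordMeasure

section FoxCalculus

variable {α X A B : Type} [AddCommGroup A] [AddCommGroup B]

/-- The permutation action on `A`-valued functions, as automorphisms. -/
def permAut (X A : Type) [AddCommGroup A] :
    Equiv.Perm X →* MulAut (Multiplicative (X → A)) where
  toFun s :=
    { toFun := fun v => Multiplicative.ofAdd fun x => v.toAdd (s⁻¹ x)
      invFun := fun v => Multiplicative.ofAdd fun x => v.toAdd (s x)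
      left_inv := fun v => by ext; simp
      right_inv := fun v => by ext; simp
      map_mul' := fun v v' => rfl }
  map_one' := rfl
  map_mul' s t := by ext v; simp

/-- The total Fox derivative of `w` at the permutations `σ`, in the direction `v`: the
function part of `w` evaluated at the elements `(v i, σ i)` of a wreath product. -/
def foxD (σ : α → Equiv.Perm X) (w : FreeGroup α) (v : α → X → A) : X → A :=
  (FreeGroup.lift (fun i => (⟨Multiplicative.ofAdd (v i), σ i⟩ :
    Multiplicative (X → A) ⋊[permAut X A] Equiv.Perm X)) w).left.toAdd

theorem lift_right (σ : α → Equiv.Perm X) (w : FreeGroup α) (v : α → X → A) :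
    (FreeGroup.lift (fun i => (⟨Multiplicative.ofAdd (v i), σ i⟩ :
      Multiplicative (X → A) ⋊[permAut X A] Equiv.Perm X)) w).right = FreeGroup.lift σ w := by
  have : (SemidirectProduct.rightHom.comp (FreeGroup.lift (fun i =>
      (⟨Multiplicative.ofAdd (v i), σ i⟩ :
      Multiplicative (X → A) ⋊[permAut X A] Equiv.Perm X)))) = FreeGroup.lift σ := by
    ext; simp
  exact DFunLike.congr_fun this w

@[simp] theorem foxD_one (σ : α → Equiv.Perm X) (v : α → X → A) : foxD σ 1 v = 0 := by
  simp [foxD]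

theorem foxD_mul (σ : α → Equiv.Perm X) (w₁ w₂ : FreeGroup α) (v : α → X → A) :
    foxD σ (w₁ * w₂) v = foxD σ w₁ v + foxD σ w₂ v ∘ ⇑(FreeGroup.lift σ w₁)⁻¹ := by
  rw [← lift_right σ w₁ v]
  simp only [foxD, map_mul, SemidirectProduct.mul_left, toAdd_mul]
  rfl

@[simp] theorem foxD_of (σ : α → Equiv.Perm X) (i : α) (v : α → X → A) :
    foxD σ (of i) v = v i := by
  simp [foxD]

theorem foxD_inv (σ : α → Equiv.Perm X) (w : FreeGroup α) (v : α → X → A) :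
    foxD σ w⁻¹ v = - (foxD σ w v ∘ FreeGroup.lift σ w) := by
  have h := foxD_mul σ w⁻¹ w v
  rw [inv_mul_cancel, foxD_one, map_inv, inv_inv] at h
  exact eq_neg_of_add_eq_zero_left h.symm

theorem foxD_map (σ : α → Equiv.Perm X) (w : FreeGroup α) (v : α → X → A) (g : A →+ B) :
    foxD σ w (fun i x => g (v i x)) = fun x => g (foxD σ w v x) := by
  induction w using FreeGroup.induction_on with
  | C1 => ext; simp
  | of i => simp
  | inv_of i h => ext x; simp [foxD_inv]
  | mul w₁ w₂ h₁ h₂ => ext x; simp [foxD_mul, h₁, h₂]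

theorem foxD_add (σ : α → Equiv.Perm X) (w : FreeGroup α) (v v' : α → X → A) :
    foxD σ w (v + v') = foxD σ w v + foxD σ w v' := by
  induction w using FreeGroup.induction_on with
  | C1 => simp
  | of i => simp
  | inv_of i h => ext x; simp [foxD_inv, add_comm]
  | mul w₁ w₂ h₁ h₂ => ext x; simp [foxD_mul, h₁, h₂]; abel

/-- The nontrivial additive character of `ZMod 2`. -/
def signChar (a : ZMod 2) : ℤ := if a = 0 then 1 else -1

theorem signChar_add : ∀ a b, signChar (a + b) = signChar a * signChar b := by decide

theorem sum_signChar {V : Type} [AddCommGroup V] [Fintype V] (f : V → ZMod 2)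
    (hf : ∀ v v', f (v + v') = f v + f v') [Decidable (∀ v, f v = 0)] :
    ∑ v, signChar (f v) = if ∀ v, f v = 0 then (Fintype.card V : ℤ) else 0 := by
  split_ifs with h
  · simp [h, signChar]
  · push Not at h
    obtain ⟨v₀, hv₀⟩ := h
    have h1 : ∑ v, signChar (f v) = ∑ v, signChar (f (v + v₀)) :=
      (Equiv.sum_comp (Equiv.addRight v₀) fun v => signChar (f v)).symm
    have h2 : signChar (f v₀) = -1 := by simp [signChar, hv₀]
    simp only [hf, signChar_add, h2] at h1
    rw [← Finset.sum_mul] at h1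
    linarith

open Classical in
theorem SameWordMeasure.card_foxD_eq [Fintype α] [Fintype X] [Fintype A]
    {w w' : FreeGroup α} (hm : SameWordMeasure w w') (f : (X → A) →+ ZMod 2) :
    Fintype.card {σ : α → Equiv.Perm X // ∀ v, f (foxD σ w v) = 0} =
      Fintype.card {σ : α → Equiv.Perm X // ∀ v, f (foxD σ w' v) = 0} := by
  let W := Multiplicative (X → A) ⋊[permAut X A] Equiv.Perm X
  let e : (α → X → A) × (α → Equiv.Perm X) ≃ (α → W) :=
    { toFun := fun p i => ⟨Multiplicative.ofAdd (p.1 i), p.2 i⟩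
      invFun := fun h => (fun i => (h i).left.toAdd, fun i => (h i).right)
      left_inv := fun _ => rfl
      right_inv := fun _ => rfl }
  have : Fintype W := Fintype.ofEquiv _ SemidirectProduct.equivProd.symm
  have key : ∀ u : FreeGroup α, ∑ h : α → W, signChar (f (FreeGroup.lift h u).left.toAdd) =
      (Fintype.card {σ : α → Equiv.Perm X // ∀ v, f (foxD σ u v) = 0} : ℤ) *
        Fintype.card (α → X → A) := by
    intro u
    rw [← e.sum_comp, Fintype.sum_prod_type_right]
    have : ∀ σ : α → Equiv.Perm X,
        ∑ v : α → X → A, signChar (f (FreeGroup.lift (e (v, σ)) u).left.toAdd) =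
          if ∀ v, f (foxD σ u v) = 0 then (Fintype.card (α → X → A) : ℤ) else 0 := fun σ =>
      sum_signChar (fun v => f (foxD σ u v)) fun v v' => by rw [foxD_add, map_add]
    rw [Finset.sum_congr rfl fun σ _ => this σ, ← Finset.sum_filter, Finset.sum_const,
      Fintype.card_subtype, nsmul_eq_mul]
  have h := hm.sum_eq (G := W) fun g => signChar (f g.left.toAdd)
  rw [key, key] at h
  have h0 : (Fintype.card (α → X → A) : ℤ) ≠ 0 := by exact_mod_cast Fintype.card_ne_zero
  exact_mod_cast mul_right_cancel₀ h0 h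

/-- `f` is orthogonal to all Fox derivatives of `w` at `σ`. -/
def FoxOrtho [Fintype X] (σ : α → Equiv.Perm X) (w : FreeGroup α) (f : X → ZMod 2) : Prop :=
  ∀ v : α → X → ZMod 2, ∑ x, f x * foxD σ w v x = 0

/-- The pairing of a triple of functions with a triple-valued function. -/
def triplePairing [Fintype X] (f : Fin 3 → X → ZMod 2) : (X → Fin 3 → ZMod 2) →+ ZMod 2 where
  toFun v := ∑ i, ∑ x, f i x * v x i
  map_zero' := by simp
  map_add' v v' := by simp [mul_add, Finset.sum_add_distrib]

theorem triplePairing_foxD_iff [Fintype X] (σ : α → Equiv.Perm X) (w : FreeGroup α)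
    (f : Fin 3 → X → ZMod 2) :
    (∀ v, triplePairing f (foxD σ w v) = 0) ↔ ∀ i, FoxOrtho σ w (f i) := by
  constructor
  · intro h i v
    have := h (fun a x => AddMonoidHom.single (fun _ : Fin 3 => ZMod 2) i (v a x))
    rw [foxD_map] at this
    simp only [triplePairing, AddMonoidHom.coe_mk, ZeroHom.coe_mk, AddMonoidHom.single_apply]
      at this
    rw [Finset.sum_eq_single i] at this
    · simpa using this
    · intro j _ hj
      simp [hj]
    · simp
  · intro h v
    simp only [triplePairing, AddMonoidHom.coe_mk, ZeroHom.coe_mk]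
    refine Finset.sum_eq_zero fun i _ => ?_
    have h1 := h i fun a x => Pi.evalAddMonoidHom (fun _ : Fin 3 => ZMod 2) i (v a x)
    rw [foxD_map] at h1
    exact h1

theorem FoxOrtho.zero [Fintype X] (σ : α → Equiv.Perm X) (w : FreeGroup α) :
    FoxOrtho σ w 0 := by
  intro v; simp

theorem SameWordMeasure.foxOrtho_transfer [Fintype α] [Fintype X] {w w' : FreeGroup α}
    (hm : SameWordMeasure w w') (f₁ f₂ f₃ : X → ZMod 2)
    (h : ∀ σ, FoxOrtho σ w f₁ → FoxOrtho σ w f₂ → FoxOrtho σ w f₃)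
    (σ : α → Equiv.Perm X) (h₁ : FoxOrtho σ w' f₁) (h₂ : FoxOrtho σ w' f₂) :
    FoxOrtho σ w' f₃ := by
  classical
  have e₁ := hm.card_foxD_eq (triplePairing ![f₁, f₂, f₃])
  have e₂ := hm.card_foxD_eq (triplePairing ![f₁, f₂, 0])
  simp only [triplePairing_foxD_iff, Fin.forall_fin_succ, Matrix.cons_val_zero,
    Matrix.cons_val_succ, IsEmpty.forall_iff, and_true, FoxOrtho.zero] at e₁ e₂
  have e₃ : Fintype.card {σ // FoxOrtho σ w f₁ ∧ FoxOrtho σ w f₂ ∧ FoxOrtho σ w f₃} =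
      Fintype.card {σ // FoxOrtho σ w f₁ ∧ FoxOrtho σ w f₂} :=
    Fintype.card_congr (Equiv.subtypeEquivRight fun σ =>
      ⟨fun p => ⟨p.1, p.2.1⟩, fun p => ⟨p.1, p.2, h σ p.1 p.2⟩⟩)
  rw [e₁, e₂, Fintype.card_subtype, Fintype.card_subtype] at e₃
  have := Finset.eq_of_subset_of_card_le (s := Finset.univ.filter fun σ =>
      FoxOrtho σ w' f₁ ∧ FoxOrtho σ w' f₂ ∧ FoxOrtho σ w' f₃)
    (t := Finset.univ.filter fun σ => FoxOrtho σ w' f₁ ∧ FoxOrtho σ w' f₂)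
    (fun σ hσ => by simp at hσ ⊢; exact ⟨hσ.1, hσ.2.1⟩) e₃.ge
  have hσ : σ ∈ Finset.univ.filter fun σ => FoxOrtho σ w' f₁ ∧ FoxOrtho σ w' f₂ := by
    simp [h₁, h₂]
  rw [← this] at hσ
  simp at hσ
  exact hσ.2.2

end FoxCalculus

section FoxSquares

variable {α X : Type}

/-- The product of the squares of the generators in a list. -/
def squareProd (ps : List α) : FreeGroup α := (ps.map fun i => of i ^ 2).prod

@[simp] theorem squareProd_nil : squareProd ([] : List α) = 1 := rfl

@[simp] theorem squareProd_cons (i : α) (ps : List α) :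
    squareProd (i :: ps) = of i ^ 2 * squareProd ps := by
  simp [squareProd]

theorem squareProd_append (ps qs : List α) :
    squareProd (ps ++ qs) = squareProd ps * squareProd qs := by
  simp [squareProd]

theorem foxD_squareProd_of_notMem [DecidableEq α] (σ : α → Equiv.Perm X) (ps : List α) {i : α}
    (hi : i ∉ ps) (v : X → ZMod 2) : foxD σ (squareProd ps) (Pi.single i v) = 0 := by
  induction ps with
  | nil => simp
  | cons j ps ih =>
    simp only [List.mem_cons, not_or] at hi
    rw [squareProd_cons, foxD_mul, ih hi.2, pow_two, foxD_mul, foxD_of,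
      Pi.single_eq_of_ne (Ne.symm hi.1)]
    simp

theorem sum_mul_comp_inv [Fintype X] (f g : X → ZMod 2) (s : Equiv.Perm X) :
    ∑ x, f x * g (s⁻¹ x) = ∑ x, f (s x) * g x := by
  rw [← Equiv.sum_comp s]
  simp

theorem foxOrtho_squareProd_cons [Fintype X] [DecidableEq α] (σ : α → Equiv.Perm X) (ps : List α)
    {i : α} (hi : i ∉ ps) (f : X → ZMod 2) :
    FoxOrtho σ (squareProd (i :: ps)) f ↔
      (∀ x, f (σ i x) = f x) ∧ FoxOrtho σ (squareProd ps) f := by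
  classical
  have hexp : ∀ v : α → X → ZMod 2, ∑ x, f x * foxD σ (squareProd (i :: ps)) v x =
      ∑ x, (f x + f (σ i x)) * v i x +
        ∑ x, f (σ i (σ i x)) * foxD σ (squareProd ps) v x := by
    intro v
    have h2 := sum_mul_comp_inv f (foxD σ (squareProd ps) v) (σ i * σ i)
    have h1 := sum_mul_comp_inv f (v i) (σ i)
    simp only [Equiv.Perm.mul_apply] at h2
    rw [← h2]
    simp only [add_mul, Finset.sum_add_distrib, ← h1]
    simp [squareProd_cons, pow_two, foxD_mul, mul_add, Finset.sum_add_distrib]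
  have hinv : FoxOrtho σ (squareProd (i :: ps)) f → ∀ x, f (σ i x) = f x := by
    intro h x
    have := h (Pi.single i (Pi.single x 1))
    rw [hexp, foxD_squareProd_of_notMem σ ps hi] at this
    simp [Pi.single_apply] at this
    exact (CharTwo.add_eq_zero.mp this).symm
  have hred : (∀ x, f (σ i x) = f x) → ∀ v : α → X → ZMod 2,
      ∑ x, f x * foxD σ (squareProd (i :: ps)) v x = ∑ x, f x * foxD σ (squareProd ps) v x := by
    intro h v
    rw [hexp]
    simp [h, CharTwo.add_self_eq_zero]
  constructor
  · intro h
    exact ⟨hinv h, fun v => (hred (hinv h) v).symm.trans (h v)⟩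
  · rintro ⟨h, h'⟩ v
    exact (hred h v).trans (h' v)

theorem foxOrtho_squareProd_iff [Fintype X] [DecidableEq α] (σ : α → Equiv.Perm X) (ps : List α)
    (hps : ps.Nodup) (f : X → ZMod 2) :
    FoxOrtho σ (squareProd ps) f ↔ ∀ i ∈ ps, ∀ x, f (σ i x) = f x := by
  induction ps with
  | nil => simp [FoxOrtho]
  | cons i ps ih =>
    rw [List.nodup_cons] at hps
    rw [foxOrtho_squareProd_cons σ ps hps.1, ih hps.2]
    simp

end FoxSquares

section CyclicWords

variable {α X : Type} {m : ℕ}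

/-- The product of the first `r` letters of a cyclic word. -/
def prefixProd (l : ZMod m → α × Bool) (r : ℕ) : FreeGroup α :=
  ((List.range r).map fun j : ℕ => mk [l (j : ZMod m)]).prod

@[simp] theorem prefixProd_zero (l : ZMod m → α × Bool) : prefixProd l 0 = 1 := rfl

theorem prefixProd_succ (l : ZMod m → α × Bool) (r : ℕ) :
    prefixProd l (r + 1) = prefixProd l r * mk [l (r : ZMod m)] := by
  simp [prefixProd, List.range_succ]

theorem sum_range_zmod [NeZero m] {M : Type} [AddCommMonoid M] (F : ZMod m → M) :
    ∑ j ∈ Finset.range m, F (j : ZMod m) = ∑ j, F j := by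
  refine Finset.sum_nbij' (fun j => (j : ZMod m)) (fun j => j.val) ?_ ?_ ?_ ?_ ?_
  · simp
  · intro j _
    simpa using ZMod.val_lt j
  · intro j hj
    exact ZMod.val_natCast_of_lt (by simpa using hj)
  · intro j _
    simp
  · simp

theorem sum_mul_foxD_prefixProd [Fintype X] (σ : α → Equiv.Perm X) (l : ZMod m → α × Bool)
    (f : ZMod m → X → ZMod 2)
    (hf : ∀ j x, f j (FreeGroup.lift σ (mk [l j]) x) = f (j + 1) x)
    (v : α → X → ZMod 2) (r : ℕ) :
    ∑ x, f 0 x * foxD σ (prefixProd l r) v x =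
      ∑ j ∈ Finset.range r, ∑ x, (if (l (j : ZMod m)).2 then f (j : ZMod m) x
        else f ((j : ZMod m) + 1) x) * v (l (j : ZMod m)).1 x := by
  have htr : ∀ r : ℕ, ∀ x, f 0 (FreeGroup.lift σ (prefixProd l r) x) = f (r : ZMod m) x := by
    intro r
    induction r with
    | zero => simp
    | succ r ih =>
      intro x
      rw [prefixProd_succ, map_mul, Equiv.Perm.mul_apply, ih, hf]
      simp
  induction r with
  | zero => simp
  | succ r ih =>
    rw [Finset.sum_range_succ, ← ih, prefixProd_succ, foxD_mul]
    simp only [Pi.add_apply, mul_add, Finset.sum_add_distrib, Function.comp_apply]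
    congr 1
    rw [sum_mul_comp_inv]
    simp only [htr]
    have hr := hf r
    rcases h : l (r : ZMod m) with ⟨i, _ | _⟩
    · have hmk : mk [(i, false)] = (of i)⁻¹ := rfl
      rw [h, hmk] at hr
      simp only [hmk, foxD_inv, foxD_of, ← hr]
      have hc := Equiv.sum_comp (σ i) fun x =>
        f (r : ZMod m) (FreeGroup.lift σ (of i)⁻¹ x) * v i x
      simp only [Bool.false_eq_true, if_false]
      rw [← hc]
      simp [ZMod.neg_eq_self_mod_two]
    · have hmk : mk [(i, true)] = of i := rfl
      simp [hmk]

theorem foxOrtho_prefixProd_iff [NeZero m] [Fintype X] [Fintype α] [DecidableEq α]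
    (σ : α → Equiv.Perm X)
    (l : ZMod m → α × Bool) (f : ZMod m → X → ZMod 2)
    (hf : ∀ j x, f j (FreeGroup.lift σ (mk [l j]) x) = f (j + 1) x) :
    FoxOrtho σ (prefixProd l m) (f 0) ↔
      ∀ i x, ∑ j with (l j).1 = i, (if (l j).2 then f j x else f (j + 1) x) = 0 := by
  classical
  have key : ∀ v : α → X → ZMod 2, ∑ x, f 0 x * foxD σ (prefixProd l m) v x =
      ∑ i, ∑ x, (∑ j with (l j).1 = i, (if (l j).2 then f j x else f (j + 1) x)) * v i x := by
    intro v
    rw [sum_mul_foxD_prefixProd σ l f hf v m, sum_range_zmod (fun j => ∑ x,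
      (if (l j).2 then f j x else f (j + 1) x) * v (l j).1 x),
      ← Finset.sum_fiberwise (s := Finset.univ) (g := fun j => (l j).1)]
    refine Finset.sum_congr rfl fun i _ => ?_
    rw [Finset.sum_comm]
    refine Finset.sum_congr rfl fun x _ => ?_
    rw [Finset.sum_mul]
    exact Finset.sum_congr rfl fun j hj => by rw [(Finset.mem_filter.mp hj).2]
  constructor
  · intro h i x
    have := h (Pi.single i (Pi.single x 1))
    rw [key, Finset.sum_eq_single i] at this
    · simpa [Pi.single_apply] using this
    · intro j _ hj
      simp [Pi.single_eq_of_ne hj]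
    · simp
  · intro h v
    rw [key]
    simp [h]

end CyclicWords

section CycleSpace

variable {V E : Type} [Fintype E] [DecidableEq V]

/-- The boundary map mod 2 of the multigraph with edges `E` and endpoint maps `s`, `t`. -/
def bdry (s t : E → V) : (E → ZMod 2) →ₗ[ZMod 2] (V → ZMod 2) where
  toFun c v := (∑ e with s e = v, c e) + ∑ e with t e = v, c e
  map_add' c c' := by ext v; simp [Finset.sum_add_distrib]; ring
  map_smul' a c := by ext v; simp [Finset.mul_sum, mul_add]

theorem bdry_apply (s t : E → V) (c : E → ZMod 2) (v : V) :
    bdry s t c v = (∑ e with s e = v, c e) + ∑ e with t e = v, c e := rfl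

theorem bdry_single [DecidableEq E] (s t : E → V) (e : E) :
    bdry s t (Pi.single e 1) = Pi.single (s e) 1 + Pi.single (t e) 1 := by
  ext v
  simp [bdry_apply, Pi.single_apply, Finset.sum_ite_eq, eq_comm]

/-- If no cut separating `u` from `u'` has fewer edges than the star of `u`, then every even
set of edges at `u` is the trace of a cycle. -/
theorem exists_cycle_extending [Fintype V] [DecidableEq E] (s t : E → V) (u u' : V)
    (hne : u' ≠ u)
    (hcut : ∀ χ : V → Bool, χ u = true → χ u' = false →
      (Finset.univ.filter fun e => s e = u ∨ t e = u).card ≤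
        (Finset.univ.filter fun e => χ (s e) ≠ χ (t e)).card)
    (r : {e // s e = u ∨ t e = u} → ZMod 2) (hr : ∑ e, r e = 0) :
    ∃ c ∈ LinearMap.ker (bdry s t), ∀ e : {e // s e = u ∨ t e = u}, c e = r e := by
  classical
  let ρ : (E → ZMod 2) →ₗ[ZMod 2] ({e // s e = u ∨ t e = u} → ZMod 2) :=
    LinearMap.funLeft (ZMod 2) (ZMod 2) Subtype.val
  suffices h : r ∈ (LinearMap.ker (bdry s t)).map ρ by
    obtain ⟨c, hc, hcr⟩ := h
    exact ⟨c, hc, fun e => congrFun hcr e⟩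
  by_contra hr'
  obtain ⟨Λ, hΛr, hΛ⟩ := Submodule.exists_le_ker_of_notMem hr'
  have hmem : Λ ∘ₗ ρ ∈ (LinearMap.ker (bdry s t)).dualAnnihilator := by
    rw [Submodule.mem_dualAnnihilator]
    intro c hc
    exact hΛ (Submodule.mem_map_of_mem hc)
  rw [← LinearMap.range_dualMap_eq_dualAnnihilator_ker] at hmem
  obtain ⟨γ, hγ⟩ := hmem
  let g : V → ZMod 2 := fun v => γ (Pi.single v 1)
  have hlam : ∀ e, Λ (ρ (Pi.single e 1)) = g (s e) + g (t e) := by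
    intro e
    have : γ (bdry s t (Pi.single e 1)) = Λ (ρ (Pi.single e 1)) := DFunLike.congr_fun hγ _
    rw [← this, bdry_single, map_add]
  have hoff : ∀ e, ¬ (s e = u ∨ t e = u) → g (s e) = g (t e) := by
    intro e he
    have h0 : ρ (Pi.single e 1) = 0 := by
      ext x
      have : (x : E) ≠ e := fun hx => he (hx ▸ x.2)
      simp [ρ, LinearMap.funLeft, Pi.single_eq_of_ne this]
    have := hlam e
    rw [h0, map_zero] at this
    exact CharTwo.add_eq_zero.mp this.symm
  have hconst : ∃ a, ∀ e, s e = u ∨ t e = u → g (s e) + g (t e) = a := by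
    by_cases hg : g u' = g u
    · refine ⟨0, ?_⟩
      let χ : V → Bool := fun v => decide (v = u ∨ g v ≠ g u)
      have h1 := hcut χ (by simp [χ]) (by simp [χ, hne, hg])
      have hsub : (Finset.univ.filter fun e => χ (s e) ≠ χ (t e)) ⊆
          Finset.univ.filter fun e => (s e = u ∨ t e = u) ∧ g (s e) = g (t e) := by
        intro e he
        simp only [Finset.mem_filter, Finset.mem_univ, true_and, χ, ne_eq, decide_eq_decide] at he ⊢
        by_cases hst : s e = u ∨ t e = u
        · refine ⟨hst, ?_⟩
          rcases hst with hs | hs <;> simp only [hs] at he ⊢ <;> tauto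
        · have := hoff e hst
          rw [not_or] at hst
          simp [hst.1, hst.2, this] at he
      have hsub' : (Finset.univ.filter fun e => (s e = u ∨ t e = u) ∧ g (s e) = g (t e)) ⊆
          Finset.univ.filter fun e => s e = u ∨ t e = u := by
        intro e he
        simp only [Finset.mem_filter, Finset.mem_univ, true_and] at he ⊢
        exact he.1
      have heq := Finset.eq_of_subset_of_card_le hsub' (h1.trans (Finset.card_le_card hsub))
      intro e he
      have : e ∈ Finset.univ.filter fun e => s e = u ∨ t e = u := by simpa using he
      rw [← heq] at this
      simp only [Finset.mem_filter, Finset.mem_univ, true_and] at this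
      exact CharTwo.add_eq_zero.mpr this.2
    · refine ⟨1, ?_⟩
      let χ : V → Bool := fun v => decide (g v = g u)
      have h1 := hcut χ (by simp [χ]) (by simp [χ, hg])
      have hsub : (Finset.univ.filter fun e => χ (s e) ≠ χ (t e)) ⊆
          Finset.univ.filter fun e => s e = u ∨ t e = u := by
        intro e he
        simp only [Finset.mem_filter, Finset.mem_univ, true_and, χ, ne_eq, decide_eq_decide] at he ⊢
        by_contra hst
        simp [hoff e hst] at he
      have heq := Finset.eq_of_subset_of_card_le hsub h1
      intro e he
      have : e ∈ Finset.univ.filter fun e => s e = u ∨ t e = u := by simpa using he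
      rw [← heq] at this
      simp only [Finset.mem_filter, Finset.mem_univ, true_and, χ, ne_eq, decide_eq_decide] at this
      have hne' : g (s e) ≠ g (t e) := fun h => this (by rw [h])
      generalize g (s e) = a at hne'
      generalize g (t e) = b at hne'
      revert a b
      decide
  obtain ⟨a, ha⟩ := hconst
  refine hΛr ?_
  have hsum : r = ∑ e : {e // s e = u ∨ t e = u}, r e • ρ (Pi.single (e : E) 1) := by
    ext x
    simp [ρ, LinearMap.funLeft, Finset.sum_apply, Pi.single_apply, Subtype.coe_inj]
  rw [hsum, map_sum]
  simp only [map_smul, hlam, smul_eq_mul]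
  rw [Finset.sum_congr rfl fun e _ => by rw [ha e e.2], ← Finset.sum_mul, hr, zero_mul]

/-- Two linear maps with the same range differ by a permutation of the source. -/
theorem exists_perm_of_range_eq {K Z W : Type} [Field K] [AddCommGroup Z] [Module K Z]
    [AddCommGroup W] [Module K W] [Finite Z] (p q : Z →ₗ[K] W)
    (h : LinearMap.range p = LinearMap.range q) : ∃ e : Z ≃ Z, ∀ z, q (e z) = p z := by
  classical
  have hfib : ∀ f : Z →ₗ[K] W, ∀ y ∈ LinearMap.range f,
      Nat.card {z // f z = y} = Nat.card (LinearMap.ker f) := by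
    rintro f y ⟨z₀, rfl⟩
    refine Nat.card_congr ((Equiv.subRight z₀).subtypeEquiv fun z => ?_)
    simp [sub_eq_zero]
  have hker : Nat.card (LinearMap.ker p) = Nat.card (LinearMap.ker q) := by
    have hp := Submodule.card_eq_card_quotient_mul_card (LinearMap.ker p)
    have hq := Submodule.card_eq_card_quotient_mul_card (LinearMap.ker q)
    rw [Nat.card_congr p.quotKerEquivRange.toEquiv] at hp
    rw [Nat.card_congr q.quotKerEquivRange.toEquiv, ← h, hp] at hq
    have : Finite (LinearMap.range p) := Finite.of_surjective _ p.surjective_rangeRestrict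
    have hpos : 0 < Nat.card (LinearMap.range p) := Nat.card_pos
    exact (Nat.eq_of_mul_eq_mul_left hpos (by linarith))
  have hcard : ∀ y, Nonempty ({z // p z = y} ≃ {z // q z = y}) := by
    intro y
    by_cases hy : y ∈ LinearMap.range p
    · refine Finite.card_eq.mp ?_
      rw [hfib p y hy, hfib q y (h ▸ hy), hker]
    · have h1 : IsEmpty {z // p z = y} := ⟨fun z => hy ⟨z.1, z.2⟩⟩
      have h2 : IsEmpty {z // q z = y} := ⟨fun z => hy (h ▸ ⟨z.1, z.2⟩)⟩
      exact ⟨Equiv.equivOfIsEmpty _ _⟩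
  let e := fun y => (hcard y).some
  refine ⟨(Equiv.sigmaFiberEquiv p).symm.trans
    ((Equiv.sigmaCongrRight e).trans (Equiv.sigmaFiberEquiv q)), fun z => ?_⟩
  exact (e (p z) ⟨z, rfl⟩).2

end CycleSpace

/-- The inverse letter. -/
def flipLetter {α : Type} (v : α × Bool) : α × Bool := (v.1, !v.2)

@[simp] theorem flipLetter_flipLetter {α : Type} (v : α × Bool) :
    flipLetter (flipLetter v) = v := by
  simp [flipLetter]

theorem flipLetter_ne {α : Type} (v : α × Bool) : flipLetter v ≠ v := by
  rcases v with ⟨i, _ | _⟩ <;> simp [flipLetter]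

theorem eq_flipLetter {α : Type} {u v : α × Bool} (h : v.1 = u.1) (h' : v ≠ u) :
    v = flipLetter u := by
  rcases v with ⟨i, _ | _⟩ <;> rcases u with ⟨j, _ | _⟩ <;> simp_all [flipLetter]

section WhiteheadGraph

variable {α : Type} [DecidableEq α] {m : ℕ} [NeZero m]

/-- The positions of a cyclic word at which the generator `i` or its inverse occurs. -/
def occ (l : ZMod m → α × Bool) (i : α) : Finset (ZMod m) :=
  Finset.univ.filter fun j => (l j).1 = i

/-- The letter pointing backwards from the position `j`. -/
def backLetter (l : ZMod m → α × Bool) (j : ZMod m) : α × Bool := flipLetter (l (j - 1))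

/-- The turn at the initial end (relative to the letter `u`) of the letter at position `j`. -/
def port (l : ZMod m → α × Bool) (u : α × Bool) (j : ZMod m) : ZMod m :=
  if l j = u then j else j + 1

/-- No cut of the Whitehead graph separating a letter from its inverse has fewer edges than the
number of occurrences of the letter. -/
def NoSmallCut (l : ZMod m → α × Bool) : Prop :=
  ∀ (u : α × Bool) (χ : α × Bool → Bool), χ u = true → χ (flipLetter u) = false →
    (occ l u.1).card ≤ (Finset.univ.filter fun j => χ (l j) ≠ χ (backLetter l j)).card

theorem image_port (l : ZMod m → α × Bool) (u : α × Bool) :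
    (occ l u.1).image (port l u) =
      Finset.univ.filter fun e => l e = u ∨ backLetter l e = u := by
  ext e
  simp only [Finset.mem_image, occ, Finset.mem_filter, Finset.mem_univ, true_and]
  constructor
  · rintro ⟨j, hj, rfl⟩
    by_cases h : l j = u
    · simp [port, h]
    · right
      have h' := eq_flipLetter hj h
      rw [port, if_neg h, backLetter, add_sub_cancel_right, h', flipLetter_flipLetter]
  · rintro (h | h)
    · exact ⟨e, by rw [h], by simp [port, h]⟩
    · have h' : l (e - 1) = flipLetter u := by rw [← h, backLetter, flipLetter_flipLetter]
      exact ⟨e - 1, by rw [h']; rfl, by simp [port, h', flipLetter_ne]⟩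

theorem NoSmallCut.injOn_port {l : ZMod m → α × Bool} (h : NoSmallCut l) (u : α × Bool) :
    Set.InjOn (port l u) (occ l u.1) := by
  rw [← Finset.card_image_iff]
  refine le_antisymm Finset.card_image_le ?_
  refine (h u (fun v => decide (v = u)) (by simp) (by simp [flipLetter_ne])).trans ?_
  rw [image_port]
  refine Finset.card_le_card fun e he => ?_
  simp only [Finset.mem_filter, Finset.mem_univ, true_and, ne_eq, decide_eq_decide] at he ⊢
  tauto

theorem bdry_eq_sum_port (l : ZMod m → α × Bool) (c : ZMod m → ZMod 2) (u : α × Bool) :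
    bdry l (backLetter l) c u = ∑ j ∈ occ l u.1, c (port l u j) := by
  have h1 : ∑ e with backLetter l e = u, c e = ∑ j with l j = flipLetter u, c (j + 1) := by
    rw [Finset.sum_filter, Finset.sum_filter, ← Equiv.sum_comp (Equiv.addRight (1 : ZMod m))]
    refine Finset.sum_congr rfl fun j _ => ?_
    have : flipLetter (l j) = u ↔ l j = flipLetter u :=
      ⟨fun h => by rw [← h, flipLetter_flipLetter], fun h => by rw [h, flipLetter_flipLetter]⟩
    simp [backLetter, this]
  rw [bdry_apply, h1, ← Finset.sum_filter_add_sum_filter_not (occ l u.1) fun j => l j = u]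
  congr 1
  · refine Finset.sum_congr ?_ fun j hj => ?_
    · ext j
      simp only [occ, Finset.mem_filter, Finset.mem_univ, true_and]
      exact ⟨fun h => ⟨by rw [h], h⟩, fun h => h.2⟩
    · simp [port, (Finset.mem_filter.mp hj).2]
  · refine Finset.sum_congr ?_ fun j hj => ?_
    · ext j
      simp only [occ, Finset.mem_filter, Finset.mem_univ, true_and]
      exact ⟨fun h => ⟨by rw [h]; rfl, by rw [h]; exact flipLetter_ne u⟩,
        fun h => eq_flipLetter h.1 h.2⟩
    · simp [port, (Finset.mem_filter.mp hj).2]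

/-- Restriction of cycles of the Whitehead graph to the turns at a letter, indexed by the
occurrences of the generator. -/
def pattern (l : ZMod m → α × Bool) (i : α) (b : Bool) :
    LinearMap.ker (bdry l (backLetter l)) →ₗ[ZMod 2] ({j // j ∈ occ l i} → ZMod 2) :=
  LinearMap.funLeft (ZMod 2) (ZMod 2) (fun j : {j // j ∈ occ l i} => port l (i, b) j) ∘ₗ
    Submodule.subtype _

theorem pattern_apply (l : ZMod m → α × Bool) (i : α) (b : Bool)
    (c : LinearMap.ker (bdry l (backLetter l))) (j : {j // j ∈ occ l i}) :
    pattern l i b c j = c.1 (port l (i, b) j) := rfl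

theorem NoSmallCut.mem_range_pattern [Fintype α] {l : ZMod m → α × Bool} (h : NoSmallCut l) (i : α)
    (b : Bool) (r : {j // j ∈ occ l i} → ZMod 2) :
    r ∈ LinearMap.range (pattern l i b) ↔ ∑ j, r j = 0 := by
  constructor
  · rintro ⟨c, rfl⟩
    simp only [pattern_apply]
    rw [Finset.sum_coe_sort (occ l i) fun j => c.1 (port l (i, b) j),
      ← bdry_eq_sum_port l c.1 (i, b), LinearMap.mem_ker.mp c.2]
    rfl
  · intro hr
    have hstar : ∀ j, j ∈ occ l i → l (port l (i, b) j) = (i, b) ∨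
        backLetter l (port l (i, b) j) = (i, b) := by
      intro j hj
      have := Finset.mem_image_of_mem (port l (i, b)) hj
      rw [image_port l (i, b)] at this
      simpa using this
    let π : {j // j ∈ occ l i} → {e // l e = (i, b) ∨ backLetter l e = (i, b)} :=
      fun j => ⟨port l (i, b) j, hstar j j.2⟩
    have hπ : Function.Bijective π := by
      constructor
      · intro j j' hj
        exact Subtype.ext (h.injOn_port (i, b) j.2 j'.2 (congrArg Subtype.val hj))
      · rintro ⟨e, he⟩
        have : e ∈ (occ l i).image (port l (i, b)) := by
          rw [image_port l (i, b)]; simpa using he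
        obtain ⟨j, hj, rfl⟩ := Finset.mem_image.mp this
        exact ⟨⟨j, hj⟩, rfl⟩
    let ε := Equiv.ofBijective π hπ
    obtain ⟨c, hc, hcr⟩ := exists_cycle_extending l (backLetter l) (i, b) (flipLetter (i, b))
      (flipLetter_ne _) (fun χ h1 h2 => by
        refine le_trans ?_ (h (i, b) χ h1 h2)
        rw [← image_port]
        exact Finset.card_image_le) (r ∘ ε.symm)
      (by rw [← hr]; exact Equiv.sum_comp ε.symm r)
    refine ⟨⟨c, hc⟩, ?_⟩
    ext j
    have := hcr (ε j)
    rw [Function.comp_apply, Equiv.symm_apply_apply] at this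
    exact this

/-- If the functions orthogonal to the Fox derivatives of a cyclic word without small cuts always
form a ring, then every generator occurs zero or two times. -/
theorem NoSmallCut.card_occ [Fintype α] {l : ZMod m → α × Bool} (h : NoSmallCut l)
    (hone : ∀ (X : Type) [Fintype X] (σ : α → Equiv.Perm X), FoxOrtho σ (prefixProd l m) 1)
    (hmul : ∀ (X : Type) [Fintype X] (σ : α → Equiv.Perm X) (f₁ f₂ : X → ZMod 2),
      FoxOrtho σ (prefixProd l m) f₁ → FoxOrtho σ (prefixProd l m) f₂ →
        FoxOrtho σ (prefixProd l m) (f₁ * f₂)) (i : α) :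
    (occ l i).card = 0 ∨ (occ l i).card = 2 := by
  classical
  let Z := LinearMap.ker (bdry l (backLetter l))
  have hrange : ∀ i, LinearMap.range (pattern l i false) = LinearMap.range (pattern l i true) := by
    intro i
    ext r
    rw [h.mem_range_pattern, h.mem_range_pattern]
  choose e he using fun i => exists_perm_of_range_eq _ _ (hrange i)
  let σ : α → Equiv.Perm (Z × Z) := fun i => (e i).prodCongr (e i)
  have hstep : ∀ (j : ZMod m) (z : Z), (l j).2 = true → (e (l j).1 z).1 j = z.1 (j + 1) := by
    intro j z hj
    have hj' : l j = ((l j).1, true) := by rw [← hj]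
    have := congrFun (he (l j).1 z) ⟨j, by simp [occ]⟩
    rw [pattern_apply, pattern_apply] at this
    simp only [port] at this
    rwa [if_pos hj', if_neg (by rw [hj']; simp)] at this
  have hstep' : ∀ (j : ZMod m) (z : Z), (l j).2 = false →
      z.1 j = (e (l j).1 z).1 (j + 1) := by
    intro j z hj
    have hj' : l j = ((l j).1, false) := by rw [← hj]
    have := congrFun (he (l j).1 z) ⟨j, by simp [occ]⟩
    rw [pattern_apply, pattern_apply] at this
    simp only [port] at this
    rw [if_neg (by rw [hj']; simp), if_pos hj'] at this
    exact this.symm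
  have hlift : ∀ j, FreeGroup.lift σ (mk [l j]) =
      if (l j).2 then σ (l j).1 else (σ (l j).1)⁻¹ := by
    intro j
    rcases l j with ⟨i, _ | _⟩ <;> simp
  let f₁ : ZMod m → Z × Z → ZMod 2 := fun j z => z.1.1 j
  let f₂ : ZMod m → Z × Z → ZMod 2 := fun j z => z.2.1 j
  have hf₁ : ∀ j x, f₁ j (FreeGroup.lift σ (mk [l j]) x) = f₁ (j + 1) x := by
    intro j x
    rw [hlift]
    split_ifs with hb
    · exact hstep j x.1 hb
    · have := hstep' j ((e (l j).1).symm x.1) (by simpa using hb)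
      rw [Equiv.apply_symm_apply] at this
      exact this
  have hf₂ : ∀ j x, f₂ j (FreeGroup.lift σ (mk [l j]) x) = f₂ (j + 1) x := by
    intro j x
    rw [hlift]
    split_ifs with hb
    · exact hstep j x.2 hb
    · have := hstep' j ((e (l j).1).symm x.2) (by simpa using hb)
      rw [Equiv.apply_symm_apply] at this
      exact this
  have hport : ∀ i, ∀ j ∈ occ l i, ∀ c : ZMod m → ZMod 2,
      (if (l j).2 then c j else c (j + 1)) = c (port l (i, true) j) := by
    intro i j hj c
    have hj' : (l j).1 = i := by simpa [occ] using hj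
    by_cases hb : (l j).2 = true
    · have : l j = (i, true) := Prod.ext hj' hb
      simp [port, this]
    · have : l j = (i, false) := Prod.ext hj' (by simpa using hb)
      simp [port, this]
  have hort₁ : FoxOrtho σ (prefixProd l m) (f₁ 0) := by
    rw [foxOrtho_prefixProd_iff σ l f₁ hf₁]
    intro i' x
    have := congrFun (LinearMap.mem_ker.mp x.1.2) (i', true)
    rw [bdry_eq_sum_port] at this
    exact Eq.trans (Finset.sum_congr rfl fun j hj => hport i' j hj x.1.1) this
  have hort₂ : FoxOrtho σ (prefixProd l m) (f₂ 0) := by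
    rw [foxOrtho_prefixProd_iff σ l f₂ hf₂]
    intro i' x
    have := congrFun (LinearMap.mem_ker.mp x.2.2) (i', true)
    rw [bdry_eq_sum_port] at this
    exact Eq.trans (Finset.sum_congr rfl fun j hj => hport i' j hj x.2.1) this
  have hprod := hmul _ σ (f₁ 0) (f₂ 0) hort₁ hort₂
  have hprod' := (foxOrtho_prefixProd_iff σ l (fun j => f₁ j * f₂ j)
    (fun j x => by simp only [Pi.mul_apply, hf₁, hf₂])).mp hprod i
  have heven : ((occ l i).card : ZMod 2) = 0 := by
    have := (foxOrtho_prefixProd_iff σ l (fun _ => 1) (fun _ _ => rfl)).mp (hone _ σ) i 0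
    simpa [occ] using this
  have hle : (occ l i).card ≤ 2 := by
    by_contra hlt
    push Not at hlt
    obtain ⟨a, b, c, ha, hb, hc, hab, hac, hbc⟩ := Finset.two_lt_card_iff.mp hlt
    have hsel : ∀ x ∈ occ l i, ∀ y ∈ occ l i, x ≠ y → ∃ z : Z, ∀ j ∈ occ l i,
        z.1 (port l (i, true) j) = if j = x ∨ j = y then 1 else 0 := by
      intro x hx y hy hxy
      obtain ⟨z, hz⟩ := (h.mem_range_pattern i true
        (fun j => if (j : ZMod m) = x ∨ (j : ZMod m) = y then 1 else 0)).mpr (by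
          rw [Finset.sum_coe_sort (occ l i) fun j => if j = x ∨ j = y then (1 : ZMod 2) else 0,
            ← Finset.sum_filter]
          have : (occ l i).filter (fun j => j = x ∨ j = y) = {x, y} := by
            ext j
            simp only [Finset.mem_filter, Finset.mem_insert, Finset.mem_singleton]
            constructor
            · exact fun h => h.2
            · rintro (rfl | rfl)
              · exact ⟨hx, Or.inl rfl⟩
              · exact ⟨hy, Or.inr rfl⟩
          rw [this, Finset.sum_pair hxy]
          decide)
      exact ⟨z, fun j hj => congrFun hz ⟨j, hj⟩⟩
    obtain ⟨z₁, hz₁⟩ := hsel a ha b hb hab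
    obtain ⟨z₂, hz₂⟩ := hsel a ha c hc hac
    have h0 := hprod' (z₁, z₂)
    have h1 : ∑ j ∈ occ l i, (if j = a then (1 : ZMod 2) else 0) = 0 := by
      refine Eq.trans (Finset.sum_congr rfl fun j hj => ?_) h0
      have e₁ := (hport i j hj z₁.1).trans (hz₁ j hj)
      have e₂ := (hport i j hj z₂.1).trans (hz₂ j hj)
      have : (if (l j).2 = true then (f₁ j * f₂ j) (z₁, z₂)
          else (f₁ (j + 1) * f₂ (j + 1)) (z₁, z₂)) =
          (if (l j).2 = true then z₁.1 j else z₁.1 (j + 1)) *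
            (if (l j).2 = true then z₂.1 j else z₂.1 (j + 1)) := by
        split_ifs <;> rfl
      refine Eq.trans ?_ this.symm
      rw [e₁, e₂]
      by_cases hja : j = a
      · simp [hja]
      · by_cases hjb : j = b
        · have : j ≠ c := fun hjc => hbc (hjb.symm.trans hjc)
          simp [hja, this]
        · simp [hja, hjb]
    rw [Finset.sum_ite_eq' (occ l i) a, if_pos ha] at h1
    exact one_ne_zero h1
  interval_cases hcard : (occ l i).card
  · exact Or.inl rfl
  · simp at heven
  · exact Or.inr rfl

end WhiteheadGraph

theorem mk_flipLetter {α : Type} (v : α × Bool) : mk [flipLetter v] = (mk [v])⁻¹ := by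
  simp [flipLetter, FreeGroup.inv_mk, FreeGroup.invRev]

section WhiteheadAut

variable {α : Type} [DecidableEq α]

/-- The factor of a Whitehead automorphism on the side of the letter `v`. -/
def whiteheadSide (u : α × Bool) (χ : α × Bool → Bool) (v : α × Bool) : FreeGroup α :=
  if χ v then mk [u] else 1

/-- The middle factor in the image of a letter under a Whitehead automorphism. -/
def whiteheadMid (a : α) (v : α × Bool) : FreeGroup α :=
  if v.1 = a then 1 else mk [v]

/-- A Whitehead automorphism as an endomorphism. -/
def whiteheadHom (u : α × Bool) (χ : α × Bool → Bool) : FreeGroup α →* FreeGroup α :=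
  FreeGroup.lift fun x => whiteheadSide u χ (x, true) * whiteheadMid u.1 (x, true) *
    (whiteheadSide u χ (x, false))⁻¹

/-- The inverse of a Whitehead automorphism as an endomorphism. -/
def whiteheadInv (u : α × Bool) (χ : α × Bool → Bool) : FreeGroup α →* FreeGroup α :=
  FreeGroup.lift fun x => if x = u.1 then of x else
    (whiteheadSide u χ (x, true))⁻¹ * of x * whiteheadSide u χ (x, false)

theorem whiteheadMid_flipLetter (a : α) (v : α × Bool) :
    whiteheadMid a (flipLetter v) = (whiteheadMid a v)⁻¹ := by
  unfold whiteheadMid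
  rw [mk_flipLetter]
  by_cases h : v.1 = a <;> simp [flipLetter, h]

theorem whiteheadHom_mk (u : α × Bool) (χ : α × Bool → Bool) (v : α × Bool) :
    whiteheadHom u χ (mk [v]) =
      whiteheadSide u χ v * whiteheadMid u.1 v * (whiteheadSide u χ (flipLetter v))⁻¹ := by
  have h : ∀ x, whiteheadHom u χ (mk [(x, true)]) =
      whiteheadSide u χ (x, true) * whiteheadMid u.1 (x, true) *
        (whiteheadSide u χ (x, false))⁻¹ := fun x => FreeGroup.lift_apply_of
  rcases v with ⟨x, _ | _⟩
  · have h1 : ((x, false) : α × Bool) = flipLetter (x, true) := rfl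
    rw [h1, mk_flipLetter, map_inv, h, whiteheadMid_flipLetter, flipLetter_flipLetter, ← h1]
    group
  · exact h x

theorem whiteheadHom_self {u : α × Bool} {χ : α × Bool → Bool} (h : χ u = true)
    (h' : χ (flipLetter u) = false) : whiteheadHom u χ (mk [u]) = mk [u] := by
  rw [whiteheadHom_mk]
  simp [whiteheadSide, whiteheadMid, h, h']

theorem whiteheadHom_side {u : α × Bool} {χ : α × Bool → Bool} (h : χ u = true)
    (h' : χ (flipLetter u) = false) (v : α × Bool) :
    whiteheadHom u χ (whiteheadSide u χ v) = whiteheadSide u χ v := by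
  unfold whiteheadSide
  split_ifs
  · exact whiteheadHom_self h h'
  · exact map_one _

theorem whiteheadInv_self (u : α × Bool) (χ : α × Bool → Bool) :
    whiteheadInv u χ (mk [u]) = mk [u] := by
  have h : whiteheadInv u χ (of u.1) = of u.1 := by
    rw [whiteheadInv, FreeGroup.lift_apply_of, if_pos rfl]
  rcases u with ⟨x, _ | _⟩
  · have h1 : ((x, false) : α × Bool) = flipLetter (x, true) := rfl
    rw [h1, mk_flipLetter, map_inv, ← h1]
    exact congrArg _ h
  · exact h

theorem whiteheadInv_side (u : α × Bool) (χ : α × Bool → Bool) (v : α × Bool) :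
    whiteheadInv u χ (whiteheadSide u χ v) = whiteheadSide u χ v := by
  unfold whiteheadSide
  split_ifs
  · exact whiteheadInv_self u χ
  · exact map_one _

theorem whiteheadHom_of_self {u : α × Bool} {χ : α × Bool → Bool} (h : χ u = true)
    (h' : χ (flipLetter u) = false) : whiteheadHom u χ (of u.1) = of u.1 := by
  have := whiteheadHom_self h h'
  rcases u with ⟨x, _ | _⟩
  · have h1 : ((x, false) : α × Bool) = flipLetter (x, true) := rfl
    rw [h1, mk_flipLetter, map_inv, ← h1] at this
    exact inv_injective this
  · exact this

/-- A Whitehead automorphism. -/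
def whiteheadEquiv (u : α × Bool) (χ : α × Bool → Bool) (h : χ u = true)
    (h' : χ (flipLetter u) = false) : FreeGroup α ≃* FreeGroup α :=
  MonoidHom.toMulEquiv (whiteheadHom u χ) (whiteheadInv u χ)
    (by
      ext x
      rw [MonoidHom.comp_apply, MonoidHom.id_apply]
      by_cases hx : x = u.1
      · subst hx
        rw [whiteheadHom_of_self h h', whiteheadInv, FreeGroup.lift_apply_of, if_pos rfl]
      · rw [whiteheadHom, FreeGroup.lift_apply_of, map_mul, map_mul, map_inv, whiteheadInv_side,
          whiteheadInv_side, whiteheadMid, if_neg hx, whiteheadInv]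
        change _ * FreeGroup.lift _ (of x) * _ = _
        rw [FreeGroup.lift_apply_of, if_neg hx]
        group)
    (by
      ext x
      rw [MonoidHom.comp_apply, MonoidHom.id_apply]
      by_cases hx : x = u.1
      · subst hx
        rw [whiteheadInv, FreeGroup.lift_apply_of, if_pos rfl, whiteheadHom_of_self h h']
      · rw [whiteheadInv, FreeGroup.lift_apply_of, if_neg hx, map_mul, map_mul, map_inv,
          whiteheadHom_side h h', whiteheadHom_side h h', whiteheadHom, FreeGroup.lift_apply_of,
          whiteheadMid, if_neg hx]
        change _ * (_ * of x * _) * _ = _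
        group)

theorem norm_whiteheadSide_inv_mul_le (u : α × Bool) (χ : α × Bool → Bool) (v v' : α × Bool) :
    ((whiteheadSide u χ v)⁻¹ * whiteheadSide u χ v').norm ≤ if χ v' ≠ χ v then 1 else 0 := by
  have h1 : (mk [u]).norm ≤ 1 := FreeGroup.norm_mk_le
  unfold whiteheadSide
  generalize mk [u] = g at h1
  cases χ v <;> cases χ v' <;> simp [h1]

theorem norm_whiteheadMid_le (a : α) (v : α × Bool) :
    (whiteheadMid a v).norm ≤ if v.1 ≠ a then 1 else 0 := by
  have h1 : (mk [v]).norm ≤ 1 := FreeGroup.norm_mk_le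
  unfold whiteheadMid
  split_ifs <;> simp_all

variable {m : ℕ}

theorem norm_whiteheadHom_prefixProd_le (u : α × Bool) (χ : α × Bool → Bool)
    (l : ZMod m → α × Bool) (r : ℕ) :
    ((whiteheadSide u χ (backLetter l 0))⁻¹ * whiteheadHom u χ (prefixProd l r) *
      whiteheadSide u χ (backLetter l (r : ZMod m))).norm ≤
    ∑ j ∈ Finset.range r, ((if χ (l (j : ZMod m)) ≠ χ (backLetter l (j : ZMod m)) then 1 else 0) +
      if (l (j : ZMod m)).1 ≠ u.1 then 1 else 0) := by
  induction r with
  | zero => simp [prefixProd_zero]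
  | succ r ih =>
    have hb : backLetter l ((r + 1 : ℕ) : ZMod m) = flipLetter (l (r : ZMod m)) := by
      simp [backLetter]
    have key : (whiteheadSide u χ (backLetter l 0))⁻¹ * whiteheadHom u χ (prefixProd l (r + 1)) *
        whiteheadSide u χ (backLetter l ((r + 1 : ℕ) : ZMod m)) =
        ((whiteheadSide u χ (backLetter l 0))⁻¹ * whiteheadHom u χ (prefixProd l r) *
          whiteheadSide u χ (backLetter l (r : ZMod m))) *
        (((whiteheadSide u χ (backLetter l (r : ZMod m)))⁻¹ *
          whiteheadSide u χ (l (r : ZMod m))) * whiteheadMid u.1 (l (r : ZMod m))) := by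
      rw [prefixProd_succ, map_mul, whiteheadHom_mk, hb]
      group
    rw [key, Finset.sum_range_succ]
    refine (FreeGroup.norm_mul_le _ _).trans (add_le_add ih ?_)
    exact (FreeGroup.norm_mul_le _ _).trans
      (add_le_add (norm_whiteheadSide_inv_mul_le u χ _ _) (norm_whiteheadMid_le _ _))

/-- A cyclic word whose length is minimal in its automorphism orbit has no small cuts. -/
theorem noSmallCut_of_norm_minimal [NeZero m] (l : ZMod m → α × Bool)
    (hmin : ∀ f : FreeGroup α ≃* FreeGroup α, m ≤ (f (prefixProd l m)).norm) :
    NoSmallCut l := by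
  intro u χ h h'
  have h1 := norm_whiteheadHom_prefixProd_le u χ l m
  set g := whiteheadSide u χ (backLetter l 0)
  have h2 := hmin ((whiteheadEquiv u χ h h').trans (MulAut.conj g⁻¹))
  have h3 : ((whiteheadEquiv u χ h h').trans (MulAut.conj g⁻¹)) (prefixProd l m) =
      g⁻¹ * whiteheadHom u χ (prefixProd l m) * g := by
    change MulAut.conj g⁻¹ (whiteheadHom u χ (prefixProd l m)) = _
    rw [MulAut.conj_apply, inv_inv]
  rw [h3] at h2
  rw [ZMod.natCast_self] at h1
  have h4 := h2.trans h1
  rw [sum_range_zmod (fun j : ZMod m => ((if χ (l j) ≠ χ (backLetter l j) then 1 else 0) +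
    if (l j).1 ≠ u.1 then 1 else 0)), Finset.sum_add_distrib, ← Finset.card_filter,
    ← Finset.card_filter] at h4
  have h5 := Finset.card_filter_add_card_filter_not (s := (Finset.univ : Finset (ZMod m)))
    (fun j => (l j).1 = u.1)
  rw [Finset.card_univ, ZMod.card] at h5
  change (Finset.univ.filter fun j => (l j).1 = u.1).card ≤ _
  simp only [ne_eq] at h4 ⊢
  omega

end WhiteheadAut

theorem prod_map_mk_singleton {α : Type} (L : List (α × Bool)) :
    (L.map fun v => mk [v]).prod = mk L := by
  induction L with
  | nil => rfl
  | cons v L ih => rw [List.map_cons, List.prod_cons, ih, FreeGroup.mul_mk, List.singleton_append]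

/-- The number of occurrences of a generator (with either sign) in a list of letters. -/
def genCount {α : Type} [DecidableEq α] (L : List (α × Bool)) (i : α) : ℕ :=
  (L.map Prod.fst).count i

/-- A word with the same measures as a product of squares of distinct generators is equivalent to a
word in which every generator occurs zero or two times. -/
theorem SameWordMeasure.exists_quadratic {α : Type} [Fintype α] [DecidableEq α] {ps : List α}
    (hps : ps.Nodup) {w' : FreeGroup α} (hm : SameWordMeasure (squareProd ps) w') :
    ∃ (f : FreeGroup α ≃* FreeGroup α) (L : List (α × Bool)), f w' = mk L ∧
      ∀ i, genCount L i = 0 ∨ genCount L i = 2 := by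
  let f : FreeGroup α ≃* FreeGroup α := Function.argmin fun f : FreeGroup α ≃* FreeGroup α =>
    (f w').norm
  have hf : ∀ g : FreeGroup α ≃* FreeGroup α, (f w').norm ≤ (g w').norm := fun g =>
    Function.argmin_le (fun f : FreeGroup α ≃* FreeGroup α => (f w').norm) g
  obtain ⟨L, hL⟩ : ∃ L, L = (f w').toWord := ⟨_, rfl⟩
  have hw : f w' = mk L := by rw [hL, FreeGroup.mk_toWord]
  refine ⟨f, L, hw, ?_⟩
  rcases Nat.eq_zero_or_pos L.length with h0 | hpos
  · rw [List.length_eq_zero_iff] at h0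
    simp [h0, genCount]
  have hne : NeZero L.length := ⟨hpos.ne'⟩
  let l : ZMod L.length → α × Bool := fun j => L[j.val]'(ZMod.val_lt j)
  have hl : (List.range L.length).map (fun j : ℕ => l (j : ZMod L.length)) = L := by
    refine List.ext_getElem (by simp) fun j h1 h2 => ?_
    simp [l, Nat.mod_eq_of_lt h2]
  have hprod : prefixProd l L.length = f w' := by
    rw [hw, ← prod_map_mk_singleton]
    conv_rhs => rw [← hl]
    rw [List.map_map]
    rfl
  have hm' := hm.map_right f
  have hcut : NoSmallCut l := by
    refine noSmallCut_of_norm_minimal l fun g => ?_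
    have : L.length = (f w').norm := by rw [hL]; rfl
    rw [hprod, this]
    exact hf (f.trans g)
  have hcard := hcut.card_occ
    (fun X _ σ => by
      rw [hprod]
      refine hm'.foxOrtho_transfer 0 0 1 (fun σ _ _ => ?_) σ (FoxOrtho.zero _ _) (FoxOrtho.zero _ _)
      rw [foxOrtho_squareProd_iff σ ps hps]
      intros; rfl)
    (fun X _ σ f₁ f₂ => by
      rw [hprod]
      refine hm'.foxOrtho_transfer f₁ f₂ (f₁ * f₂) (fun σ => ?_) σ
      simp only [foxOrtho_squareProd_iff _ ps hps]
      intro h₁ h₂ i hi x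
      rw [Pi.mul_apply, Pi.mul_apply, h₁ i hi, h₂ i hi])
  intro i
  have hocc : genCount L i = (occ l i).card := by
    rw [occ, Finset.card_filter,
      ← sum_range_zmod fun j : ZMod L.length => if (l j).1 = i then 1 else 0,
      ← Finset.card_filter, genCount]
    conv_lhs => rw [← hl]
    rw [List.map_map, List.count, List.countP_map, List.countP_eq_length_filter]
    change _ = ((List.range L.length).filter _).length
    congr 2
  rw [hocc]
  exact hcard i

section AutRel

variable {α : Type}

/-- Two elements of a free group lie in the same orbit of the automorphism group. -/
def AutRel (u v : FreeGroup α) : Prop := ∃ f : FreeGroup α ≃* FreeGroup α, f u = v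

theorem AutRel.refl (u : FreeGroup α) : AutRel u u := ⟨MulEquiv.refl _, rfl⟩

theorem AutRel.symm {u v : FreeGroup α} : AutRel u v → AutRel v u := by
  rintro ⟨f, rfl⟩
  exact ⟨f.symm, f.symm_apply_apply u⟩

theorem AutRel.trans {u v w : FreeGroup α} : AutRel u v → AutRel v w → AutRel u w := by
  rintro ⟨f, rfl⟩ ⟨g, rfl⟩
  exact ⟨f.trans g, rfl⟩

/-- The element `g` does not involve the generator `x`. -/
def Avoids (x : α) (g : FreeGroup α) : Prop :=
  ∀ φ : FreeGroup α →* FreeGroup α, (∀ y, y ≠ x → φ (of y) = of y) → φ g = g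

theorem Avoids.one (x : α) : Avoids x 1 := fun φ _ => map_one φ

theorem Avoids.mul {x : α} {g h : FreeGroup α} (hg : Avoids x g) (hh : Avoids x h) :
    Avoids x (g * h) := fun φ hφ => by rw [map_mul, hg φ hφ, hh φ hφ]

theorem Avoids.inv {x : α} {g : FreeGroup α} (hg : Avoids x g) : Avoids x g⁻¹ :=
  fun φ hφ => by rw [map_inv, hg φ hφ]

theorem Avoids.of {x y : α} (h : y ≠ x) : Avoids x (of y) := fun _ hφ => hφ y h

theorem mk_true (x : α) : mk [(x, true)] = of x := rfl

theorem mk_false (x : α) : mk [(x, false)] = (of x)⁻¹ := rfl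

theorem Avoids.letter {x : α} {v : α × Bool} (h : v.1 ≠ x) : Avoids x (mk [v]) := by
  rcases v with ⟨y, _ | _⟩
  · exact (Avoids.of h).inv
  · exact Avoids.of h

theorem Avoids.mk {x : α} {L : List (α × Bool)} (h : ∀ v ∈ L, v.1 ≠ x) : Avoids x (mk L) := by
  induction L with
  | nil => exact Avoids.one x
  | cons v L ih =>
    rw [← List.singleton_append, ← FreeGroup.mul_mk]
    exact (Avoids.letter (h v (by simp))).mul (ih fun u hu => h u (by simp [hu]))

variable [DecidableEq α]

/-- The endomorphism sending `x` to `g` and fixing the other generators. -/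
def replaceHom (x : α) (g : FreeGroup α) : FreeGroup α →* FreeGroup α :=
  FreeGroup.lift fun y => if y = x then g else of y

theorem replaceHom_of_self (x : α) (g : FreeGroup α) : replaceHom x g (of x) = g := by
  rw [replaceHom, FreeGroup.lift_apply_of, if_pos rfl]

theorem replaceHom_of_ne {x y : α} (g : FreeGroup α) (h : y ≠ x) :
    replaceHom x g (of y) = of y := by
  rw [replaceHom, FreeGroup.lift_apply_of, if_neg h]

theorem Avoids.replaceHom {x : α} {h : FreeGroup α} (hh : Avoids x h) (g : FreeGroup α) :
    replaceHom x g h = h := hh _ fun _ hy => replaceHom_of_ne g hy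

/-- The automorphism `x ↦ g x h`, where `g` and `h` do not involve `x`. -/
def transvection (x : α) (g h : FreeGroup α) (hg : Avoids x g) (hh : Avoids x h) :
    FreeGroup α ≃* FreeGroup α :=
  MonoidHom.toMulEquiv (replaceHom x (g * of x * h)) (replaceHom x (g⁻¹ * of x * h⁻¹))
    (by
      ext y
      rw [MonoidHom.comp_apply, MonoidHom.id_apply]
      by_cases hy : y = x
      · subst hy
        rw [replaceHom_of_self, map_mul, map_mul, hg.replaceHom, hh.replaceHom, replaceHom_of_self]
        group
      · rw [replaceHom_of_ne _ hy, replaceHom_of_ne _ hy])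
    (by
      ext y
      rw [MonoidHom.comp_apply, MonoidHom.id_apply]
      by_cases hy : y = x
      · subst hy
        rw [replaceHom_of_self, map_mul, map_mul, hg.inv.replaceHom, hh.inv.replaceHom,
          replaceHom_of_self]
        group
      · rw [replaceHom_of_ne _ hy, replaceHom_of_ne _ hy])

theorem transvection_apply {x : α} {g h : FreeGroup α} (hg : Avoids x g) (hh : Avoids x h)
    (u : FreeGroup α) : transvection x g h hg hh u = replaceHom x (g * of x * h) u := rfl

/-- The automorphism inverting the generator `x`. -/
def invertGen (x : α) : FreeGroup α ≃* FreeGroup α :=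
  have key : (replaceHom x (of x)⁻¹).comp (replaceHom x (of x)⁻¹) = MonoidHom.id _ := by
    ext y
    rw [MonoidHom.comp_apply, MonoidHom.id_apply]
    by_cases hy : y = x
    · subst hy
      rw [replaceHom_of_self, map_inv, replaceHom_of_self, inv_inv]
    · rw [replaceHom_of_ne _ hy, replaceHom_of_ne _ hy]
  MonoidHom.toMulEquiv (replaceHom x (of x)⁻¹) (replaceHom x (of x)⁻¹) key key

/-- Collecting the two occurrences of a letter into a square. -/
theorem autRel_collect {x : α} (b : Bool) {P A B C : FreeGroup α} (hP : Avoids x P)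
    (hA : Avoids x A) (hB : Avoids x B) (hC : Avoids x C) :
    AutRel (P * A * mk [(x, b)] * B * mk [(x, b)] * C) (P * of x ^ 2 * A * B⁻¹ * C) := by
  have key : AutRel (P * A * of x * B * of x * C) (P * of x ^ 2 * A * B⁻¹ * C) := by
    refine ⟨transvection x A⁻¹ (A * B⁻¹) hA.inv (hA.mul hB.inv), ?_⟩
    rw [transvection_apply]
    simp only [map_mul, hP.replaceHom, hA.replaceHom, hB.replaceHom, hC.replaceHom,
      replaceHom_of_self, pow_two]
    group
  cases b
  · refine AutRel.trans ⟨invertGen x, ?_⟩ key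
    change replaceHom x (of x)⁻¹ _ = _
    rw [mk_false]
    simp only [map_mul, map_inv, hP.replaceHom, hA.replaceHom, hB.replaceHom, hC.replaceHom,
      replaceHom_of_self, inv_inv]
  · exact key

/-- In the presence of a square, a handle can be traded for two squares. -/
theorem autRel_handle {x y z : α} (b c : Bool) (hxy : x ≠ y) (hxz : x ≠ z) (hyz : y ≠ z)
    {P A B C D E : FreeGroup α} (hP : ∀ i ∈ [x, y, z], Avoids i P)
    (hA : ∀ i ∈ [x, y, z], Avoids i A) (hB : ∀ i ∈ [x, y, z], Avoids i B)
    (hC : ∀ i ∈ [x, y, z], Avoids i C) (hD : ∀ i ∈ [x, y, z], Avoids i D)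
    (hE : ∀ i ∈ [x, y, z], Avoids i E) :
    AutRel (P * of x ^ 2 * A * mk [(y, b)] * B * mk [(z, c)] * C * (mk [(y, b)])⁻¹ * D *
        (mk [(z, c)])⁻¹ * E)
      (P * of y ^ 2 * of z ^ 2 * of x ^ 2 * (A * D * C * B * E)) := by
  simp only [List.mem_cons, List.not_mem_nil, or_false, forall_eq_or_imp, forall_eq] at *
  have hy : (mk [(y, b)])⁻¹ = mk [(y, !b)] := (mk_flipLetter _).symm
  have hz : (mk [(z, c)])⁻¹ = mk [(z, !c)] := (mk_flipLetter _).symm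
  have hYx : Avoids x (mk [(y, b)]) := Avoids.letter hxy.symm
  have hZx : Avoids x (mk [(z, c)]) := Avoids.letter hxz.symm
  have hZy : Avoids y (mk [(z, c)]) := Avoids.letter hyz.symm
  have hxy' : Avoids y (of x) := Avoids.of hxy
  have hxz' : Avoids z (of x) := Avoids.of hxz
  have hyz' : Avoids z (of y) := Avoids.of hyz
  have s1 : AutRel (P * of x ^ 2 * A * mk [(y, b)] * B * mk [(z, c)] * C * (mk [(y, b)])⁻¹ * D *
        (mk [(z, c)])⁻¹ * E)
      (P * of x * mk [(y, !b)] * (A⁻¹ * of x * B * mk [(z, c)] * C) * mk [(y, !b)] *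
        (D * (mk [(z, c)])⁻¹ * E)) := by
    refine ⟨transvection x 1 ((mk [(y, b)])⁻¹ * A⁻¹) (Avoids.one x) (hYx.inv.mul hA.1.inv), ?_⟩
    rw [transvection_apply, ← hy]
    simp only [map_mul, map_inv, hP.1.replaceHom, hA.1.replaceHom, hB.1.replaceHom,
      hC.1.replaceHom, hD.1.replaceHom, hE.1.replaceHom, hYx.replaceHom, hZx.replaceHom,
      replaceHom_of_self, pow_two]
    generalize mk [(y, b)] = Y
    generalize mk [(z, c)] = Z
    group
  have s2 := autRel_collect (x := y) (!b) hP.2.1 hxy'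
    ((((hA.2.1.inv.mul hxy').mul hB.2.1).mul hZy).mul hC.2.1) ((hD.2.1.mul hZy.inv).mul hE.2.1)
  have s3 := autRel_collect (x := z) (!c) (P := P * of y ^ 2) (A := of x * C⁻¹)
    (B := B⁻¹ * (of x)⁻¹ * A * D) (C := E)
    (by rw [pow_two]; exact hP.2.2.mul (hyz'.mul hyz'))
    (hxz'.mul hC.2.2.inv) (((hB.2.2.inv.mul hxz'.inv).mul hA.2.2).mul hD.2.2) hE.2.2
  have s4 := autRel_collect (x := x) true (P := P * of y ^ 2 * of z ^ 2) (A := 1)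
    (B := C⁻¹ * D⁻¹ * A⁻¹) (C := B * E)
    (by
      rw [pow_two, pow_two]
      have h1 : Avoids x (of y) := Avoids.of hxy.symm
      have h2 : Avoids x (of z) := Avoids.of hxz.symm
      exact (hP.1.mul (h1.mul h1)).mul (h2.mul h2))
    (Avoids.one x) ((hC.1.inv.mul hD.1.inv).mul hA.1.inv) (hB.1.mul hE.1)
  rw [← hz] at s3
  rw [mk_true] at s4
  refine s1.trans (s2.trans ?_)
  convert s3.trans ?_ using 1
  · generalize mk [(z, c)] = Z
    group
  convert s4 using 1 <;> group

end AutRel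

theorem exists_repeated_of_not_nodup {β : Type} {L : List β} (h : ¬ L.Nodup) :
    ∃ v A B C, L = A ++ v :: B ++ v :: C := by
  induction L with
  | nil => simp at h
  | cons v L ih =>
    by_cases hv : v ∈ L
    · obtain ⟨B, C, rfl⟩ := List.append_of_mem hv
      exact ⟨v, [], B, C, rfl⟩
    · obtain ⟨u, A, B, C, rfl⟩ := ih fun hL => h (List.nodup_cons.mpr ⟨hv, hL⟩)
      exact ⟨u, v :: A, B, C, rfl⟩

section GenCount

variable {α : Type} [DecidableEq α]

theorem genCount_append (L M : List (α × Bool)) (i : α) :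
    genCount (L ++ M) i = genCount L i + genCount M i := by
  simp [genCount]

theorem genCount_cons (v : α × Bool) (L : List (α × Bool)) (i : α) :
    genCount (v :: L) i = genCount L i + if v.1 = i then 1 else 0 := by
  simp [genCount, List.count_cons]

theorem genCount_invRev (L : List (α × Bool)) (i : α) :
    genCount (FreeGroup.invRev L) i = genCount L i := by
  simp [genCount, FreeGroup.invRev, Function.comp_def]

theorem avoids_of_genCount_eq_zero {L : List (α × Bool)} {i : α} (h : genCount L i = 0) :
    Avoids i (mk L) := by
  refine Avoids.mk fun v hv hvi => ?_
  rw [genCount, List.count_eq_zero] at h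
  exact h (List.mem_map.mpr ⟨v, hv, hvi⟩)

/-- In a word without repeated letters in which every generator occurs zero or two times, every
letter is accompanied by its inverse. -/
theorem flipLetter_mem {A R : List (α × Bool)} {v : α × Bool} (hnd : (A ++ v :: R).Nodup)
    (hq : ∀ i, genCount (A ++ v :: R) i = 0 ∨ genCount (A ++ v :: R) i = 2) :
    flipLetter v ∈ A ∨ flipLetter v ∈ R := by
  have h := hq v.1
  rw [genCount_append, genCount_cons, if_pos rfl, ← add_assoc, ← genCount_append] at h
  have hpos : 0 < ((A ++ R).map Prod.fst).count v.1 := by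
    change 0 < genCount (A ++ R) v.1
    omega
  obtain ⟨u, hu, huv⟩ := List.mem_map.mp (List.count_pos_iff.mp hpos)
  have hne : u ≠ v := by
    rintro rfl
    exact (List.nodup_middle.mp hnd).notMem hu
  rw [eq_flipLetter huv hne] at hu
  exact List.mem_append.mp hu

/-- An orientable quadratic word vanishes in every commutative group. -/
theorem map_eq_one_of_nodup {G : Type} [CommGroup G] (φ : FreeGroup α →* G) (N : ℕ)
    (L : List (α × Bool)) (hN : L.length ≤ N) (hnd : L.Nodup)
    (hq : ∀ i, genCount L i = 0 ∨ genCount L i = 2) : φ (mk L) = 1 := by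
  induction N generalizing L with
  | zero =>
    rw [List.length_eq_zero_iff.mp (Nat.le_zero.mp hN)]
    exact map_one φ
  | succ N ih =>
    rcases L with _ | ⟨v, L⟩
    · exact map_one φ
    obtain h | h := flipLetter_mem (A := []) hnd hq
    · simp at h
    obtain ⟨B, C, rfl⟩ := List.append_of_mem h
    have hred : φ (mk (v :: (B ++ flipLetter v :: C))) = φ (mk (B ++ C)) := by
      have e : mk (v :: (B ++ flipLetter v :: C)) = mk [v] * mk B * (mk [v])⁻¹ * mk C := by
        rw [← mk_flipLetter]
        simp only [FreeGroup.mul_mk, List.append_assoc, List.cons_append, List.nil_append]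
      rw [e, ← FreeGroup.mul_mk]
      simp only [map_mul, map_inv]
      rw [mul_comm (φ (mk [v])), mul_inv_cancel_right]
    rw [hred]
    refine ih (B ++ C) ?_ ?_ fun i => ?_
    · simp only [List.length_cons, List.length_append] at hN ⊢
      omega
    · refine hnd.sublist (List.Sublist.cons _ (List.Sublist.append_left ?_ _))
      exact List.sublist_cons_self _ _
    · have := hq i
      simp only [genCount_append, genCount_cons, flipLetter] at this ⊢
      rcases this with h | h <;> split_ifs at h <;> omega

/-- Two letters of `L` that cross each other. -/
def HasCrossing (L : List (α × Bool)) : Prop :=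
  ∃ (y z : α × Bool) (A B C D E : List (α × Bool)),
    L = A ++ y :: (B ++ z :: (C ++ flipLetter y :: (D ++ flipLetter z :: E)))

theorem cancel_or_hasCrossing_of_pair {L : List (α × Bool)} (hnd : L.Nodup)
    (hq : ∀ i, genCount L i = 0 ∨ genCount L i = 2) (N : ℕ) (y : α × Bool)
    (A B C : List (α × Bool)) (hN : B.length ≤ N) (hL : L = A ++ y :: (B ++ flipLetter y :: C)) :
    (∃ (v : α × Bool) (A C : List (α × Bool)), L = A ++ v :: flipLetter v :: C) ∨
      HasCrossing L := by
  induction N generalizing y A B C with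
  | zero =>
    rw [List.length_eq_zero_iff.mp (Nat.le_zero.mp hN)] at hL
    exact Or.inl ⟨y, A, C, hL⟩
  | succ N ih =>
    rcases B with _ | ⟨z, B⟩
    · exact Or.inl ⟨y, A, C, hL⟩
    have hzy : z.1 ≠ y.1 := by
      intro hzy
      have := hq y.1
      rw [hL] at this
      simp only [genCount_append, genCount_cons, List.cons_append, flipLetter, hzy, if_true] at this
      omega
    have hL' : L = (A ++ [y]) ++ z :: (B ++ flipLetter y :: C) := by simp [hL]
    have hmem := flipLetter_mem (hL' ▸ hnd) (hL' ▸ hq)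
    have hfy : flipLetter z ≠ y := fun h => hzy (by rw [← h]; rfl)
    have hff : flipLetter z ≠ flipLetter y := fun h => hzy (congrArg Prod.fst h :)
    simp only [List.mem_append, List.mem_cons, List.not_mem_nil, or_false, hfy, hff,
      false_or] at hmem
    rcases hmem with h | h | h
    · obtain ⟨A₁, A₂, rfl⟩ := List.append_of_mem h
      refine Or.inr ⟨flipLetter z, y, A₁, A₂, [], B, C, ?_⟩
      simp [hL]
    · obtain ⟨B₁, B₂, rfl⟩ := List.append_of_mem h
      refine ih z (A ++ [y]) B₁ (B₂ ++ flipLetter y :: C) ?_ (by simp [hL])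
      simp only [List.length_cons, List.length_append] at hN
      omega
    · obtain ⟨C₁, C₂, rfl⟩ := List.append_of_mem h
      exact Or.inr ⟨y, z, A, [], B, C₁, C₂, by simp [hL]⟩

theorem cancel_or_hasCrossing {L : List (α × Bool)} (hL : L ≠ []) (hnd : L.Nodup)
    (hq : ∀ i, genCount L i = 0 ∨ genCount L i = 2) :
    (∃ (v : α × Bool) (A C : List (α × Bool)), L = A ++ v :: flipLetter v :: C) ∨
      HasCrossing L := by
  obtain ⟨y, R, rfl⟩ := List.exists_cons_of_ne_nil hL
  obtain h | h := flipLetter_mem (A := []) hnd hq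
  · simp at h
  obtain ⟨B, C, rfl⟩ := List.append_of_mem h
  exact cancel_or_hasCrossing_of_pair hnd hq _ y [] B C le_rfl rfl

end GenCount

section Classification

variable {α : Type}

theorem Avoids.squareProd {x : α} {ps : List α} (h : x ∉ ps) : Avoids x (squareProd ps) := by
  induction ps with
  | nil => exact Avoids.one x
  | cons y ps ih =>
    rw [List.mem_cons, not_or] at h
    have hy : Avoids x (FreeGroup.of y) := Avoids.of (Ne.symm h.1)
    rw [squareProd_cons, pow_two]
    exact (hy.mul hy).mul (ih h.2)

theorem AutRel.exists_map_ne_one {u v : FreeGroup α} {G : Type} [Group G] (h : AutRel u v)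
    (hu : ∃ φ : FreeGroup α →* G, φ u ≠ 1) : ∃ φ : FreeGroup α →* G, φ v ≠ 1 := by
  obtain ⟨f, rfl⟩ := h
  obtain ⟨φ, hφ⟩ := hu
  refine ⟨φ.comp f.symm.toMonoidHom, ?_⟩
  simpa using hφ

variable [DecidableEq α]

/-- Classification of quadratic words: a product of squares followed by a quadratic word in other
generators, nontrivial in some commutative quotient, is equivalent to a product of squares. -/
theorem exists_autRel_squareProd {G : Type} [CommGroup G] (N : ℕ) (ps : List α)
    (L : List (α × Bool)) (hN : L.length ≤ N) (hps : ps.Nodup) (hdisj : ∀ i ∈ ps, genCount L i = 0)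
    (hq : ∀ i, genCount L i = 0 ∨ genCount L i = 2)
    (hG : ∃ φ : FreeGroup α →* G, φ (squareProd ps * mk L) ≠ 1) :
    ∃ qs : List α, qs.Nodup ∧ AutRel (squareProd ps * mk L) (squareProd qs) := by
  induction N generalizing ps L with
  | zero =>
    rw [List.length_eq_zero_iff.mp (Nat.le_zero.mp hN)]
    exact ⟨ps, hps, by rw [← FreeGroup.one_eq_mk, mul_one]; exact AutRel.refl _⟩
  | succ N ih =>
    have step : ∀ (ps' : List α) (L' : List (α × Bool)), L'.length ≤ N → ps'.Nodup →
        (∀ i ∈ ps', genCount L' i = 0) → (∀ i, genCount L' i = 0 ∨ genCount L' i = 2) →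
        AutRel (squareProd ps * mk L) (squareProd ps' * mk L') →
        ∃ qs : List α, qs.Nodup ∧ AutRel (squareProd ps * mk L) (squareProd qs) := by
      intro ps' L' h1 h2 h3 h4 h5
      obtain ⟨qs, hqs, h6⟩ := ih ps' L' h1 h2 h3 h4 (h5.exists_map_ne_one hG)
      exact ⟨qs, hqs, h5.trans h6⟩
    by_cases hL : L = []
    · subst hL
      exact ⟨ps, hps, by rw [← FreeGroup.one_eq_mk, mul_one]; exact AutRel.refl _⟩
    by_cases hnd : L.Nodup
    · obtain ⟨v, A, C, rfl⟩ | ⟨y, z, A, B, C, D, E, hLE⟩ := cancel_or_hasCrossing hL hnd hq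
      · have e : mk (A ++ v :: flipLetter v :: C) = mk (A ++ C) := by
          have : A ++ v :: flipLetter v :: C = A ++ ([v] ++ ([flipLetter v] ++ C)) := rfl
          rw [this, ← FreeGroup.mul_mk, ← FreeGroup.mul_mk, ← FreeGroup.mul_mk, mk_flipLetter,
            mul_inv_cancel_left, FreeGroup.mul_mk]
        simp only [genCount_append, genCount_cons] at hdisj hq
        refine step ps (A ++ C) ?_ hps (fun i hi => ?_) (fun i => ?_)
          (by rw [e]; exact AutRel.refl _)
        · simp only [List.length_append, List.length_cons] at hN ⊢
          omega
        · have := hdisj i hi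
          rw [genCount_append]
          omega
        · rw [genCount_append]
          have := hq i
          simp only [flipLetter] at this
          by_cases hv : v.1 = i <;> simp only [hv, if_true, if_false] at this <;> omega
      · rcases List.eq_nil_or_concat ps with rfl | ⟨ps₀, x, rfl⟩
        · obtain ⟨φ, hφ⟩ := hG
          rw [squareProd_nil, one_mul] at hφ
          exact absurd (map_eq_one_of_nodup φ _ L le_rfl hnd hq) hφ
        rcases y with ⟨y, b⟩
        rcases z with ⟨z, c⟩
        have hcount : ∀ i, genCount L i = genCount A i + genCount B i + genCount C i +
            genCount D i + genCount E i + (if y = i then 2 else 0) + if z = i then 2 else 0 := by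
          intro i
          rw [hLE]
          simp only [genCount_append, genCount_cons, flipLetter]
          split_ifs <;> omega
        have hyz : y ≠ z := by
          rintro rfl
          have h1 := hcount y
          have h2 := hq y
          simp only [if_true] at h1
          omega
        have hy := hcount y
        have hz := hcount z
        have hy2 := hq y
        have hz2 := hq z
        simp only [if_true, if_neg hyz, if_neg hyz.symm] at hy hz
        have hx := hdisj x (by simp)
        have hxc := hcount x
        have hxy : x ≠ y := by
          rintro rfl
          omega
        have hxz : x ≠ z := by
          rintro rfl
          omega
        have hyps : y ∉ ps₀ := fun h => by
          have := hdisj y (by simp [h])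
          omega
        have hzps : z ∉ ps₀ := fun h => by
          have := hdisj z (by simp [h])
          omega
        simp only [if_neg hxy.symm, if_neg hxz.symm] at hxc
        rw [List.concat_eq_append, List.nodup_append] at hps
        have hxps : x ∉ ps₀ := fun h => hps.2.2 x h x (by simp) rfl
        have havoid : ∀ M : List (α × Bool), genCount M x = 0 → genCount M y = 0 →
            genCount M z = 0 → ∀ i ∈ [x, y, z], Avoids i (mk M) := by
          intro M h1 h2 h3 i hi
          simp only [List.mem_cons, List.not_mem_nil, or_false] at hi
          rcases hi with rfl | rfl | rfl <;> exact avoids_of_genCount_eq_zero ‹_›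
        have hrel := autRel_handle (P := squareProd ps₀) b c hxy hxz hyz
          (fun i hi => by
            simp only [List.mem_cons, List.not_mem_nil, or_false] at hi
            rcases hi with rfl | rfl | rfl <;> exact Avoids.squareProd ‹_›)
          (havoid A (by omega) (by omega) (by omega)) (havoid B (by omega) (by omega) (by omega))
          (havoid C (by omega) (by omega) (by omega)) (havoid D (by omega) (by omega) (by omega))
          (havoid E (by omega) (by omega) (by omega))
        refine step (ps₀ ++ [y, z, x]) (A ++ D ++ C ++ B ++ E) ?_ ?_ (fun i hi => ?_)
          (fun i => ?_) ?_
        · rw [hLE] at hN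
          simp only [List.length_append, List.length_cons] at hN ⊢
          omega
        · rw [List.nodup_append]
          refine ⟨hps.1, by simp [hyz, hxy.symm, hxz.symm], ?_⟩
          intro a ha b hb hab
          subst hab
          simp only [List.mem_cons, List.not_mem_nil, or_false] at hb
          rcases hb with rfl | rfl | rfl <;> contradiction
        · simp only [genCount_append]
          simp only [List.mem_append, List.mem_cons, List.not_mem_nil, or_false] at hi
          rcases hi with hi | rfl | rfl | rfl
          · have h1 := hdisj i (by simp [hi])
            have h2 := hcount i
            omega
          all_goals omega
        · have h1 := hcount i
          have h2 := hq i
          simp only [genCount_append]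
          split_ifs at h1 <;> omega
        · convert hrel using 1
          · rw [hLE, List.concat_eq_append, squareProd_append, squareProd_cons, squareProd_nil,
              mul_one, ← mk_flipLetter, ← mk_flipLetter]
            simp only [mul_assoc, FreeGroup.mul_mk, List.append_assoc, List.cons_append,
              List.nil_append]
          · simp only [squareProd_append, squareProd_cons, squareProd_nil, mul_one, mul_assoc,
              FreeGroup.mul_mk, List.append_assoc]
    · obtain ⟨⟨x, b⟩, A, B, C, hLE⟩ := exists_repeated_of_not_nodup hnd
      have hcount : ∀ i, genCount L i = genCount A i + genCount B i + genCount C i +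
          if x = i then 2 else 0 := by
        intro i
        rw [hLE]
        simp only [genCount_append, genCount_cons]
        split_ifs <;> omega
      have hx := hcount x
      have hx2 := hq x
      rw [if_pos rfl] at hx
      have hxps : x ∉ ps := fun h => by
        have := hdisj x h
        omega
      have hrel := autRel_collect (P := squareProd ps) (A := mk A) (B := mk B) (C := mk C) b
        (Avoids.squareProd hxps) (avoids_of_genCount_eq_zero (by omega))
        (avoids_of_genCount_eq_zero (by omega)) (avoids_of_genCount_eq_zero (by omega))
      refine step (ps ++ [x]) (A ++ FreeGroup.invRev B ++ C) ?_ ?_ (fun i hi => ?_) (fun i => ?_) ?_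
      · rw [hLE] at hN
        simp only [List.length_append, List.length_cons, FreeGroup.invRev_length] at hN ⊢
        omega
      · rw [List.nodup_append]
        refine ⟨hps, by simp, ?_⟩
        rintro a ha b hb rfl
        rw [List.mem_singleton] at hb
        exact hxps (hb ▸ ha)
      · simp only [genCount_append, genCount_invRev]
        rw [List.mem_append, List.mem_singleton] at hi
        rcases hi with hi | rfl
        · have h1 := hdisj i hi
          have h2 := hcount i
          omega
        · omega
      · have h1 := hcount i
        have h2 := hq i
        simp only [genCount_append, genCount_invRev]
        split_ifs at h1 <;> omega
      · convert hrel using 1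
        · rw [hLE]
          simp only [mul_assoc, FreeGroup.mul_mk, List.append_assoc, List.cons_append,
            List.nil_append]
        · simp only [squareProd_append, squareProd_cons, squareProd_nil, mul_one, mul_assoc,
            FreeGroup.mul_mk, FreeGroup.inv_mk, List.append_assoc]

end Classification

section Length

/-- The character of the two-dimensional irreducible representation of `S₃`. -/
def standardChar (g : Equiv.Perm (Fin 3)) : ℤ :=
  if g = 1 then 2 else if Equiv.Perm.sign g = 1 then -1 else 0

theorem sum_standardChar_mul_sq (g : Equiv.Perm (Fin 3)) :
    ∑ s, standardChar (g * s ^ 2) = 3 * standardChar g := by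
  revert g
  decide

variable {α : Type} [DecidableEq α]

theorem lift_mul_mulSingle_squareProd {G : Type} [Group G] (h : α → G) {x : α} (s : G)
    {ps : List α} (hx : x ∉ ps) :
    FreeGroup.lift (h * Pi.mulSingle x s) (squareProd ps) = FreeGroup.lift h (squareProd ps) := by
  induction ps with
  | nil => simp
  | cons y ps ih =>
    rw [List.mem_cons, not_or] at hx
    rw [squareProd_cons, MonoidHom.map_mul, MonoidHom.map_mul, ih hx.2, map_pow, map_pow,
      FreeGroup.lift_apply_of,
      FreeGroup.lift_apply_of, Pi.mul_apply, Pi.mulSingle_eq_of_ne (Ne.symm hx.1), mul_one]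

variable [Fintype α]

/-- The `S₃`-character sum of a product of squares of distinct generators determines their
number. -/
theorem two_pow_mul_sum_standardChar {ps : List α} (hps : ps.Nodup) :
    2 ^ ps.length * ∑ h : α → Equiv.Perm (Fin 3), standardChar (FreeGroup.lift h (squareProd ps)) =
      2 * (Fintype.card (α → Equiv.Perm (Fin 3)) : ℤ) := by
  induction ps using List.reverseRecOn with
  | nil => simp [standardChar, mul_comm]
  | append_singleton ps x ih =>
    rw [List.nodup_append] at hps
    have hx : x ∉ ps := fun h => hps.2.2 x h x (by simp) rfl
    rw [← ih hps.1, List.length_append, List.length_singleton, pow_succ, mul_assoc]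
    congr 1
    have hsum : ∀ s : Equiv.Perm (Fin 3), ∑ h : α → Equiv.Perm (Fin 3),
        standardChar (FreeGroup.lift h (squareProd (ps ++ [x]))) =
        ∑ h : α → Equiv.Perm (Fin 3),
          standardChar (FreeGroup.lift h (squareProd ps) * (h x * s) ^ 2) := by
      intro s
      rw [← Equiv.sum_comp (Equiv.mulRight (Pi.mulSingle x s))]
      refine Finset.sum_congr rfl fun h _ => ?_
      change standardChar (FreeGroup.lift (h * Pi.mulSingle x s) _) = _
      rw [squareProd_append, MonoidHom.map_mul, lift_mul_mulSingle_squareProd h s hx,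
        squareProd_cons, squareProd_nil, mul_one, map_pow,
        FreeGroup.lift_apply_of, Pi.mul_apply, Pi.mulSingle_eq_same]
    have htotal := Finset.sum_congr (s₁ := (Finset.univ : Finset (Equiv.Perm (Fin 3)))) rfl
      fun s _ => hsum s
    have hinner : ∀ h : α → Equiv.Perm (Fin 3),
        ∑ s, standardChar (FreeGroup.lift h (squareProd ps) * (h x * s) ^ 2) =
          3 * standardChar (FreeGroup.lift h (squareProd ps)) := by
      intro h
      rw [← sum_standardChar_mul_sq]
      exact Equiv.sum_comp (Equiv.mulLeft (h x)) fun s =>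
        standardChar (FreeGroup.lift h (squareProd ps) * s ^ 2)
    rw [Finset.sum_const, Finset.sum_comm, Finset.card_univ, Fintype.card_perm, Fintype.card_fin,
      Finset.sum_congr rfl fun h _ => hinner h, ← Finset.mul_sum] at htotal
    have h6 : Nat.factorial 3 = 6 := rfl
    rw [h6, nsmul_eq_mul] at htotal
    push_cast at htotal
    linarith

theorem SameWordMeasure.length_eq {ps qs : List α} (hps : ps.Nodup) (hqs : qs.Nodup)
    (hm : SameWordMeasure (squareProd ps) (squareProd qs)) : ps.length = qs.length := by
  have h1 := two_pow_mul_sum_standardChar hps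
  have h2 := two_pow_mul_sum_standardChar hqs
  rw [← hm.sum_eq standardChar, ← h1] at h2
  have hne : ∑ h : α → Equiv.Perm (Fin 3),
      standardChar (FreeGroup.lift h (squareProd ps)) ≠ 0 := by
    intro h0
    rw [h0, mul_zero] at h1
    have : (Fintype.card (α → Equiv.Perm (Fin 3)) : ℤ) ≠ 0 := by
      exact_mod_cast Fintype.card_ne_zero
    omega
  have h3 := mul_right_cancel₀ hne h2
  exact (Nat.pow_right_injective le_rfl (by exact_mod_cast h3 : 2 ^ qs.length = 2 ^ ps.length)).symm

end Length

theorem AutRel.of_length_eq {α : Type} {ps qs : List α} (hps : ps.Nodup) (hqs : qs.Nodup)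
    (h : ps.length = qs.length) : AutRel (squareProd ps) (squareProd qs) := by
  let x : Fin ps.length ↪ α := ⟨ps.get, hps.injective_get⟩
  let y : Fin ps.length ↪ α := ⟨fun i => qs.get (i.cast h), fun i j hij => by
    simpa using hqs.injective_get hij⟩
  have := Equiv.Perm.isMultiplyPretransitive α ps.length
  obtain ⟨e, he⟩ := MulAction.exists_smul_eq (Equiv.Perm α) x y
  refine ⟨FreeGroup.freeGroupCongr e, ?_⟩
  have hmap : qs = ps.map e := by
    refine List.ext_getElem (by simp [h]) fun i h1 h2 => ?_
    rw [List.length_map] at h2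
    have := DFunLike.congr_fun he ⟨i, h2⟩
    simpa [x, y] using this.symm
  rw [hmap, squareProd, squareProd, map_list_prod, List.map_map, List.map_map]
  congr 1

/-- Products of squares of distinct generators are determined by their word measures. -/
theorem SameWordMeasure.autRel_squareProd {α : Type} [Fintype α] [DecidableEq α] {ps : List α}
    (hps : ps.Nodup) (hne : ps ≠ []) {w' : FreeGroup α}
    (hm : SameWordMeasure (squareProd ps) w') : AutRel (squareProd ps) w' := by
  obtain ⟨f, L, hL, hq⟩ := hm.exists_quadratic hps
  have hm' := hm.map_right f
  rw [hL] at hm'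
  have hG : ∃ φ : FreeGroup α →* Multiplicative (ZMod 4), φ (mk L) ≠ 1 := by
    by_contra hcon
    push Not at hcon
    obtain ⟨x, qs, rfl⟩ := List.exists_cons_of_ne_nil hne
    have hx : x ∉ qs := (List.nodup_cons.mp hps).1
    let t : Multiplicative (ZMod 4) := Multiplicative.ofAdd 1
    let h₀ : α → Multiplicative (ZMod 4) := 1 * Pi.mulSingle x t
    have hval : FreeGroup.lift h₀ (squareProd (x :: qs)) ≠ 1 := by
      have h1 : ∀ w : FreeGroup α,
          FreeGroup.lift (1 : α → Multiplicative (ZMod 4)) w = 1 := fun w => by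
        have : FreeGroup.lift (1 : α → Multiplicative (ZMod 4)) = 1 := by
          ext y
          simp
        rw [this]
        rfl
      rw [squareProd_cons, MonoidHom.map_mul, lift_mul_mulSingle_squareProd 1 t hx, h1, mul_one,
        map_pow,
        FreeGroup.lift_apply_of]
      have h2 : h₀ x = t := by simp [h₀]
      rw [h2]
      decide
    have hcard := hm' (Multiplicative (ZMod 4))
      (FreeGroup.lift h₀ (squareProd (x :: qs)))
    have h0 : Nat.card {h : α → Multiplicative (ZMod 4) // FreeGroup.lift h (mk L) =
        FreeGroup.lift h₀ (squareProd (x :: qs))} = 0 := by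
      have : IsEmpty {h : α → Multiplicative (ZMod 4) // FreeGroup.lift h (mk L) =
          FreeGroup.lift h₀ (squareProd (x :: qs))} :=
        ⟨fun h => hval (h.2.symm.trans (hcon _))⟩
      exact Nat.card_of_isEmpty
    rw [h0, Nat.card_eq_zero] at hcard
    rcases hcard with h | h
    · exact h.false ⟨_, rfl⟩
    · exact h.false
  obtain ⟨qs, hqs, hrel⟩ := exists_autRel_squareProd (G := Multiplicative (ZMod 4)) _ [] L le_rfl
    List.nodup_nil (by simp) hq (by rwa [squareProd_nil, one_mul])
  rw [squareProd_nil, one_mul] at hrel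
  obtain ⟨g, hg⟩ := hrel
  have hm'' := hm'.map_right g
  rw [hg] at hm''
  refine (AutRel.of_length_eq hps hqs (hm''.length_eq hps hqs)).trans ?_
  exact AutRel.symm (AutRel.trans ⟨f, hL⟩ ⟨g, hg⟩)

/-- **Profinite rigidity of non-orientable partial surface words** (Corollary D).
If `w = x₁² x₂² ⋯ xₙ²` (with `n < k`) and `w' ∈ F_k` induces the same word measure as `w`
on every finite group, then `w'` lies in the `Aut(F_k)`-orbit of `w`. -/
theorem nonorientable_partial_surface_word_profinitely_rigid
    (k n : ℕ) (hn : 0 < n) (hk : n < k)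
    (w w' : FreeGroup (Fin k))
    (hw : w = (List.ofFn fun i : Fin n =>
      FreeGroup.of (⟨i.1, by have := i.2; omega⟩ : Fin k) ^ 2).prod)
    (hmeas : ∀ (G : Type) [Group G] [Finite G] (g : G),
      Nat.card {h : Fin k → G // FreeGroup.lift h w = g} =
        Nat.card {h : Fin k → G // FreeGroup.lift h w' = g}) :
    ∃ f : FreeGroup (Fin k) ≃* FreeGroup (Fin k), f w = w' := by
  let ps : List (Fin k) := List.ofFn fun i : Fin n => ⟨i.1, by have := i.2; omega⟩
  have hps : ps.Nodup := List.nodup_ofFn.mpr fun i j hij => by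
    simpa [Fin.ext_iff] using hij
  have hwps : w = squareProd ps := by
    rw [hw, squareProd, List.map_ofFn]
    rfl
  have hne : ps ≠ [] := fun h => by
    have := congrArg List.length h
    simp [ps] at this
    omega
  subst hwps
  exact SameWordMeasure.autRel_squareProd hps hne hmeas
end

section
/- For every finite abelian group M there exist natural numbers n, r, m and vectors v_1, …, v_m ∈ ℤ^n, each of whose coordinates lies in {−1, 0, 1}, such that the quotient of ℤ^n by the subgroup generated by v_1, …, v_m is isomorphic to M × ℤ^r. (Every finite system of linear equations over ℤ is equivalent, up to a void extension, to a system of ∂-equations, i.e. equations of the form ±x_{i_1} ± x_{i_2} ± ⋯ ± x_{i_s} = 0 with coefficients ±1.) -/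
/-- A vector of integers is a boundary vector when its coordinates lie in `{-1, 0, 1}`. -/
def IsBoundaryVector {ι : Type*} (w : ι → ℤ) : Prop :=
  ∀ j, w j = -1 ∨ w j = 0 ∨ w j = 1

theorem finite_setOf_isBoundaryVector (ι : Type*) [Finite ι] :
    {w : ι → ℤ | IsBoundaryVector w}.Finite := by
  refine (Set.Finite.pi' fun _ : ι => Set.toFinite ({-1, 0, 1} : Set ℤ)).subset fun w hw j => ?_
  simpa using hw j

theorem isBoundaryVector_single_sub_single {ι : Type*} [DecidableEq ι] {i j : ι} :
    IsBoundaryVector (Pi.single i 1 - Pi.single j 1 : ι → ℤ) := by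
  intro k
  simp only [Pi.sub_apply, Pi.single_apply]
  split_ifs <;> simp

theorem isBoundaryVector_single_add_single_sub_single {ι : Type*} [DecidableEq ι] {i j : ι}
    (hij : i ≠ j) (k : ι) :
    IsBoundaryVector (Pi.single i 1 + Pi.single j 1 - Pi.single k 1 : ι → ℤ) := by
  intro l
  simp only [Pi.sub_apply, Pi.add_apply, Pi.single_apply]
  grind

/-- If every element of `M` is the image under `φ : ℤ^ι → M` of at least two standard basis
vectors, chosen by `s` and `t` with disjoint ranges, then the kernel of `φ` is generated by
boundary vectors. -/
theorem closure_isBoundaryVector_eq_ker {ι M : Type*} [Finite ι] [DecidableEq ι] [AddCommGroup M]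
    (φ : (ι → ℤ) →+ M) (s t : M → ι) (hst : ∀ a b, s a ≠ t b)
    (hs : ∀ a, φ (Pi.single (s a) 1) = a) (ht : ∀ a, φ (Pi.single (t a) 1) = a) :
    AddSubgroup.closure {w : ι → ℤ | IsBoundaryVector w ∧ φ w = 0} = φ.ker := by
  set K := AddSubgroup.closure {w : ι → ℤ | IsBoundaryVector w ∧ φ w = 0} with hK
  apply le_antisymm
  · exact (AddSubgroup.closure_le _).2 fun w hw => hw.2
  have mk_eq (i j : ι) (h : φ (Pi.single i 1) = φ (Pi.single j 1)) :
      (QuotientAddGroup.mk' K) (Pi.single i 1) = (QuotientAddGroup.mk' K) (Pi.single j 1) := by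
    rw [← sub_eq_zero, ← map_sub]
    refine (QuotientAddGroup.eq_zero_iff _).2 (AddSubgroup.subset_closure ⟨?_, ?_⟩)
    · exact isBoundaryVector_single_sub_single
    · rw [map_sub, h, sub_self]
  let g : M →+ (ι → ℤ) ⧸ K :=
    AddMonoidHom.mk' (fun a => QuotientAddGroup.mk' K (Pi.single (s a) 1)) fun a b => by
      rw [mk_eq (s b) (t b) (by rw [hs, ht]), eq_comm, ← sub_eq_zero, ← map_add, ← map_sub]
      refine (QuotientAddGroup.eq_zero_iff _).2 (AddSubgroup.subset_closure ⟨?_, ?_⟩)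
      · exact isBoundaryVector_single_add_single_sub_single (hst a b) _
      · rw [map_sub, map_add, hs, ht, hs, sub_self]
  have hg : g.comp φ = QuotientAddGroup.mk' K := by
    refine AddMonoidHom.functions_ext' _ _ _ fun i => AddMonoidHom.ext_int ?_
    exact mk_eq _ _ (hs _)
  intro w hw
  rw [← QuotientAddGroup.eq_zero_iff, ← QuotientAddGroup.mk'_apply, ← hg, AddMonoidHom.comp_apply,
    AddMonoidHom.mem_ker.1 hw, map_zero]

/-- **Every finite abelian group is cut out by a system of ∂-equations**: for every finite
abelian group `M` there are `n, r, m` and vectors `v₁, …, v_m ∈ ℤⁿ` with coordinates in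
`{-1, 0, 1}` such that `ℤⁿ / ⟨v₁, …, v_m⟩ ≅ M × ℤ^r`. -/
theorem finite_abelian_group_via_boundary_equations
    (M : Type) [AddCommGroup M] [Finite M] :
    ∃ (n r m : ℕ) (v : Fin m → (Fin n → ℤ)),
      (∀ i j, v i j = -1 ∨ v i j = 0 ∨ v i j = 1) ∧
      Nonempty (((Fin n → ℤ) ⧸ AddSubgroup.closure (Set.range v)) ≃+ M × (Fin r → ℤ)) := by
  let e := Finite.equivFin (M × Bool)
  let φ : (Fin (Nat.card (M × Bool)) → ℤ) →+ M :=
    (Fintype.linearCombination ℤ fun j => (e.symm j).1).toAddMonoidHom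
  have hφ (a : M) (b : Bool) : φ (Pi.single (e (a, b)) 1) = a := by
    simp [φ, Fintype.linearCombination_apply_single]
  have hS : {w | IsBoundaryVector w ∧ φ w = 0}.Finite :=
    (finite_setOf_isBoundaryVector _).subset fun w hw => hw.1
  have := hS.to_subtype
  let u := Finite.equivFin {w | IsBoundaryVector w ∧ φ w = 0}
  refine ⟨_, 0, _, fun i => (u.symm i).1, fun i => (u.symm i).2.1, ⟨?_⟩⟩
  have hu : Set.range (fun i => (u.symm i).1) = {w | IsBoundaryVector w ∧ φ w = 0} :=
    (u.symm.surjective.range_comp Subtype.val).trans Subtype.range_coe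
  have hker : AddSubgroup.closure (Set.range fun i => (u.symm i).1) = φ.ker := by
    rw [hu]
    exact closure_isBoundaryVector_eq_ker φ (fun a => e (a, true)) (fun a => e (a, false))
      (fun a b => by simp) (fun a => hφ a _) (fun a => hφ a _)
  exact ((QuotientAddGroup.quotientAddEquivOfEq hker).trans
    (QuotientAddGroup.quotientKerEquivOfSurjective φ fun a => ⟨_, hφ a true⟩)).trans
    AddEquiv.prodUnique.symm
end

section
/- Fix an integer n ≥ 1 and integers r_1, …, r_n ≥ 2. Let A be the abelian group with generators x_{i,j} for 1 ≤ i ≤ n and 1 ≤ j ≤ 3r_i − 2, subject to the following relations: for each i, the relation x_{i,1} + x_{i,2} + ⋯ + x_{i,r_i} = 0; and for each i and each 1 ≤ j ≤ r_i − 1, the three relations x_{i,r_i+2j−1} + x_{i,r_i+2j} = 0, x_{i,r_i+2j−2} + x_{i,r_i+2j−1} = 0, and x_{i,j} + x_{i,r_i+2j−1} = 0. Then A is isomorphic to the direct sum ℤ/r_1ℤ ⊕ ℤ/r_2ℤ ⊕ ⋯ ⊕ ℤ/r_nℤ. -/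
/-- Generators `x_{i,j}` with `1 ≤ i ≤ n` (0-indexed: `i : Fin n`) and
`1 ≤ j ≤ 3 rᵢ - 2` (0-indexed: `j : Fin (3 * r i - 2)`). -/
abbrev TorsionGens (n : ℕ) (r : Fin n → ℕ) : Type := (i : Fin n) × Fin (3 * r i - 2)

/-- The basis vector corresponding to the generator `x_{i,j}` (`j` is 0-indexed). -/
noncomputable def xgen {n : ℕ} {r : Fin n → ℕ} (i : Fin n) (j : ℕ) (hj : j < 3 * r i - 2) :
    TorsionGens n r →₀ ℤ :=
  Finsupp.single ⟨i, ⟨j, hj⟩⟩ 1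

/-- The relation vectors of the paper's Table 1 (translated to 0-indexed `j`):
for each `i`, the relation `x_{i,1} + ⋯ + x_{i,rᵢ} = 0`, and for each `i` and each
`1 ≤ j ≤ rᵢ - 1` the relations `x_{i,rᵢ+2j-1} + x_{i,rᵢ+2j} = 0`,
`x_{i,rᵢ+2j-2} + x_{i,rᵢ+2j-1} = 0` and `x_{i,j} + x_{i,rᵢ+2j-1} = 0`. -/
def torsionRels (n : ℕ) (r : Fin n → ℕ) (hr : ∀ i, 2 ≤ r i) :
    Set (TorsionGens n r →₀ ℤ) :=
  (Set.range fun i : Fin n =>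
      ∑ j : Fin (r i), xgen i j.1 (by have := j.2; have := hr i; omega)) ∪
  (Set.range fun p : (i : Fin n) × Fin (r i - 1) =>
      xgen p.1 (r p.1 + 2 * p.2.1) (by have := p.2.2; have := hr p.1; omega) +
        xgen p.1 (r p.1 + 2 * p.2.1 + 1) (by have := p.2.2; have := hr p.1; omega)) ∪
  (Set.range fun p : (i : Fin n) × Fin (r i - 1) =>
      xgen p.1 (r p.1 + 2 * p.2.1 - 1) (by have := p.2.2; have := hr p.1; omega) +
        xgen p.1 (r p.1 + 2 * p.2.1) (by have := p.2.2; have := hr p.1; omega)) ∪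
  (Set.range fun p : (i : Fin n) × Fin (r i - 1) =>
      xgen p.1 p.2.1 (by have := p.2.2; have := hr p.1; omega) +
        xgen p.1 (r p.1 + 2 * p.2.1) (by have := p.2.2; have := hr p.1; omega))

/-- The sign `ε` with `x_{i,j} = ε x_{i,r-1}` (0-indexed) in the quotient, where `r = rᵢ`. -/
def torsionSign (r j : ℕ) : ℤ := if j < r ∨ (j - r) % 2 = 1 then 1 else -1

/-- The homomorphism from the free group sending `x_{i,j}` to `±1` in the `i`-th factor. -/
noncomputable def torsionEval (n : ℕ) (r : Fin n → ℕ) :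
    (TorsionGens n r →₀ ℤ) →+ ((i : Fin n) → ZMod (r i)) :=
  Finsupp.liftAddHom fun p =>
    zmultiplesHom _ (Pi.single p.1 ((torsionSign (r p.1) p.2 : ℤ) : ZMod (r p.1)))

theorem torsionEval_xgen {n : ℕ} {r : Fin n → ℕ} (i : Fin n) (j : ℕ) (hj : j < 3 * r i - 2) :
    torsionEval n r (xgen i j hj) = Pi.single i ((torsionSign (r i) j : ℤ) : ZMod (r i)) := by
  simp [torsionEval, xgen]

theorem torsionEval_eq_zero {n : ℕ} {r : Fin n → ℕ} (hr : ∀ i, 2 ≤ r i)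
    {v : TorsionGens n r →₀ ℤ} (hv : v ∈ torsionRels n r hr) : torsionEval n r v = 0 := by
  have key : ∀ (i : Fin n) (a b : ℕ) (ha : a < 3 * r i - 2) (hb : b < 3 * r i - 2),
      torsionSign (r i) a + torsionSign (r i) b = 0 →
        torsionEval n r (xgen i a ha + xgen i b hb) = 0 := by
    intro i a b ha hb h
    rw [map_add, torsionEval_xgen, torsionEval_xgen, ← Pi.single_add, ← Int.cast_add, h,
      Int.cast_zero, Pi.single_zero]
  rcases hv with ((⟨i, rfl⟩ | ⟨⟨i, j⟩, rfl⟩) | ⟨⟨i, j⟩, rfl⟩) | ⟨⟨i, j⟩, rfl⟩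
  · simp only [map_sum, torsionEval_xgen, torsionSign, Fin.is_lt, true_or, if_true]
    simp [← Pi.single_smul]
  all_goals
    apply key
    have := j.2
    have := hr i
    simp only [torsionSign]
    split_ifs <;> omega

/-- The class of `x_{i,j}` in the quotient by the relations. -/
noncomputable def xclass {n : ℕ} {r : Fin n → ℕ} (hr : ∀ i, 2 ≤ r i) (i : Fin n) (j : ℕ)
    (hj : j < 3 * r i - 2) :
    (TorsionGens n r →₀ ℤ) ⧸ AddSubgroup.closure (torsionRels n r hr) :=
  QuotientAddGroup.mk (xgen i j hj)

section Relations

variable {n : ℕ} {r : Fin n → ℕ} (hr : ∀ i, 2 ≤ r i) (i : Fin n)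

theorem mk_eq_zero_of_mem_torsionRels {v : TorsionGens n r →₀ ℤ} (hv : v ∈ torsionRels n r hr) :
    (QuotientAddGroup.mk v :
      (TorsionGens n r →₀ ℤ) ⧸ AddSubgroup.closure (torsionRels n r hr)) = 0 :=
  (QuotientAddGroup.eq_zero_iff v).2 (AddSubgroup.subset_closure hv)

theorem sum_xclass_eq_zero :
    ∑ j : Fin (r i), xclass hr i j.1 (by have := j.2; have := hr i; omega) = 0 := by
  have h := mk_eq_zero_of_mem_torsionRels hr (Or.inl (Or.inl (Or.inl ⟨i, rfl⟩)))
  rw [← QuotientAddGroup.mk'_apply, map_sum] at h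
  exact h

theorem xclass_even_add_odd (k : ℕ) (hk : k < r i - 1) :
    xclass hr i (r i + 2 * k) (by omega) + xclass hr i (r i + 2 * k + 1) (by omega) = 0 :=
  mk_eq_zero_of_mem_torsionRels hr (Or.inl (Or.inl (Or.inr ⟨⟨i, ⟨k, hk⟩⟩, rfl⟩)))

theorem xclass_pred_add_even (k : ℕ) (hk : k < r i - 1) :
    xclass hr i (r i + 2 * k - 1) (by omega) + xclass hr i (r i + 2 * k) (by omega) = 0 :=
  mk_eq_zero_of_mem_torsionRels hr (Or.inl (Or.inr ⟨⟨i, ⟨k, hk⟩⟩, rfl⟩))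

theorem xclass_add_even (k : ℕ) (hk : k < r i - 1) :
    xclass hr i k (by omega) + xclass hr i (r i + 2 * k) (by omega) = 0 :=
  mk_eq_zero_of_mem_torsionRels hr (Or.inr ⟨⟨i, ⟨k, hk⟩⟩, rfl⟩)

theorem xclass_pred_eq (k : ℕ) (hk : k < r i) :
    xclass hr i (r i + 2 * k - 1) (by omega) =
      xclass hr i (r i - 1) (by omega) := by
  induction k with
  | zero => rfl
  | succ k ih =>
    rw [← ih (by omega)]
    have h := xclass_even_add_odd hr i k (by omega)
    rw [add_comm] at h
    exact (eq_neg_of_add_eq_zero_left h).trans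
      (eq_neg_of_add_eq_zero_left (xclass_pred_add_even hr i k (by omega))).symm

theorem xclass_even_eq (k : ℕ) (hk : k < r i - 1) :
    xclass hr i (r i + 2 * k) (by omega) = -xclass hr i (r i - 1) (by omega) := by
  rw [← xclass_pred_eq hr i k (by omega)]
  exact eq_neg_of_add_eq_zero_right (xclass_pred_add_even hr i k hk)

theorem xclass_eq_of_lt (j : ℕ) (hj : j < r i) :
    xclass hr i j (by omega) = xclass hr i (r i - 1) (by omega) := by
  rcases Nat.lt_or_ge j (r i - 1) with h | h
  · rw [eq_neg_of_add_eq_zero_left (xclass_add_even hr i j h), xclass_even_eq hr i j h, neg_neg]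
  · obtain rfl : j = r i - 1 := by omega
    rfl

theorem xclass_eq_torsionSign_zsmul (j : ℕ) (hj : j < 3 * r i - 2) :
    xclass hr i j hj = torsionSign (r i) j • xclass hr i (r i - 1) (by omega) := by
  rw [torsionSign]
  split_ifs with h
  · rw [one_zsmul]
    rcases Nat.lt_or_ge j (r i) with hjr | hjr
    · exact xclass_eq_of_lt hr i j hjr
    · obtain ⟨k, rfl⟩ : ∃ k, j = r i + 2 * (k + 1) - 1 := ⟨(j - r i) / 2, by omega⟩
      exact xclass_pred_eq hr i (k + 1) (by omega)
  · rw [neg_one_zsmul]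
    obtain ⟨k, rfl⟩ : ∃ k, j = r i + 2 * k := ⟨(j - r i) / 2, by omega⟩
    exact xclass_even_eq hr i k (by omega)

theorem nsmul_xclass_eq_zero :
    r i • xclass hr i (r i - 1) (by have := hr i; omega) = 0 := by
  have h := sum_xclass_eq_zero hr i
  rwa [Finset.sum_eq_card_nsmul (b := xclass hr i (r i - 1) (by have := hr i; omega))
      fun j _ => xclass_eq_of_lt hr i j.1 j.2,
    Finset.card_univ, Fintype.card_fin] at h

/-- The homomorphism sending `1` in the `i`-th factor to the class of `x_{i,r-1}` (0-indexed),
where `r = rᵢ`. -/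
noncomputable def torsionSection :
    ((i : Fin n) → ZMod (r i)) →+
      (TorsionGens n r →₀ ℤ) ⧸ AddSubgroup.closure (torsionRels n r hr) :=
  ∑ i, (ZMod.lift (r i) ⟨zmultiplesHom _ (xclass hr i (r i - 1) (by have := hr i; omega)), by
    simpa using nsmul_xclass_eq_zero hr i⟩).comp (Pi.evalAddMonoidHom _ i)

theorem torsionSection_single (m : ℤ) :
    torsionSection hr (Pi.single i (m : ZMod (r i))) =
      m • xclass hr i (r i - 1) (by have := hr i; omega) := by
  rw [torsionSection, AddMonoidHom.finsetSum_apply, Finset.sum_eq_single i]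
  · simp
  · intro j _ hj
    simp [Pi.single_eq_of_ne hj]
  · simp

end Relations

/-- **The ∂-equation system of Table 1 presents `ℤ/r₁ ⊕ ⋯ ⊕ ℤ/rₙ`**: the quotient of the
free abelian group on the `x_{i,j}` by the listed relations is isomorphic to
`ℤ/r₁ℤ ⊕ ⋯ ⊕ ℤ/rₙℤ`. -/
theorem torsion_relations_quotient (n : ℕ) (hn : 1 ≤ n) (r : Fin n → ℕ)
    (hr : ∀ i, 2 ≤ r i) :
    Nonempty (((TorsionGens n r →₀ ℤ) ⧸ AddSubgroup.closure (torsionRels n r hr)) ≃+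
      ((i : Fin n) → ZMod (r i))) := by
  refine ⟨AddMonoidHom.toAddEquiv
    (QuotientAddGroup.lift _ (torsionEval n r)
      ((AddSubgroup.closure_le _).2 fun v hv => torsionEval_eq_zero hr hv))
    (torsionSection hr) ?_ ?_⟩
  · refine QuotientAddGroup.addMonoidHom_ext _ (Finsupp.addHom_ext' fun ⟨i, j⟩ => ?_)
    refine AddMonoidHom.ext_int ?_
    change torsionSection hr (torsionEval n r (xgen i j.1 j.2)) = xclass hr i j.1 j.2
    rw [torsionEval_xgen, torsionSection_single, ← xclass_eq_torsionSign_zsmul]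
  · refine AddMonoidHom.functions_ext _ _ _ fun i x => ?_
    obtain ⟨m, rfl⟩ := ZMod.intCast_surjective x
    rw [AddMonoidHom.comp_apply, torsionSection_single, map_zsmul]
    change m • torsionEval n r (xgen i (r i - 1) _) = _
    have hlt : r i - 1 < r i := by have := hr i; omega
    rw [torsionEval_xgen, torsionSign, if_pos (Or.inl hlt), ← Pi.single_smul]
    simp
end

section
/- Let G be a residually finite group and let H ≤ G be a virtual retract of G. Then H is separable in G: for every g ∈ G with g ∉ H there exists a finite-index subgroup G' ≤ G with H ≤ G' and g ∉ G'. -/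
/-- Two homomorphisms into a finite group agree on a subgroup of finite index. -/
theorem MonoidHom.finiteIndex_eqLocus {K Q : Type*} [Group K] [Group Q] [Finite Q]
    (f₁ f₂ : K →* Q) : (f₁.eqLocus f₂).FiniteIndex := by
  refine Subgroup.finiteIndex_of_le (H := (f₁.prod f₂).ker) fun k hk => ?_
  obtain ⟨h₁, h₂⟩ := Prod.mk.inj (MonoidHom.mem_ker.mp hk)
  exact h₁.trans h₂.symm

/-- **Virtual retracts of residually finite groups are separable** (Lemma 2.10):
if `G` is residually finite and `H ≤ G` is a virtual retract, then `H` is separable in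
`G`. -/
theorem virtual_retract_is_separable
    (G : Type) [Group G]
    (hres : ∀ g : G, g ≠ 1 → ∃ (Q : Type) (_ : Group Q) (φ : G →* Q), Finite Q ∧ φ g ≠ 1)
    (H : Subgroup G)
    (hvr : ∃ (G' : Subgroup G), G'.FiniteIndex ∧ ∃ (hle : H ≤ G') (r : ↥G' →* ↥H),
      ∀ h : H, r (Subgroup.inclusion hle h) = h) :
    ∀ g : G, g ∉ H → ∃ G' : Subgroup G, G'.FiniteIndex ∧ H ≤ G' ∧ g ∉ G' := by
  obtain ⟨K, hK, hle, r, hr⟩ := hvr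
  intro g hg
  by_cases hgK : g ∈ K
  swap
  · exact ⟨K, hK, hle, hgK⟩
  have hne : (r ⟨g, hgK⟩ : G)⁻¹ * g ≠ 1 := by
    intro h
    rw [inv_mul_eq_one] at h
    exact hg (h ▸ (r ⟨g, hgK⟩).2)
  obtain ⟨Q, _, φ, _, hφ⟩ := hres _ hne
  refine ⟨((φ.comp (H.subtype.comp r)).eqLocus (φ.comp K.subtype)).map K.subtype, ?_, ?_, ?_⟩
  · have := MonoidHom.finiteIndex_eqLocus (φ.comp (H.subtype.comp r)) (φ.comp K.subtype)
    rw [Subgroup.finiteIndex_iff, Subgroup.index_map_subtype]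
    exact mul_ne_zero this.index_ne_zero hK.index_ne_zero
  · intro h hh
    refine ⟨⟨h, hle hh⟩, ?_, rfl⟩
    exact congrArg (fun x : H => φ x) (hr ⟨h, hh⟩)
  · rintro ⟨k, hk, rfl⟩
    apply hφ
    rw [map_mul, map_inv, inv_mul_eq_one]
    exact hk
end

section
/- Let F be a free group, let w ∈ F be a nontrivial element, and let H ≤ F be a finitely generated subgroup. Then the set of H-conjugacy classes of elevations of w to H is finite; that is, there are only finitely many H-conjugacy classes [u]_H of elements u ∈ H such that u = (g w g⁻¹)^d for some g ∈ F and some d ≥ 1 with (g w g⁻¹)^e ∉ H for all 1 ≤ e < d. -/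
namespace FreeGroup

variable {α : Type*}

theorem _root_.List.prefix_append_iff {β : Type*} {p A B : List β} :
    p <+: A ++ B ↔ p <+: A ∨ ∃ q, p = A ++ q ∧ q <+: B := by
  constructor
  · intro h
    obtain h' | ⟨q, rfl⟩ := List.prefix_or_prefix_of_prefix h (List.prefix_append A B)
    · exact Or.inl h'
    · exact Or.inr ⟨q, rfl, (List.prefix_append_right_inj A).1 h⟩
  · rintro (h | ⟨q, rfl, h⟩)
    · exact h.trans (List.prefix_append A B)
    · exact (List.prefix_append_right_inj A).2 h

/-- All prefixes of the word `L` represent elements of `T`. -/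
def PrefixesIn (T : Set (FreeGroup α)) (L : List (α × Bool)) : Prop :=
  ∀ p, p <+: L → mk p ∈ T

theorem PrefixesIn.of_step {T : Set (FreeGroup α)} {L₁ L₂ : List (α × Bool)}
    (h : PrefixesIn T L₁) (hs : Red.Step L₁ L₂) : PrefixesIn T L₂ := by
  obtain @⟨A, B, x, b⟩ := hs
  intro p hp
  rw [List.prefix_append_iff] at hp
  obtain hp | ⟨q, rfl, hq⟩ := hp
  · exact h p (hp.trans (List.prefix_append _ _))
  · have heq : mk (A ++ q) = mk (A ++ (x, b) :: (x, !b) :: q) :=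
      (Quot.sound Red.Step.not).symm
    rw [heq]
    exact h _ ((List.prefix_append_right_inj A).2 (by simpa using hq))

theorem PrefixesIn.of_red {T : Set (FreeGroup α)} {L₁ L₂ : List (α × Bool)}
    (h : PrefixesIn T L₁) (hr : Red L₁ L₂) : PrefixesIn T L₂ := by
  induction hr with
  | refl => exact h
  | tail _ hs ih => exact ih.of_step hs

theorem PrefixesIn.append {T : Set (FreeGroup α)} {L₁ L₂ : List (α × Bool)}
    (h₁ : PrefixesIn T L₁) (h₂ : PrefixesIn T L₂) (hT : ∀ t ∈ T, mk L₁ * t ∈ T) :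
    PrefixesIn T (L₁ ++ L₂) := by
  intro p hp
  rw [List.prefix_append_iff] at hp
  obtain hp | ⟨q, rfl, hq⟩ := hp
  · exact h₁ p hp
  · rw [← mul_mk]
    exact hT _ (h₂ q hq)

theorem PrefixesIn.invRev {T : Set (FreeGroup α)} {L : List (α × Bool)}
    (h : PrefixesIn T L) (hT : ∀ t ∈ T, (mk L)⁻¹ * t ∈ T) : PrefixesIn T (invRev L) := by
  rintro p ⟨q, hq⟩
  have hL : L = FreeGroup.invRev q ++ FreeGroup.invRev p := by
    rw [← invRev_append, hq, invRev_invRev]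
  have hp : mk p = (mk L)⁻¹ * mk (FreeGroup.invRev q) := by
    rw [hL, ← mul_mk, ← inv_mk, ← inv_mk]
    group
  rw [hp]
  exact hT _ (h _ ⟨_, hL.symm⟩)

/-- Prefixes of reduced words of elements of a finitely generated subgroup `H` stay within
finitely many right cosets of `H`. -/
theorem exists_finite_prefixesIn_of_fg [DecidableEq α] {H : Subgroup (FreeGroup α)} (hH : H.FG) :
    ∃ P : Set (FreeGroup α), P.Finite ∧
      ∀ h ∈ H, PrefixesIn {g | ∃ k ∈ H, ∃ p ∈ P, g = k * p} h.toWord := by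
  obtain ⟨S, hS⟩ := hH
  let P : Set (FreeGroup α) := insert 1 (⋃ s ∈ S, {g | ∃ p, p <+: s.toWord ∧ mk p = g})
  refine ⟨P, ?_, ?_⟩
  · refine Set.Finite.insert _ (S.finite_toSet.biUnion fun s _ => ?_)
    refine ((List.finite_toSet s.toWord.inits).image mk).subset ?_
    rintro g ⟨p, hp, rfl⟩
    exact ⟨p, (List.mem_inits _ _).2 hp, rfl⟩
  · set T : Set (FreeGroup α) := {g | ∃ k ∈ H, ∃ p ∈ P, g = k * p}
    have hT : ∀ k ∈ H, ∀ t ∈ T, k * t ∈ T := by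
      rintro k hk _ ⟨l, hl, p, hp, rfl⟩
      exact ⟨k * l, H.mul_mem hk hl, p, hp, (mul_assoc _ _ _).symm⟩
    intro h hh
    rw [← hS] at hh
    induction hh using Subgroup.closure_induction with
    | mem s hs =>
      intro p hp
      refine ⟨1, H.one_mem, mk p, Or.inr ?_, (one_mul _).symm⟩
      exact Set.mem_biUnion hs ⟨p, hp, rfl⟩
    | one =>
      intro p hp
      rw [toWord_one, List.prefix_nil] at hp
      subst hp
      exact ⟨1, H.one_mem, 1, Or.inl rfl, (one_mul _).symm⟩
    | mul x y hx hy ihx ihy =>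
      rw [toWord_mul]
      refine (ihx.append ihy ?_).of_red reduce.red
      rw [mk_toWord]
      exact hT x (hS ▸ hx)
    | inv x hx ih =>
      rw [toWord_inv]
      refine ih.invRev ?_
      rw [mk_toWord]
      exact hT _ (H.inv_mem (hS ▸ hx))

/-- Multiplying a reduced word by at most `L₂.length` letters on the right leaves everything
before the final segment `L₂` untouched. -/
theorem IsReduced.prefix_reduce_append [DecidableEq α] {L₁ L₂ G : List (α × Bool)}
    (h : IsReduced (L₁ ++ L₂)) (hG : G.length ≤ L₂.length) :
    L₁ <+: reduce (L₁ ++ L₂ ++ G) := by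
  induction G generalizing L₂ with
  | nil =>
    rw [List.append_nil, h.reduce_eq]
    exact List.prefix_append _ _
  | cons a G ih =>
    obtain rfl | ⟨M, b, rfl⟩ := L₂.eq_nil_or_concat'
    · simp at hG
    have hGM : G.length ≤ M.length := by simpa using hG
    by_cases hab : b.1 = a.1 → b.2 = a.2
    · have hred : IsReduced (L₁ ++ (M ++ [b] ++ [a])) := by
        have := IsReduced.append_overlap (L₁ := L₁ ++ M) (L₂ := [b]) (L₃ := [a])
          (by simpa using h) (by simpa using hab) (by simp)
        simpa using this
      have := ih hred (by simp; omega)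
      simpa using this
    · push Not at hab
      obtain ⟨x, s⟩ := a
      obtain ⟨y, t⟩ := b
      obtain ⟨rfl, hst⟩ := hab
      obtain rfl : s = !t := by
        cases s <;> cases t <;> simp_all
      have hstep : reduce (L₁ ++ (M ++ [(y, t)]) ++ (y, !t) :: G) = reduce (L₁ ++ M ++ G) := by
        apply reduce.Step.eq
        have := Red.Step.not (L₁ := L₁ ++ M) (L₂ := G) (x := y) (b := t)
        simpa using this
      rw [hstep]
      exact ih (h.infix ⟨[], [(y, t)], by simp⟩) hGM

/-- If `VV` is reduced with `V` at least as long as `x`, then the geodesic from `1` to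
`x V V x⁻¹` passes through `x V`. -/
theorem exists_prefix_toWord_conj [DecidableEq α] (x : FreeGroup α) {V : List (α × Bool)}
    (hV : IsReduced (V ++ V)) (hx : x.toWord.length ≤ V.length) :
    ∃ p, p <+: (x * (mk V * mk V) * x⁻¹).toWord ∧ mk p = x * mk V := by
  have hV' : IsReduced (invRev V ++ invRev V) := by
    rw [← invRev_append, isReduced_iff_reduce_eq, reduce_invRev, hV.reduce_eq]
  obtain ⟨q, hq⟩ := hV'.prefix_reduce_append (G := x⁻¹.toWord) (by simpa [toWord_inv] using hx)
  have hword : (x * (mk V * mk V)).toWord = invRev q ++ V := by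
    have : x * (mk V * mk V) = (mk (invRev V ++ invRev V ++ x⁻¹.toWord))⁻¹ := by
      rw [← mul_mk, ← mul_mk, mk_toWord, ← inv_mk]
      simp only [mul_inv_rev, inv_inv]
    rw [this, toWord_inv, toWord_mk, ← hq, invRev_append, invRev_invRev]
  refine ⟨invRev q, ?_, ?_⟩
  · rw [toWord_mul, hword]
    exact (hword ▸ isReduced_toWord).prefix_reduce_append (by simpa [toWord_inv] using hx)
  · have := congrArg mk hword
    rw [mk_toWord, ← mul_mk, ← mul_assoc] at this
    exact (mul_right_cancel this).symm

theorem mk_flatten_replicate (L : List (α × Bool)) (n : ℕ) :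
    mk (List.replicate n L).flatten = mk L ^ n := (pow_mk n).symm

theorem exists_finite_cosets_of_isCyclicallyReduced {H : Subgroup (FreeGroup α)}
    (hH : H.FG) {W : List (α × Bool)} (hW : IsCyclicallyReduced W) (hne : W ≠ []) :
    ∃ P : Set (FreeGroup α), P.Finite ∧ ∀ (x : FreeGroup α) (d : ℕ), 1 ≤ d →
      (x * mk W * x⁻¹) ^ d ∈ H → ∃ k ∈ H, ∃ p ∈ P, x = k * p := by
  classical
  obtain ⟨P, hP, hpre⟩ := exists_finite_prefixesIn_of_fg hH
  refine ⟨P, hP, fun x d hd hx => ?_⟩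
  set n := x.toWord.length
  set V := (List.replicate (d * n) W).flatten with hVdef
  have hmkV : mk V = mk W ^ (d * n) := mk_flatten_replicate W _
  have hV : IsReduced (V ++ V) := by
    have := (hW.flatten_replicate (d * n + d * n)).isReduced
    rwa [List.replicate_add, List.flatten_append] at this
  have hlen : n ≤ V.length := by
    have hpos : 1 ≤ W.length := List.length_pos_iff.2 hne
    have : V.length = d * n * W.length := by simp [hVdef]
    rw [this]
    nlinarith [Nat.mul_le_mul hd (le_refl n), Nat.mul_le_mul (le_refl (d * n)) hpos]
  obtain ⟨p, hp, hpx⟩ := exists_prefix_toWord_conj x hV hlen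
  have hxV : x * mk V = ((x * mk W * x⁻¹) ^ d) ^ n * x := by
    rw [hmkV, ← pow_mul, conj_pow]
    group
  have hmem : x * (mk V * mk V) * x⁻¹ ∈ H := by
    have : x * (mk V * mk V) * x⁻¹ = ((x * mk W * x⁻¹) ^ d) ^ n * ((x * mk W * x⁻¹) ^ d) ^ n := by
      rw [hmkV, ← pow_mul, conj_pow]
      group
    rw [this]
    exact H.mul_mem (H.pow_mem hx n) (H.pow_mem hx n)
  obtain ⟨k, hk, q, hq, hkq⟩ := hpre _ hmem p hp
  rw [hpx, hxV] at hkq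
  exact ⟨(((x * mk W * x⁻¹) ^ d) ^ n)⁻¹ * k, H.mul_mem (H.inv_mem (H.pow_mem hx n)) hk, q, hq, by
    rw [mul_assoc, ← hkq, inv_mul_cancel_left]⟩

theorem exists_finite_cosets_of_conj_pow_mem {H : Subgroup (FreeGroup α)} (hH : H.FG)
    {w : FreeGroup α} (hw : w ≠ 1) :
    ∃ P : Set (FreeGroup α), P.Finite ∧ ∀ (g : FreeGroup α) (d : ℕ), 1 ≤ d →
      (g * w * g⁻¹) ^ d ∈ H → ∃ k ∈ H, ∃ p ∈ P, g = k * p := by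
  classical
  set c := mk (reduceCyclically.conjugator w.toWord)
  set W := reduceCyclically w.toWord
  have hwc : w = c * mk W * c⁻¹ := by
    have := congrArg mk (reduceCyclically.conj_conjugator_reduceCyclically w.toWord)
    rw [mk_toWord, ← mul_mk, ← mul_mk, ← inv_mk] at this
    exact this.symm
  have hne : W ≠ [] := by
    intro h
    rw [h] at hwc
    exact hw (by rw [hwc, ← one_eq_mk, mul_one, mul_inv_cancel])
  obtain ⟨P, hP, h⟩ := exists_finite_cosets_of_isCyclicallyReduced hH
    (reduceCyclically.isCyclicallyReduced isReduced_toWord) hne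
  refine ⟨(· * c⁻¹) '' P, hP.image _, fun g d hd hg => ?_⟩
  have hconj : g * w * g⁻¹ = (g * c) * mk W * (g * c)⁻¹ := by
    rw [hwc]
    group
  rw [hconj] at hg
  obtain ⟨k, hk, p, hp, hkp⟩ := h (g * c) d hd hg
  exact ⟨k, hk, p * c⁻¹, ⟨p, hp, rfl⟩, by rw [← mul_assoc, ← hkp, mul_inv_cancel_right]⟩

end FreeGroup

/-- In a free group, only finitely many right cosets `H g` of a finitely generated subgroup `H`
have a finite orbit under a given nontrivial element `w`. -/
theorem IsFreeGroup.exists_finite_cosets_of_conj_pow_mem {F : Type*} [Group F] [IsFreeGroup F]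
    {H : Subgroup F} (hH : H.FG) {w : F} (hw : w ≠ 1) :
    ∃ P : Set F, P.Finite ∧ ∀ (g : F) (d : ℕ), 1 ≤ d →
      (g * w * g⁻¹) ^ d ∈ H → ∃ k ∈ H, ∃ p ∈ P, g = k * p := by
  let φ := IsFreeGroup.toFreeGroup F
  obtain ⟨P, hP, h⟩ := FreeGroup.exists_finite_cosets_of_conj_pow_mem
    (H := H.map φ.toMonoidHom)
    ((Subgroup.fg_iff_submonoid_fg _).2 (((Subgroup.fg_iff_submonoid_fg H).1 hH).map φ.toMonoidHom))
    (w := φ w) (by simpa using hw)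
  refine ⟨φ.symm '' P, hP.image _, fun g d hd hg => ?_⟩
  obtain ⟨_, ⟨k, hk, rfl⟩, p, hp, hkp⟩ := h (φ g) d hd ⟨_, hg, by simp⟩
  refine ⟨k, hk, φ.symm p, ⟨p, hp, rfl⟩, φ.injective ?_⟩
  simpa using hkp


/-- **Finiteness of elevations** (Lemma 3.9): if `F` is a free group, `w ∈ F` is
nontrivial and `H ≤ F` is finitely generated, then there are only finitely many
`H`-conjugacy classes of elevations of `w` to `H`. Here `u ∈ H` is an elevation of `w` of
degree `d ≥ 1` if `u = (g w g⁻¹)^d` for some `g ∈ F`, with `(g w g⁻¹)^e ∉ H` for all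
`1 ≤ e < d`. -/
theorem finitely_many_elevations
    (F : Type) [Group F] [IsFreeGroup F]
    (w : F) (hw : w ≠ 1) (H : Subgroup F) (hH : H.FG) :
    {c : ConjClasses ↥H | ∃ (u : ↥H) (d : ℕ) (g : F), ConjClasses.mk u = c ∧ 1 ≤ d ∧
      (u : F) = (g * w * g⁻¹) ^ d ∧
      ∀ e : ℕ, 1 ≤ e → e < d → (g * w * g⁻¹) ^ e ∉ H}.Finite := by
  obtain ⟨P, hP, hcos⟩ := IsFreeGroup.exists_finite_cosets_of_conj_pow_mem hH hw
  let E : F → Set (ConjClasses H) := fun p => {c | ∃ (u : H) (d : ℕ), ConjClasses.mk u = c ∧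
    1 ≤ d ∧ (u : F) = (p * w * p⁻¹) ^ d ∧ ∀ e : ℕ, 1 ≤ e → e < d → (p * w * p⁻¹) ^ e ∉ H}
  have hE : ∀ p, (E p).Subsingleton := by
    rintro p _ ⟨u, d, rfl, hd, hu, hmin⟩ _ ⟨u', d', rfl, hd', hu', hmin'⟩
    have hdd : d = d' := by
      rcases lt_trichotomy d d' with h | h | h
      · exact absurd (hu ▸ u.2) (hmin' d hd h)
      · exact h
      · exact absurd (hu' ▸ u'.2) (hmin d' hd' h)
    subst hdd
    rw [Subtype.ext (hu.trans hu'.symm)]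
  refine (hP.biUnion fun p _ => (hE p).finite).subset ?_
  rintro _ ⟨u, d, g, rfl, hd, hu, hmin⟩
  obtain ⟨k, hk, p, hp, rfl⟩ := hcos g d hd (hu ▸ u.2)
  have hconj : ∀ e : ℕ, (p * w * p⁻¹) ^ e = k⁻¹ * (k * p * w * (k * p)⁻¹) ^ e * k := by
    intro e
    rw [conj_pow, conj_pow]
    group
  refine Set.mem_biUnion hp ⟨⟨k, hk⟩⁻¹ * u * ⟨k, hk⟩, d, ?_, hd, ?_, fun e he hed hmem => ?_⟩
  · exact ConjClasses.mk_eq_mk_iff_isConj.2 (isConj_iff.2 ⟨⟨k, hk⟩, by group⟩)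
  · simp [hconj d, hu]
  · refine hmin e he hed ?_
    rw [hconj] at hmem
    simpa [mul_assoc] using H.mul_mem (H.mul_mem hk hmem) (H.inv_mem hk)
end

section
/- Let F be a finitely generated free group with a peripheral structure [w̲] = {[w_1]_F,…,[w_n]_F}, and let (K,[u̲]) ≤ (F,[w̲]) be a subpair with K finitely generated. Then there exists a finite-index subgroup F' ≤ F containing K such that, with [w̲'] the pull-back structure of [w̲] on F', the subpair (K,[u̲]) is embedded in (F',[w̲']): every class in [u̲] is a degree-1 elevation of a class in [w̲'], and distinct classes in [u̲] have distinct F'-conjugacy classes. -/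
/-- `u ∈ H` is a degree-`d` elevation of `w₀ ∈ F` to the subgroup `H`: `u = w₀^d` and no
smaller positive power of `w₀` lies in `H`. -/
def IsElevation {F : Type} [Group F] (H : Subgroup F) (d : ℕ) (u : ↥H) (w₀ : F) : Prop :=
  1 ≤ d ∧ (u : F) = w₀ ^ d ∧ ∀ e : ℕ, 1 ≤ e → e < d → w₀ ^ e ∉ H

/-- The `H`-conjugacy class `cu` is a degree-`d` elevation of the `F`-conjugacy class
`cw`: some representative of `cu` is the `d`-th power of some representative of `cw`,
minimally so. -/
def IsClassElevation {F : Type} [Group F] (H : Subgroup F) (d : ℕ)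
    (cu : ConjClasses ↥H) (cw : ConjClasses F) : Prop :=
  ∃ (u : ↥H) (w₀ : F), ConjClasses.mk u = cu ∧ ConjClasses.mk w₀ = cw ∧
    IsElevation H d u w₀

/-- Relative version: for subgroups `K' ≤ K` of `F`, the `K'`-class `cu` is a degree-`d`
elevation of the `K`-class `cw`. -/
def IsClassElevationIn {F : Type} [Group F] {K' K : Subgroup F} (_h : K' ≤ K) (d : ℕ)
    (cu : ConjClasses ↥K') (cw : ConjClasses ↥K) : Prop :=
  ∃ (u : ↥K') (w₀ : ↥K), ConjClasses.mk u = cu ∧ ConjClasses.mk w₀ = cw ∧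
    IsElevation K' d u (w₀ : F)

/-- `(H, U)` is a subpair of `(F, W)`: every class in `U` is an elevation of a class
in `W`. -/
def IsSubpair {F : Type} [Group F] (H : Subgroup F)
    (U : Set (ConjClasses ↥H)) (W : Set (ConjClasses F)) : Prop :=
  ∀ c ∈ U, ∃ (d : ℕ) (cw : ConjClasses F), cw ∈ W ∧ IsClassElevation H d c cw

/-- The pull-back structure of `W` on the subgroup `H ≤ F`: the set of all elevations of
classes of `W` to `H`. -/
def pullbackStructure {F : Type} [Group F] (H : Subgroup F) (W : Set (ConjClasses F)) :
    Set (ConjClasses ↥H) :=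
  {c | ∃ (d : ℕ) (cw : ConjClasses F), cw ∈ W ∧ IsClassElevation H d c cw}

/-- The pull-back structure on `K' ≤ K` of a peripheral structure `U` on `K`. -/
def pullbackStructureIn {F : Type} [Group F] {K' K : Subgroup F} (h : K' ≤ K)
    (U : Set (ConjClasses ↥K)) : Set (ConjClasses ↥K') :=
  {c | ∃ (d : ℕ) (cu : ConjClasses ↥K), cu ∈ U ∧ IsClassElevationIn h d c cu}

/-- `(K, U)` is an embedded subpair of `(H, W)` (for subgroups `K ≤ H` of `F`): every
class of `U` is a degree-1 elevation of a class of `W` (equivalently, its `H`-class lies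
in `W`), injectively. -/
def IsEmbeddedSubpair {F : Type} [Group F] {K H : Subgroup F} (h : K ≤ H)
    (U : Set (ConjClasses ↥K)) (W : Set (ConjClasses ↥H)) : Prop :=
  (∀ c ∈ U, ConjClasses.map (Subgroup.inclusion h) c ∈ W) ∧
  Set.InjOn (ConjClasses.map (Subgroup.inclusion h)) U

/-- `(K, U)` is an embedded subpair of `(F, W)` for the ambient group `F`. -/
def IsEmbeddedSubpairTop {F : Type} [Group F] (K : Subgroup F)
    (U : Set (ConjClasses ↥K)) (W : Set (ConjClasses F)) : Prop :=
  (∀ c ∈ U, ConjClasses.map K.subtype c ∈ W) ∧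
  Set.InjOn (ConjClasses.map K.subtype) U

/-- The partial action of a group element on a finite subset extends to a permutation. -/
theorem MulAction.exists_perm_extending_smul {G X : Type*} [Group G] [MulAction G X]
    {S : Set X} (hS : S.Finite) (g : G) :
    ∃ σ : Equiv.Perm S, ∀ s t : S, g • (s : X) = t → σ s = t := by
  classical
  have := hS.fintype
  let e : {s : S // g • (s : X) ∈ S} ≃ {t : S // g⁻¹ • (t : X) ∈ S} :=
    { toFun := fun s => ⟨⟨g • (s.1 : X), s.2⟩, by simp⟩
      invFun := fun t => ⟨⟨g⁻¹ • (t.1 : X), t.2⟩, by simp⟩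
      left_inv := fun s => by simp
      right_inv := fun t => by simp }
  refine ⟨e.extendSubtype, fun s t h => ?_⟩
  have hs : g • (s : X) ∈ S := h ▸ t.2
  rw [e.extendSubtype_apply_of_mem s hs]
  exact Subtype.ext h

namespace FreeGroup

variable {α X : Type*}

/-- A central element of a free group on at least two generators is trivial. -/
theorem eq_one_of_forall_commute_of [Nontrivial α] {u : FreeGroup α}
    (hu : ∀ a, Commute (of a) u) : u = 1 := by
  classical
  rcases hL : u.toWord with _ | ⟨⟨x, b⟩, L⟩
  · exact toWord_eq_nil_iff.mp hL
  exfalso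
  obtain ⟨y, hy⟩ := exists_ne x
  have hred : IsReduced ((x, b) :: L) := hL ▸ isReduced_toWord
  have hleft : (of y * u).toWord = (y, true) :: (x, b) :: L := by
    rw [toWord_mul, toWord_of, hL, List.singleton_append]
    exact IsReduced.reduce_eq (isReduced_cons_cons.mpr ⟨fun h => absurd h hy, hred⟩)
  have hsub := toWord_mul_sublist u (of y)
  rw [← (hu y).eq, hleft, hL, toWord_of] at hsub
  have heq := hsub.eq_of_length (by simp)
  simp only [List.cons_append, List.cons.injEq, Prod.mk.injEq] at heq
  exact hy heq.1.1

/-- Finitely many elements of a free group acting on a pointed set act on the base point as they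
do in some action on a finite pointed set. -/
theorem exists_finite_action_of_finite [MulAction (FreeGroup α) X] (o : X)
    {T : Set (FreeGroup α)} (hT : T.Finite) :
    ∃ (S : Set X) (_ : Finite S) (φ : FreeGroup α →* Equiv.Perm S) (o' : S),
      ∀ t ∈ T, φ t o' = o' ↔ t • o = o := by
  classical
  let S : Set X := insert o (⋃ t ∈ T, (fun L => mk L • o) '' {L | L ∈ t.toWord.tails})
  have hS : S.Finite :=
    (hT.biUnion fun t _ => (List.finite_toSet t.toWord.tails).image _).insert o
  choose σ hσ using fun a : α => MulAction.exists_perm_extending_smul hS (of a)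
  have ho : o ∈ S := Set.mem_insert _ _
  have key : ∀ L : List (α × Bool), (∀ L', L' <:+ L → mk L' • o ∈ S) →
      (lift σ (mk L) ⟨o, ho⟩ : X) = mk L • o := by
    intro L
    induction L with
    | nil => intro _; simp [← one_eq_mk]
    | cons p L ih =>
      intro h
      have hL := ih fun L' hL' => h L' (hL'.trans (List.suffix_cons p L))
      have hmem : mk (p :: L) • o ∈ S := h _ List.suffix_rfl
      have hsplit : mk (p :: L) = mk [p] * mk L := by rw [mul_mk, List.singleton_append]
      rw [hsplit, mul_smul] at hmem
      rw [hsplit, _root_.map_mul, Equiv.Perm.mul_apply, mul_smul]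
      obtain ⟨a, _ | _⟩ := p
      · have hinv : mk [(a, false)] = (of a)⁻¹ := by simp [of, invRev]
        rw [hinv] at hmem ⊢
        rw [_root_.map_inv, lift_apply_of]
        have := hσ a ⟨(of a)⁻¹ • mk L • o, hmem⟩ (lift σ (mk L) ⟨o, ho⟩) (by rw [hL, smul_inv_smul])
        rw [← this]
        simp
      · change ((lift σ (of a)) _ : X) = of a • mk L • o
        rw [lift_apply_of]
        rw [hσ a (lift σ (mk L) ⟨o, ho⟩) ⟨of a • mk L • o, hmem⟩ (by rw [hL])]
  refine ⟨S, hS, lift σ, ⟨o, ho⟩, fun t ht => ?_⟩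
  have := key t.toWord fun L' hL' => Set.mem_insert_of_mem _ <|
    Set.mem_biUnion ht ⟨L', (List.mem_tails _ _).mpr hL', rfl⟩
  rw [mk_toWord] at this
  rw [Subtype.ext_iff, this]

end FreeGroup

namespace IsFreeGroup

variable {F : Type*} [Group F] [IsFreeGroup F]

/-- **Marshall Hall's theorem**: finitely generated subgroups of free groups are separable. -/
theorem exists_finiteIndex_ge_disjoint {K : Subgroup F} (hK : K.FG) {T : Set F} (hT : T.Finite)
    (hKT : ∀ t ∈ T, t ∉ K) :
    ∃ F' : Subgroup F, K ≤ F' ∧ F'.FiniteIndex ∧ ∀ t ∈ T, t ∉ F' := by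
  obtain ⟨A, rfl⟩ := hK
  let e := mulEquiv F
  let _ : MulAction (FreeGroup (Generators F)) (F ⧸ Subgroup.closure (A : Set F)) :=
    MulAction.compHom _ e.toMonoidHom
  have hsmul : ∀ g : F, e.symm g • ((1 : F) : F ⧸ Subgroup.closure (A : Set F)) = (1 : F) ↔
      g ∈ Subgroup.closure (A : Set F) := by
    intro g
    change e (e.symm g) • ((1 : F) : F ⧸ Subgroup.closure (A : Set F)) = (1 : F) ↔ _
    rw [e.apply_symm_apply, MulAction.Quotient.smul_coe, smul_eq_mul, mul_one, eq_comm,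
      QuotientGroup.eq]
    simp
  obtain ⟨S, hS, φ, o', h⟩ := FreeGroup.exists_finite_action_of_finite
    ((1 : F) : F ⧸ Subgroup.closure (A : Set F))
    ((A.finite_toSet.union hT).image e.symm)
  let F' : Subgroup F :=
    (MulAction.stabilizer (Equiv.Perm S) o').comap (φ.comp e.symm.toMonoidHom)
  have hF' : ∀ g ∈ (A : Set F) ∪ T, g ∈ F' ↔ g ∈ Subgroup.closure (A : Set F) := fun g hg =>
    (h _ (Set.mem_image_of_mem _ hg)).trans (hsmul g)
  refine ⟨F', ?_, ?_, fun t ht => ?_⟩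
  · rw [Subgroup.closure_le]
    exact fun a ha => (hF' a (Or.inl ha)).mpr (Subgroup.subset_closure ha)
  · exact Subgroup.finiteIndex_of_le (Subgroup.ker_le_comap (φ.comp e.symm.toMonoidHom) _)
  · exact fun hmem => hKT t ht ((hF' t (Or.inr ht)).mp hmem)

/-- A free group with a nontrivial central element is cyclic. -/
theorem isCyclic_of_forall_commute {u : F} (hu : u ≠ 1) (hcomm : ∀ g, Commute g u) :
    IsCyclic F := by
  let e := mulEquiv F
  rcases subsingleton_or_nontrivial (Generators F) with hs | hn
  · have : IsCyclic (FreeGroup (Generators F)) := by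
      rcases isEmpty_or_nonempty (Generators F) with he | ⟨⟨x⟩⟩
      · infer_instance
      · have := uniqueOfSubsingleton x
        infer_instance
    exact e.isCyclic.mp this
  · refine absurd ?_ hu
    have : e.symm u = 1 := FreeGroup.eq_one_of_forall_commute_of fun a => by
      simpa using (hcomm (e (FreeGroup.of a))).map e.symm
    simpa using this

/-- The cyclic group generated by a nontrivial element of a free group has finite index in the
centralizer of that element. -/
theorem exists_finite_centralizer_cosets {u : F} (hu : u ≠ 1) :
    ∃ R : Set F, R.Finite ∧ ∀ g, Commute g u → ∃ r ∈ R, ∃ n : ℤ, g = r * u ^ n := by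
  let C := Subgroup.centralizer ({u} : Set F)
  have huC : u ∈ C := Subgroup.mem_centralizer_singleton_iff.mpr rfl
  have : IsCyclic C := isCyclic_of_forall_commute (u := (⟨u, huC⟩ : C))
    (fun h => hu (congrArg Subtype.val h))
    fun g => Subtype.ext (Subgroup.mem_centralizer_singleton_iff.mp g.2)
  obtain ⟨z, hz⟩ := IsCyclic.exists_generator (α := C)
  obtain ⟨m, hm⟩ := hz ⟨u, huC⟩
  have hm' : (z : F) ^ m = u := by simpa using congrArg Subtype.val hm
  have hm0 : m ≠ 0 := by
    rintro rfl
    exact hu (by simpa using hm'.symm)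
  refine ⟨(fun i : ℤ => (z : F) ^ i) '' Set.Ico 0 |m|, (Set.finite_Ico _ _).image _,
    fun g hg => ?_⟩
  obtain ⟨k, hk⟩ := hz ⟨g, Subgroup.mem_centralizer_singleton_iff.mpr hg⟩
  have hk' : (z : F) ^ k = g := by simpa using congrArg Subtype.val hk
  refine ⟨_, ⟨k % m, ⟨Int.emod_nonneg k hm0, Int.emod_lt_abs k hm0⟩, rfl⟩, k / m, ?_⟩
  simp only
  rw [← hm', ← zpow_mul, ← zpow_add, Int.emod_add_mul_ediv, hk']

instance : IsMulTorsionFree F :=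
  (mulEquiv F).symm.injective.isMulTorsionFree (mulEquiv F).symm.toMonoidHom

/-- Distinct `K`-conjugacy classes stay distinct in every larger subgroup avoiding a suitable
finite set. -/
theorem exists_finite_separating_classes {K : Subgroup F} {c c' : ConjClasses K} (hc : c ≠ 1)
    (hne : c ≠ c') :
    ∃ T : Set F, T.Finite ∧ (∀ t ∈ T, t ∉ K) ∧ ∀ (F' : Subgroup F) (h : K ≤ F'),
      (∀ t ∈ T, t ∉ F') →
        ConjClasses.map (Subgroup.inclusion h) c ≠ ConjClasses.map (Subgroup.inclusion h) c' := by
  induction c using Quotient.inductionOn with | _ u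
  induction c' using Quotient.inductionOn with | _ u'
  change ConjClasses.mk u ≠ ConjClasses.mk 1 at hc
  change ConjClasses.mk u ≠ ConjClasses.mk u' at hne
  have hu : (u : F) ≠ 1 := fun h => hc (congrArg ConjClasses.mk (Subtype.ext h))
  by_cases hconj : ∃ g₀ : F, g₀ * u * g₀⁻¹ = u'
  · obtain ⟨g₀, hg₀⟩ := hconj
    obtain ⟨R, hR, hRu⟩ := exists_finite_centralizer_cosets hu
    refine ⟨((g₀ * ·) '' R) \ K, (hR.image _).sdiff, fun t ht => ht.2, fun F' h hF' heq => ?_⟩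
    obtain ⟨g, hg⟩ := isConj_iff.mp (ConjClasses.mk_eq_mk_iff_isConj.mp heq)
    have hg' : (g : F) * u * (g : F)⁻¹ = u' := congrArg Subtype.val hg
    have hcomm : Commute (g₀⁻¹ * g) (u : F) := by
      have : g₀⁻¹ * (g₀ * u * g₀⁻¹) = g₀⁻¹ * (g * u * (g : F)⁻¹) := by rw [hg₀, hg']
      rw [commute_iff_eq]
      calc g₀⁻¹ * g * u = g₀⁻¹ * (g * u * (g : F)⁻¹) * g := by group
        _ = u * (g₀⁻¹ * g) := by rw [← this]; group
    obtain ⟨r, hr, n, hn⟩ := hRu _ hcomm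
    have hgr : g₀ * r = g * ((u : F) ^ n)⁻¹ := by
      rw [← mul_inv_eq_iff_eq_mul.mpr hn]; group
    have hgrF' : g₀ * r ∈ F' := by
      rw [hgr]
      exact F'.mul_mem g.2 (F'.inv_mem (F'.zpow_mem (h u.2) n))
    by_cases hgrK : g₀ * r ∈ K
    · have hgK : (g : F) ∈ K := by
        rw [eq_mul_inv_iff_mul_eq] at hgr
        rw [← hgr]
        exact K.mul_mem hgrK (K.zpow_mem u.2 n)
      refine hne (ConjClasses.mk_eq_mk_iff_isConj.mpr (isConj_iff.mpr ⟨⟨g, hgK⟩, ?_⟩))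
      exact Subtype.ext hg'
    · exact hF' _ ⟨⟨r, hr, rfl⟩, hgrK⟩ hgrF'
  · refine ⟨∅, Set.finite_empty, by simp, fun F' h _ heq => hconj ?_⟩
    obtain ⟨g, hg⟩ := isConj_iff.mp (ConjClasses.mk_eq_mk_iff_isConj.mp heq)
    exact ⟨g, congrArg Subtype.val hg⟩

end IsFreeGroup

/-- An elevation to `K` stays an elevation of the same degree to every larger subgroup avoiding a
suitable finite set. -/
theorem IsClassElevation.exists_finite_mem_pullbackStructure {F : Type} [Group F] {K : Subgroup F}
    {d : ℕ} {c : ConjClasses K} {cw : ConjClasses F} {W : Set (ConjClasses F)} (hcw : cw ∈ W)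
    (hc : IsClassElevation K d c cw) :
    ∃ T : Set F, T.Finite ∧ (∀ t ∈ T, t ∉ K) ∧ ∀ (F' : Subgroup F) (h : K ≤ F'),
      (∀ t ∈ T, t ∉ F') →
        ConjClasses.map (Subgroup.inclusion h) c ∈ pullbackStructure F' W := by
  obtain ⟨u, w₀, rfl, rfl, hd, huw, hmin⟩ := hc
  refine ⟨(w₀ ^ ·) '' Set.Ico 1 d, (Set.finite_Ico _ _).image _, ?_, fun F' h hF' => ?_⟩
  · rintro _ ⟨e, he, rfl⟩
    exact hmin e he.1 he.2
  · exact ⟨d, _, hcw, Subgroup.inclusion h u, w₀, rfl, rfl, hd, huw,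
      fun e h1 h2 => hF' _ ⟨e, ⟨h1, h2⟩, rfl⟩⟩

/-- Elevations of nontrivial classes in a free group are nontrivial. -/
theorem IsClassElevation.ne_one {F : Type} [Group F] [IsFreeGroup F] {K : Subgroup F}
    {d : ℕ} {c : ConjClasses K} {cw : ConjClasses F} (hcw : cw ≠ 1)
    (hc : IsClassElevation K d c cw) : c ≠ 1 := by
  obtain ⟨u, w₀, rfl, rfl, hd, huw, -⟩ := hc
  intro h
  have hu : u = 1 := by
    simpa using ConjClasses.mk_eq_mk_iff_isConj.mp (h.trans ConjClasses.one_eq_mk_one)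
  rw [hu, Subgroup.coe_one, eq_comm, pow_eq_one_iff_left (by omega)] at huw
  exact hcw (by rw [huw, ConjClasses.one_eq_mk_one])

/-- **Subpairs embed into finite-index pull-back pairs** (Lemma 3.14, via Marshall Hall's
theorem): every subpair `(K, U)` of a pair `(F, W)` with `K` finitely generated embeds in
the pull-back pair on some finite-index subgroup `F' ≤ F` containing `K`. -/
theorem subpair_embeds_into_finite_index_pullback
    (F : Type) [Group F] [IsFreeGroup F] (hF : Group.FG F)
    (W : Set (ConjClasses F)) (hWfin : W.Finite) (hWone : ∀ c ∈ W, c ≠ 1)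
    (K : Subgroup F) (hK : K.FG)
    (U : Set (ConjClasses ↥K)) (hUfin : U.Finite)
    (hUsub : IsSubpair K U W) :
    ∃ (F' : Subgroup F) (h : K ≤ F'), F'.FiniteIndex ∧
      IsEmbeddedSubpair h U (pullbackStructure F' W) := by
  have hpull : ∀ c : U, ∃ T : Set F, T.Finite ∧ (∀ t ∈ T, t ∉ K) ∧
      ∀ (F' : Subgroup F) (h : K ≤ F'), (∀ t ∈ T, t ∉ F') →
        ConjClasses.map (Subgroup.inclusion h) c.1 ∈ pullbackStructure F' W := by
    rintro ⟨c, hc⟩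
    obtain ⟨d, cw, hcw, hel⟩ := hUsub c hc
    exact hel.exists_finite_mem_pullbackStructure hcw
  have hsep : ∀ p : U.offDiag, ∃ T : Set F, T.Finite ∧ (∀ t ∈ T, t ∉ K) ∧
      ∀ (F' : Subgroup F) (h : K ≤ F'), (∀ t ∈ T, t ∉ F') →
        ConjClasses.map (Subgroup.inclusion h) p.1.1 ≠
          ConjClasses.map (Subgroup.inclusion h) p.1.2 := by
    rintro ⟨⟨c, c'⟩, hc, hc', hne⟩
    obtain ⟨d, cw, hcw, hel⟩ := hUsub c hc
    exact IsFreeGroup.exists_finite_separating_classes (hel.ne_one (hWone cw hcw)) hne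
  choose T₁ hfin₁ hK₁ hpull using hpull
  choose T₂ hfin₂ hK₂ hsep using hsep
  have := hUfin.to_subtype
  have := hUfin.offDiag.to_subtype
  obtain ⟨F', h, hindex, hF'⟩ := IsFreeGroup.exists_finiteIndex_ge_disjoint hK
    (T := (⋃ c, T₁ c) ∪ ⋃ p, T₂ p)
    ((Set.finite_iUnion hfin₁).union (Set.finite_iUnion hfin₂)) (by
      rintro t (ht | ht) <;> obtain ⟨i, hi⟩ := Set.mem_iUnion.mp ht
      · exact hK₁ i t hi
      · exact hK₂ i t hi)
  refine ⟨F', h, hindex, fun c hc => ?_, fun c hc c' hc' heq => ?_⟩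
  · exact hpull ⟨c, hc⟩ F' h fun t ht => hF' t (Or.inl (Set.mem_iUnion_of_mem _ ht))
  · by_contra hne
    exact hsep ⟨(c, c'), hc, hc', hne⟩ F' h
      (fun t ht => hF' t (Or.inr (Set.mem_iUnion_of_mem _ ht))) heq
end

section
/- Let F be a free group with peripheral structure [w̲] = {[w_1]_F,…,[w_n]_F} such that no representative of any class in [w̲] is a proper power in F, and suppose (K,[u̲]) ↪ (F,[w̲]) is an embedded subpair. Let F' ≤ F be a finite-index subgroup, set K' = K ∩ F', and let [w̲'] and [u̲'] be the pull-back structures of [w̲] on F' and of [u̲] on K', respectively. Then (K',[u̲']) ↪ (F',[w̲']) is an embedded subpair. -/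
namespace FreeGroup

variable {α : Type*}

/-- The center of a free group of rank at least two is trivial. -/
theorem eq_one_of_forall_commute [Nontrivial α] {z : FreeGroup α}
    (hz : ∀ g, Commute z g) : z = 1 := by
  classical
  by_contra hne
  have hnil : z.toWord ≠ [] := by rwa [Ne, toWord_eq_nil_iff]
  obtain ⟨x, L, hx⟩ := List.exists_cons_of_ne_nil hnil
  obtain ⟨M, y, hy⟩ := List.eq_nil_or_concat z.toWord |>.resolve_left hnil
  obtain ⟨c, hc⟩ := exists_ne x.1
  -- a letter that cancels on neither side of the reduced word of `z`
  let s : α × Bool := (c, y.2)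
  have hred : IsReduced z.toWord := isReduced_toWord
  have hleft : (mk [s] * z).toWord = s :: z.toWord := by
    rw [toWord_mul, toWord_mk, reduce_singleton]
    refine IsReduced.reduce_eq ?_
    rw [hx] at hred ⊢
    exact List.isChain_cons_cons.2 ⟨fun h => (hc h).elim, hred⟩
  have hright : (z * mk [s]).toWord = z.toWord ++ [s] := by
    rw [toWord_mul, toWord_mk, reduce_singleton]
    refine IsReduced.reduce_eq ?_
    rw [hy] at hred ⊢
    refine List.isChain_append.2 ⟨hred, by simp, ?_⟩
    simp [s]
  have heq : s :: z.toWord = z.toWord ++ [s] := by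
    rw [← hleft, ← hright, (hz (mk [s])).eq]
  rw [hx, List.cons_append, List.cons.injEq] at heq
  exact hc (congrArg Prod.fst heq.1)

end FreeGroup

namespace IsFreeGroup

variable {G : Type*} [Group G] [IsFreeGroup G]

theorem isMulTorsionFree : IsMulTorsionFree G :=
  (toFreeGroup G).injective.isMulTorsionFree (toFreeGroup G).toMonoidHom

/-- A free group with a nontrivial central element is cyclic. -/
theorem isCyclic_of_forall_commute_s9 {z : G} (hne : z ≠ 1) (hz : ∀ g, Commute z g) :
    IsCyclic G := by
  rcases subsingleton_or_nontrivial (Generators G) with _ | _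
  · rcases isEmpty_or_nonempty (Generators G) with _ | ⟨⟨a⟩⟩
    · have : Subsingleton G := (toFreeGroup G).toEquiv.subsingleton
      infer_instance
    · have : Unique (Generators G) := uniqueOfSubsingleton a
      exact isCyclic_of_surjective (mulEquiv G) (mulEquiv G).surjective
  · refine absurd ?_ hne
    rw [← map_eq_one_iff (toFreeGroup G) (toFreeGroup G).injective]
    refine FreeGroup.eq_one_of_forall_commute fun g => ?_
    simpa using (hz ((toFreeGroup G).symm g)).map (toFreeGroup G)

/-- Centralizers of nontrivial elements of a free group are cyclic. -/
theorem isCyclic_centralizer {z : G} (hne : z ≠ 1) :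
    IsCyclic (Subgroup.centralizer {z}) := by
  refine isCyclic_of_forall_commute_s9
    (z := ⟨z, Subgroup.mem_centralizer_singleton_iff.2 rfl⟩)
    (fun h => hne (congrArg Subtype.val h)) fun g => Subtype.ext ?_
  exact (Subgroup.mem_centralizer_singleton_iff.1 g.2).symm

/-- If `w` is not a proper power and commutes with `z ≠ 1`, then the centralizer of `z` is
contained in the cyclic subgroup generated by `w`. -/
theorem mem_zpowers_of_commute {w z h : G} (hw : ¬∃ (y : G) (d : ℕ), 2 ≤ d ∧ w = y ^ d)
    (hne : z ≠ 1) (hwz : Commute w z) (hhz : Commute h z) : h ∈ Subgroup.zpowers w := by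
  obtain ⟨⟨g, _⟩, hg⟩ := (isCyclic_centralizer hne).exists_generator
  have key : ∀ k : G, Commute k z → ∃ n : ℤ, g ^ n = k := fun k hk => by
    obtain ⟨n, hn⟩ := hg ⟨k, Subgroup.mem_centralizer_singleton_iff.2 hk.eq⟩
    exact ⟨n, by simpa using congrArg Subtype.val hn⟩
  obtain ⟨a, rfl⟩ := key w hwz
  obtain ⟨b, rfl⟩ := key h hhz
  have ha : a.natAbs = 1 := by
    by_contra hcon
    rcases Nat.lt_or_gt_of_ne hcon with h0 | h2
    · exact hw ⟨1, 2, le_rfl, by simp [Int.natAbs_eq_zero.1 (Nat.lt_one_iff.1 h0)]⟩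
    · rcases Int.natAbs_eq a with h | h
      · exact hw ⟨g, a.natAbs, h2, by rw [← zpow_natCast, ← h]⟩
      · exact hw ⟨g⁻¹, a.natAbs, h2, by rw [← zpow_natCast, inv_zpow', ← h]⟩
  rcases Int.natAbs_eq_natAbs_iff.1 (ha.trans Int.natAbs_one.symm) with rfl | rfl
  · exact ⟨b, by simp⟩
  · exact ⟨-b, by simp⟩

/-- Roots in a free group are unique: if two elements that are not proper powers have a common
positive power, then they are equal. -/
theorem eq_of_pow_eq_pow {x y : G} {m n : ℕ} (hx : ¬∃ (g : G) (d : ℕ), 2 ≤ d ∧ x = g ^ d)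
    (hy : ¬∃ (g : G) (d : ℕ), 2 ≤ d ∧ y = g ^ d) (hm : 1 ≤ m)
    (h : x ^ m = y ^ n) : x = y := by
  have := isMulTorsionFree (G := G)
  have hx1 : x ≠ 1 := by
    rintro rfl
    exact hx ⟨1, 2, le_rfl, by simp⟩
  have hne : x ^ m ≠ 1 := fun h1 => hx1 ((pow_eq_one_iff_left (by lia)).1 h1)
  obtain ⟨a, rfl⟩ := mem_zpowers_of_commute hx hne (Commute.self_pow x m)
    (h ▸ Commute.self_pow y n)
  have hma : (m : ℤ) = a * n := by
    refine injective_zpow_iff_not_isOfFinOrder.2 (not_isOfFinOrder_of_isMulTorsionFree hx1) ?_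
    simpa [zpow_mul] using h
  have ha : 0 < a := by
    by_contra hneg
    nlinarith
  lift a to ℕ using ha.le
  have ha2 : ¬2 ≤ a := fun h2 => hy ⟨x, a, h2, by simp⟩
  obtain rfl : a = 1 := by lia
  simp

end IsFreeGroup

/-- **Embedded subpairs persist in finite-index pull-backs** (Lemma 3.15): if no class of
`W` is represented by a proper power and `(K, U)` is an embedded subpair of `(F, W)`,
then for any finite-index subgroup `F' ≤ F`, setting `K' = K ⊓ F'`, the pull-back of `U`
on `K'` is an embedded subpair of the pull-back of `W` on `F'`. -/
theorem embedded_subpair_finite_index_pullback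
    (F : Type) [Group F] [IsFreeGroup F]
    (W : Set (ConjClasses F)) (hWfin : W.Finite) (hWone : ∀ c ∈ W, c ≠ 1)
    (hWnp : ∀ c ∈ W, ∀ w₀ : F, ConjClasses.mk w₀ = c →
      ¬∃ (y : F) (d : ℕ), 2 ≤ d ∧ w₀ = y ^ d)
    (K : Subgroup F) (U : Set (ConjClasses ↥K)) (hUfin : U.Finite)
    (hemb : IsEmbeddedSubpairTop K U W)
    (F' : Subgroup F) (hF' : F'.FiniteIndex) :
    IsEmbeddedSubpair (inf_le_right : K ⊓ F' ≤ F')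
      (pullbackStructureIn (inf_le_left : K ⊓ F' ≤ K) U)
      (pullbackStructure F' W) := by
  have hpow : ∀ w : K, ConjClasses.mk w ∈ U → ¬∃ (y : F) (d : ℕ), 2 ≤ d ∧ (w : F) = y ^ d :=
    fun w hw => hWnp _ (hemb.1 _ hw) _ rfl
  refine ⟨?_, ?_⟩
  · rintro _ ⟨d, _, hU, u, w, rfl, rfl, hd, hu, hmin⟩
    exact ⟨d, _, hemb.1 _ hU, Subgroup.inclusion inf_le_right u, w, rfl, rfl, hd, hu,
      fun e he hed hmem => hmin e he hed ⟨K.pow_mem w.2 e, hmem⟩⟩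
  · rintro _ ⟨d₁, _, hU₁, u₁, w₁, rfl, rfl, hd₁, hu₁, -⟩
      _ ⟨d₂, _, hU₂, u₂, w₂, rfl, rfl, -, hu₂, -⟩ heq
    obtain ⟨f, hf⟩ := isConj_iff.1 (ConjClasses.mk_eq_mk_iff_isConj.1 heq)
    have hfu : (f : F) * u₁ * (f : F)⁻¹ = u₂ := congrArg Subtype.val hf
    have hnp : ¬∃ (y : F) (d : ℕ), 2 ≤ d ∧ (f : F) * w₁ * (f : F)⁻¹ = y ^ d :=
      hWnp _ (hemb.1 _ hU₁) _ (ConjClasses.mk_eq_mk_iff_isConj.2 (isConj_iff.2 ⟨(f : F), rfl⟩).symm)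
    have hfw : (f : F) * w₁ * (f : F)⁻¹ = w₂ :=
      IsFreeGroup.eq_of_pow_eq_pow hnp (hpow w₂ hU₂) hd₁ (by rw [conj_pow, ← hu₁, hfu, hu₂])
    obtain ⟨k, hk⟩ := isConj_iff.1 <| ConjClasses.mk_eq_mk_iff_isConj.1 <| hemb.2 hU₁ hU₂ <|
      ConjClasses.mk_eq_mk_iff_isConj.2 (isConj_iff.2 ⟨(f : F), hfw⟩)
    have hkw : (k : F) * w₁ * (k : F)⁻¹ = w₂ := congrArg Subtype.val hk
    have hne : (w₁ : F) ≠ 1 := fun h1 => hpow w₁ hU₁ ⟨1, 2, le_rfl, by simp [h1]⟩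
    have hcomm : Commute ((k : F)⁻¹ * f) w₁ := by
      have : (f : F) * w₁ = k * w₁ * (k : F)⁻¹ * f := by rw [hkw, ← hfw]; group
      rw [commute_iff_eq, mul_assoc, this]
      group
    obtain ⟨n, hn⟩ := IsFreeGroup.mem_zpowers_of_commute (hpow w₁ hU₁) hne (Commute.refl _) hcomm
    have hfK : (f : F) ∈ K := by
      rw [eq_inv_mul_iff_mul_eq] at hn
      exact hn ▸ K.mul_mem k.2 (K.zpow_mem w₁.2 n)
    exact ConjClasses.mk_eq_mk_iff_isConj.2
      (isConj_iff.2 ⟨⟨f, hfK, f.2⟩, Subtype.ext hfu⟩)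
end

section
/- Let F be a finitely generated free group, let w ∈ F be a primitive element (a member of some free basis of F), and let F' ≤ F be a finite-index subgroup. Let [u_1]_{F'}, …, [u_k]_{F'} be the (finitely many, pairwise distinct) F'-conjugacy classes of elevations of w to F'. Then representatives u_1, …, u_k of these classes can be chosen so that {u_1, …, u_k} extends to a free basis of F'; that is, there is a free basis of the (free) group F' containing u_1, …, u_k. -/
/-- The elements of a free basis generate the group. -/
theorem FreeGroupBasis.closure_range {ι G : Type*} [Group G] (b : FreeGroupBasis ι G) :
    Subgroup.closure (Set.range b) = ⊤ := by
  have h : Set.range b =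
      Set.image b.repr.symm.toMonoidHom (Set.range (FreeGroup.of : ι → FreeGroup ι)) := by
    rw [← Set.range_comp]; rfl
  rw [h, ← MonoidHom.map_closure, FreeGroup.closure_range_of, ← MonoidHom.range_eq_map]
  exact MonoidHom.range_eq_top.2 b.repr.symm.surjective

theorem FreeGroupBasis.coe_ofUniqueLift {G : Type*} [Group G] (X : Type _) (of : X → G)
    (h : ∀ {H : Type _} [Group H] (f : X → H), ∃! φ : G →* H, ∀ a, φ (of a) = f a) (x : X) :
    FreeGroupBasis.ofUniqueLift X of h x = of x :=
  FreeGroup.lift_apply_of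

section FreeAction

variable {F A ι : Type} [Group F] [MulAction F A] (b : FreeGroupBasis ι F)

/-- A labelling of the edges `a → b i • a` of the Schreier graph extends to a cocycle. -/
theorem FreeGroupBasis.exists_cocycle {X : Type} [Group X] (f : A → ι → X) :
    ∃ c : A → F → X, (∀ a g h, c a (g * h) = c (h • a) g * c a h) ∧ ∀ a i, c a (b i) = f a i := by
  let Φ : F →* (A → X) ⋊[mulAutArrow] F :=
    b.lift fun i => ⟨fun a => f ((b i)⁻¹ • a) i, b i⟩
  have hb : ∀ i, Φ (b i) = ⟨fun a => f ((b i)⁻¹ • a) i, b i⟩ := fun i =>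
    congr_fun (b.lift.symm_apply_apply _) i
  have hright : SemidirectProduct.rightHom.comp Φ = MonoidHom.id F :=
    b.ext_hom _ _ fun i => by simp [hb]
  have hr : ∀ g, (Φ g).right = g := fun g => DFunLike.congr_fun hright g
  refine ⟨fun a g => (Φ g).left (g • a), fun a g h => ?_, fun a i => ?_⟩
  · have : (mulAutArrow g (Φ h).left) ((g * h) • a) = (Φ h).left (h • a) := by
      change (Φ h).left (g⁻¹ • (g * h) • a) = _
      rw [mul_smul, inv_smul_smul]
    simp only [map_mul, SemidirectProduct.mul_left, Pi.mul_apply, hr]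
    rw [this, mul_smul]
  · simp [hb]

/-- `S` is closed under the edges of the Schreier graph inside `Y` along which `t` is equivariant. -/
def EquivariantlyClosed (t : A → F) (Y S : Set A) : Prop :=
  ∀ i a, a ∈ Y → b i • a ∈ Y → t (b i • a) = b i * t a → (a ∈ S ↔ b i • a ∈ S)

/-- The edges of the Schreier graph along which `t` fails to be equivariant. -/
def nonTreeEdges (t : A → F) : Set (A × ι) :=
  {p | t (b p.2 • p.1) ≠ b p.2 * t p.1}

/-- Schreier's theorem: if the equivariance edges of a transversal `t` connect the Schreier graph,
the Schreier generators of the remaining edges form a free basis of the point stabilizer. -/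
theorem FreeGroupBasis.exists_schreier_basis {H : Subgroup F} {a₀ : A}
    (hH : ∀ g, g ∈ H ↔ g • a₀ = a₀) {t : A → F} (ht : ∀ a, t a • a₀ = a) (ht₀ : t a₀ = 1)
    (hconn : ∀ S : Set A, EquivariantlyClosed b t Set.univ S → a₀ ∈ S → S = Set.univ) :
    ∃ B : FreeGroupBasis (nonTreeEdges b t) H, ∀ p : nonTreeEdges b t,
      (B p : F) = (t (b p.1.2 • p.1.1))⁻¹ * b p.1.2 * t p.1.1 := by
  have htinv : ∀ a, (t a)⁻¹ • a = a₀ := fun a => by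
    rw [inv_smul_eq_iff]; exact (ht a).symm
  have hmem : ∀ g a, (t (g • a))⁻¹ * g * t a ∈ H := fun g a => by
    rw [hH, mul_smul, mul_smul, ht, htinv]
  let s : A → F → H := fun a g => ⟨(t (g • a))⁻¹ * g * t a, hmem g a⟩
  have hs_mul : ∀ a g h, s a (g * h) = s (h • a) g * s a h := fun a g h => by
    ext; simp only [s, Subgroup.coe_mul, mul_smul]; group
  have hs_self : ∀ h : H, s a₀ h = h := fun h => by
    ext; simp only [s, (hH _).1 h.2, ht₀]; group
  let of : nonTreeEdges b t → H := fun p => s p.1.1 (b p.1.2)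
  have key : ∀ {X : Type} [Group X] (f : nonTreeEdges b t → X),
      ∃! φ : H →* X, ∀ p, φ (of p) = f p := by
    classical
    intro X _ f
    obtain ⟨c, hc, hcb⟩ := b.exists_cocycle
      (fun (a : A) i => if h : (a, i) ∈ nonTreeEdges b t then f ⟨(a, i), h⟩ else 1)
    have hct : ∀ a, c a₀ (t a) = 1 := by
      have := hconn {a | c a₀ (t a) = 1} (fun i a _ _ h => by
        have hn : (a, i) ∉ nonTreeEdges b t := fun hne => hne h
        simp [h, hc, hcb, ht, hn]) (by
        have := hc a₀ 1 1
        simp only [mul_one, one_smul, left_eq_mul] at this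
        simpa [ht₀] using this)
      exact fun a => (this.symm ▸ Set.mem_univ a : a ∈ {a | c a₀ (t a) = 1})
    have hcs : ∀ a g, c a₀ (s a g : H) = c a g := fun a g => by
      have h1 := hc a₀ (t (g • a)) (s a g : H)
      have h2 : t (g • a) * (s a g : H) = g * t a := by simp only [s]; group
      rw [h2, hc, (hH _).1 (s a g).2, hct, hct, ht] at h1
      simpa using h1.symm
    let φ : H →* X := MonoidHom.mk' (fun h => c a₀ h) fun g h => by
      simp only [Subgroup.coe_mul]; rw [hc, (hH _).1 h.2]
    refine ⟨φ, fun p => ?_, fun ψ hψ => ?_⟩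
    · change c a₀ (s _ _ : H) = _
      rw [hcs, hcb, dif_pos p.2]
    · have hψs : ∀ g, g ∈ Subgroup.closure (Set.range b) → ∀ a, ψ (s a g) = c a g := by
        have hc1 : ∀ a, c a 1 = 1 := fun a => by simpa using hc a 1 1
        have hs1 : ∀ a, s a 1 = 1 := fun a => by simpa using hs_mul a 1 1
        intro g hg
        induction hg using Subgroup.closure_induction with
        | mem g hg =>
          obtain ⟨i, rfl⟩ := hg
          intro a
          rw [hcb]
          split_ifs with h
          · exact hψ ⟨(a, i), h⟩
          · have h' : t (b i • a) = b i * t a := not_not.1 h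
            have : s a (b i) = 1 := by ext; simp [s, h']
            rw [this, map_one]
        | one => intro a; rw [hs1, hc1, map_one]
        | mul g h _ _ hg hh => intro a; rw [hs_mul, hc, map_mul, hg, hh]
        | inv g _ hg =>
          intro a
          have h1 := hs_mul a g g⁻¹
          have h2 := hc a g g⁻¹
          rw [mul_inv_cancel, hs1] at h1
          rw [mul_inv_cancel, hc1] at h2
          have h3 := congr_arg ψ h1
          rw [map_one, map_mul, hg, h2] at h3
          exact (mul_left_cancel h3).symm
      ext h
      rw [← hs_self h, hψs _ (by rw [b.closure_range]; trivial)]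
      exact (hcs _ _).symm
  exact ⟨FreeGroupBasis.ofUniqueLift _ of key, fun p => by
    rw [FreeGroupBasis.coe_ofUniqueLift]⟩

/-- A choice of base point `rep a` in each orbit of the powers of `w`, together with the number
`idx a` of applications of `w` leading from the base point to `a`, which is less than the period. -/
structure OrbitSection (w : F) (A : Type) [MulAction F A] where
  rep : A → A
  idx : A → ℕ
  rep_smul : ∀ a, rep (w • a) = rep a
  pow_smul_rep : ∀ a, w ^ idx a • rep a = a
  idx_pow_smul : ∀ a n, n ≤ idx a → idx (w ^ n • rep a) = n

namespace OrbitSection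

variable {w : F} (σ : OrbitSection w A)

theorem rep_pow_smul (n : ℕ) (a : A) : σ.rep (w ^ n • a) = σ.rep a := by
  induction n with
  | zero => simp
  | succ n ih => rw [pow_succ', mul_smul, σ.rep_smul, ih]

theorem rep_rep (a : A) : σ.rep (σ.rep a) = σ.rep a := by
  rw [← σ.rep_pow_smul (σ.idx a), σ.pow_smul_rep]

theorem idx_rep (a : A) : σ.idx (σ.rep a) = 0 := by
  simpa using σ.idx_pow_smul a 0 (Nat.zero_le _)

theorem exists_of_finite [Finite A] (w : F) : ∃ σ : OrbitSection w A,
    ∀ a n, (∀ e, 1 ≤ e → e < n + 1 → w ^ e • a ≠ a) → σ.idx (w ^ n • σ.rep a) = n := by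
  classical
  let q : A → MulAction.orbitRel.Quotient (Subgroup.zpowers w) A := fun a => Quotient.mk _ a
  let r : A → A := fun a => (q a).out
  have hr : ∀ a, r (w • a) = r a := fun a => by
    have : q (w • a) = q a :=
      Quotient.sound ⟨⟨w, Subgroup.mem_zpowers w⟩, rfl⟩
    simp only [r, this]
  have hex : ∀ a, ∃ n : ℕ, w ^ n • r a = a := fun a => by
    obtain ⟨⟨z, hz⟩, hza⟩ : a ∈ MulAction.orbit (Subgroup.zpowers w) (r a) :=
      MulAction.orbitRel_apply.1 (Quotient.exact (Quotient.out_eq (q a)).symm)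
    obtain ⟨k, rfl⟩ := Subgroup.mem_zpowers_iff.1 hz
    obtain ⟨n, hn⟩ := mem_powers_iff_mem_zpowers.2
      (Subgroup.zpow_mem_zpowers (MulAction.toPermHom F A w) k)
    refine ⟨n, Eq.trans ?_ hza⟩
    have hn' : MulAction.toPermHom F A (w ^ n) = MulAction.toPermHom F A (w ^ k) := by
      simpa only [map_pow, map_zpow] using hn
    exact Equiv.congr_fun hn' (r a)
  have hrp : ∀ (n : ℕ) a, r (w ^ n • a) = r a := fun n a => by
    induction n with
    | zero => simp
    | succ n ih => rw [pow_succ', mul_smul, hr, ih]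
  have hrr : ∀ a, r (r a) = r a := fun a => by
    obtain ⟨n, hn⟩ := hex a
    rw [← hrp n, hn]
  have hfind : ∀ a n, (∀ m < n, w ^ m • r a ≠ w ^ n • r a) →
      Nat.find (hex (w ^ n • r a)) = n := fun a n h => by
    rw [Nat.find_eq_iff]
    rw [hrp, hrr]
    exact ⟨rfl, fun m hm => h m hm⟩
  refine ⟨⟨r, fun a => Nat.find (hex a), hr, fun a => Nat.find_spec (hex a), ?_⟩, ?_⟩
  · intro a n hn
    refine hfind a n fun m hm h => ?_
    have hlt : Nat.find (hex a) - n + m < Nat.find (hex a) := by omega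
    refine Nat.find_min (hex a) hlt ?_
    rw [pow_add, mul_smul, h, ← mul_smul, ← pow_add, Nat.sub_add_cancel hn, Nat.find_spec (hex a)]
  · intro a n hn
    refine hfind a n fun m hm h => ?_
    refine hn (n - m) (by omega) (by omega) ?_
    have h1 : w ^ (n - m) • r a = r a := by
      have : w ^ m • w ^ (n - m) • r a = w ^ m • r a := by
        rw [← mul_smul, ← pow_add, Nat.add_sub_cancel' hm.le, h]
      exact (MulAction.injective _) this
    obtain ⟨k, hk⟩ := hex a
    conv_lhs => rw [← hk, ← mul_smul, pow_mul_comm, mul_smul, h1, hk]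

end OrbitSection

/-- `t` is a transversal over the `w`-saturated set `Y`, equivariant along the `w`-orbits cut open at
their base points. -/
structure IsOrbitTransversal {w : F} (σ : OrbitSection w A) (a₀ : A) (t : A → F) (Y : Set A) :
    Prop where
  smul_base : ∀ a ∈ Y, t a • a₀ = a
  rep_mem_iff : ∀ a, σ.rep a ∈ Y ↔ a ∈ Y
  eq_pow_mul : ∀ a ∈ Y, t a = w ^ σ.idx a * t (σ.rep a)

open Classical in
/-- Redefine `t` on the `w`-orbit of `p`, with value `g` at `p`. -/
noncomputable def OrbitSection.update {w : F} (σ : OrbitSection w A) (t : A → F) (p : A) (g : F) :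
    A → F :=
  fun a => if σ.rep a = σ.rep p then w ^ σ.idx a * (w ^ σ.idx p)⁻¹ * g else t a

section Update

variable {w : F} {σ : OrbitSection w A} {a₀ p : A} {t : A → F} {Y : Set A} {g : F}

theorem OrbitSection.update_self : σ.update t p g p = g := by
  simp [OrbitSection.update]

theorem OrbitSection.update_of_mem (h : IsOrbitTransversal σ a₀ t Y) (hp : p ∉ Y) {a : A}
    (ha : a ∈ Y) : σ.update t p g a = t a := by
  refine if_neg fun he => hp ?_
  rw [← h.rep_mem_iff, ← he, h.rep_mem_iff]
  exact ha

theorem IsOrbitTransversal.update (h : IsOrbitTransversal σ a₀ t Y) (hp : p ∉ Y)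
    (hg : g • a₀ = p) :
    IsOrbitTransversal σ a₀ (σ.update t p g) (Y ∪ {a | σ.rep a = σ.rep p}) where
  smul_base := by
    rintro a (ha | ha)
    · rw [OrbitSection.update_of_mem h hp ha, h.smul_base a ha]
    · have ha : σ.rep a = σ.rep p := ha
      have h1 : (w ^ σ.idx p)⁻¹ • p = σ.rep p := by
        rw [inv_smul_eq_iff, σ.pow_smul_rep]
      rw [OrbitSection.update, if_pos ha, mul_smul, mul_smul, hg, h1, ← ha, σ.pow_smul_rep]
  rep_mem_iff a := by simp [h.rep_mem_iff, σ.rep_rep]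
  eq_pow_mul := by
    rintro a (ha | ha)
    · rw [OrbitSection.update_of_mem h hp ha,
        OrbitSection.update_of_mem h hp ((h.rep_mem_iff a).2 ha), h.eq_pow_mul a ha]
    · have ha : σ.rep a = σ.rep p := ha
      simp [OrbitSection.update, ha, σ.rep_rep, σ.idx_rep, mul_assoc]

variable {b} {i₀ : ι}

theorem IsOrbitTransversal.mem_iff_rep_mem {σ : OrbitSection (b i₀) A}
    (h : IsOrbitTransversal σ a₀ t Y) {S : Set A} (hS : EquivariantlyClosed b t Y S) {a : A}
    (ha : a ∈ Y) : a ∈ S ↔ σ.rep a ∈ S := by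
  suffices ∀ n ≤ σ.idx a, b i₀ ^ n • σ.rep a ∈ S ↔ σ.rep a ∈ S by
    simpa only [σ.pow_smul_rep] using this _ le_rfl
  have hY : ∀ n, b i₀ ^ n • σ.rep a ∈ Y := fun n => by
    rwa [← h.rep_mem_iff, σ.rep_pow_smul, σ.rep_rep, h.rep_mem_iff]
  have ht : ∀ n ≤ σ.idx a, t (b i₀ ^ n • σ.rep a) = b i₀ ^ n * t (σ.rep a) := fun n hn => by
    rw [h.eq_pow_mul _ (hY n), σ.idx_pow_smul a n hn, σ.rep_pow_smul, σ.rep_rep]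
  intro n hn
  induction n with
  | zero => simp
  | succ n ih =>
    have e : b i₀ ^ (n + 1) • σ.rep a = b i₀ • b i₀ ^ n • σ.rep a := by
      rw [pow_succ', mul_smul]
    rw [← ih (by omega), e]
    refine (hS i₀ _ (hY n) (e ▸ hY (n + 1)) ?_).symm
    rw [← e, ht _ hn, ht _ (by omega), pow_succ', mul_assoc]

theorem IsOrbitTransversal.exists_univ [Finite A] [MulAction.IsPretransitive F A]
    (σ : OrbitSection (b i₀) A) (a₀ : A) :
    ∃ t : A → F, IsOrbitTransversal σ a₀ t Set.univ ∧ t a₀ = 1 ∧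
      ∀ S : Set A, EquivariantlyClosed b t Set.univ S → a₀ ∈ S → S = Set.univ := by
  let P : Set A → Prop := fun Y => a₀ ∈ Y ∧ ∃ t : A → F, IsOrbitTransversal σ a₀ t Y ∧ t a₀ = 1 ∧
      ∀ S : Set A, EquivariantlyClosed b t Y S → a₀ ∈ S → Y ⊆ S
  have hbase : P (∅ ∪ {a | σ.rep a = σ.rep a₀}) := by
    have h : IsOrbitTransversal σ a₀ (fun _ => 1) ∅ := ⟨by simp, by simp, by simp⟩
    have h' := h.update (p := a₀) (g := 1) (by simp) (by simp)
    refine ⟨by simp, _, h', OrbitSection.update_self, fun S hS h₀ a ha => ?_⟩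
    have ha' : σ.rep a = σ.rep a₀ := by simpa using ha
    rw [h'.mem_iff_rep_mem hS ha, ha', ← h'.mem_iff_rep_mem hS (by simp)]
    exact h₀
  obtain ⟨Y, -, ⟨h₀, t, ht, ht₀, hconn⟩, hmax⟩ := Finite.exists_le_maximal hbase
  suffices hY : Y = Set.univ by
    subst hY
    exact ⟨t, ht, ht₀, fun S hS h => Set.univ_subset_iff.1 (hconn S hS h)⟩
  have hext : ∀ p g, p ∉ Y → g • a₀ = p → (∀ S : Set A,
      EquivariantlyClosed b (σ.update t p g) (Y ∪ {a | σ.rep a = σ.rep p}) S → Y ⊆ S → p ∈ S) →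
      False := by
    intro p g hp hg hS
    have h' := ht.update hp hg
    have hP : P (Y ∪ {a | σ.rep a = σ.rep p}) := by
      refine ⟨Or.inl h₀, _, h', ?_, fun S hcl hS₀ => ?_⟩
      · rw [OrbitSection.update_of_mem ht hp h₀, ht₀]
      · have hYS : Y ⊆ S := hconn S (fun i a ha hb he => hcl i a (Or.inl ha) (Or.inl hb) (by
          rwa [OrbitSection.update_of_mem ht hp ha, OrbitSection.update_of_mem ht hp hb])) hS₀
        rintro a (ha | ha)
        · exact hYS ha
        · rw [h'.mem_iff_rep_mem hcl (Or.inr ha), show σ.rep a = σ.rep p from ha,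
            ← h'.mem_iff_rep_mem hcl (Or.inr rfl)]
          exact hS S hcl hYS
    exact hp (hmax hP Set.subset_union_left (Or.inr rfl))
  have hedge : ∀ i a, a ∈ Y ↔ b i • a ∈ Y := by
    refine fun i a => ⟨fun ha => ?_, fun ha => ?_⟩
    · by_contra hp
      refine hext (b i • a) (b i * t a) hp (by rw [mul_smul, ht.smul_base a ha]) fun S hS hYS => ?_
      refine (hS i a (Or.inl ha) (Or.inr rfl) ?_).1 (hYS ha)
      rw [OrbitSection.update_self, OrbitSection.update_of_mem ht hp ha]
    · by_contra hp
      refine hext a ((b i)⁻¹ * t (b i • a)) hp (by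
        rw [mul_smul, ht.smul_base _ ha, inv_smul_smul]) fun S hS hYS => ?_
      refine (hS i a (Or.inr rfl) (Or.inl ha) ?_).2 (hYS ha)
      rw [OrbitSection.update_self, OrbitSection.update_of_mem ht hp ha, mul_inv_cancel_left]
  have hinv : ∀ g ∈ Subgroup.closure (Set.range b), ∀ a, a ∈ Y ↔ g • a ∈ Y := by
    intro g hg
    induction hg using Subgroup.closure_induction with
    | mem g hg => obtain ⟨i, rfl⟩ := hg; exact hedge i
    | one => simp
    | mul g h _ _ hg hh => intro a; rw [mul_smul, ← hg, ← hh]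
    | inv g _ hg => intro a; rw [hg (g⁻¹ • a), smul_inv_smul]
  refine Set.eq_univ_of_forall fun a => ?_
  obtain ⟨g, rfl⟩ := MulAction.exists_smul_eq F a₀ a
  exact (hinv g (by rw [b.closure_range]; trivial) a₀).1 h₀

end Update

end FreeAction

/-- Elements of a free basis have infinite order. -/
theorem FreeGroupBasis.pow_ne_one {ι G : Type*} [Group G] (b : FreeGroupBasis ι G) (i : ι) {d : ℕ}
    (hd : 1 ≤ d) : b i ^ d ≠ 1 := by
  intro h
  have h1 := congr_arg b.repr h
  rw [map_pow, b.repr_apply_coe, map_one] at h1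
  exact FreeGroup.of_ne_one i ((pow_eq_one_iff_left (by omega)).1 h1)

/-- **Elevations of a primitive element form part of a basis** (Lemma 3.28): if `w` is a
primitive element of a finitely generated free group `F` and `F' ≤ F` has finite index,
then representatives of the (pairwise distinct) conjugacy classes of elevations of `w` to
`F'` can be chosen to form part of a free basis of `F'`. -/
theorem elevations_of_primitive_extend_to_basis
    (F : Type) [Group F] [IsFreeGroup F] (hF : Group.FG F)
    (w : F)
    (hprim : ∃ (ι : Type) (x : ι → F) (e : FreeGroup ι ≃* F),
      (∀ i, e (FreeGroup.of i) = x i) ∧ ∃ i, x i = w)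
    (F' : Subgroup F) (hF' : F'.FiniteIndex) :
    ∃ ρ : {c : ConjClasses ↥F' // ∃ d : ℕ, IsClassElevation F' d c (ConjClasses.mk w)} → ↥F',
      (∀ c, ConjClasses.mk (ρ c) = (c : ConjClasses ↥F')) ∧
      ∃ (ι : Type) (x : ι → ↥F') (e : FreeGroup ι ≃* ↥F'),
        (∀ i, e (FreeGroup.of i) = x i) ∧ ∀ c, ∃ i, x i = ρ c := by
  obtain ⟨ι, x, e, hx, i₀, rfl⟩ := hprim
  let b : FreeGroupBasis ι F := FreeGroupBasis.ofRepr e.symm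
  obtain rfl : (b : ι → F) = x := funext hx
  let a₀ : F ⧸ F' := QuotientGroup.mk 1
  have hH : ∀ g : F, g ∈ F' ↔ g • a₀ = a₀ := fun g => by
    rw [← MulAction.mem_stabilizer_iff, MulAction.stabilizer_quotient]
  obtain ⟨σ, hσ⟩ := OrbitSection.exists_of_finite (A := F ⧸ F') (b i₀)
  obtain ⟨t, ht, ht₀, hconn⟩ := IsOrbitTransversal.exists_univ σ a₀
  obtain ⟨B, hB⟩ := b.exists_schreier_basis hH (fun a => ht.smul_base a trivial) ht₀ hconn
  have key : ∀ c : {c : ConjClasses ↥F' //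
      ∃ d : ℕ, IsClassElevation F' d c (ConjClasses.mk (b i₀))},
      ∃ p, ConjClasses.mk (B p) = (c : ConjClasses F') := by
    rintro ⟨_, d, u, w₀, rfl, hw, hd, hu, hmin⟩
    obtain ⟨g, rfl⟩ := isConj_iff.1 (ConjClasses.mk_eq_mk_iff_isConj.1 hw).symm
    have hpow : ∀ n, (g * b i₀ * g⁻¹) ^ n ∈ F' ↔ b i₀ ^ n • g⁻¹ • a₀ = g⁻¹ • a₀ := fun n => by
      rw [conj_pow, hH, mul_smul, mul_smul, smul_eq_iff_eq_inv_smul]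
    obtain ⟨n, rfl⟩ : ∃ n, d = n + 1 := ⟨d - 1, by omega⟩
    set a := g⁻¹ • a₀ with ha
    set r := σ.rep a with hr
    have hidx := hσ a n fun e h1 h2 h => hmin e h1 h2 ((hpow e).2 h)
    have hper : b i₀ ^ (n + 1) • r = r := by
      have h1 : b i₀ ^ (n + 1) • a = a := (hpow _).1 (hu ▸ u.2)
      apply MulAction.injective (b i₀ ^ σ.idx a)
      simp only
      rw [← mul_smul, pow_mul_comm, mul_smul, σ.pow_smul_rep, h1]
    have hlast : t (b i₀ ^ n • r) = b i₀ ^ n * t r := by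
      rw [ht.eq_pow_mul _ trivial, hidx, σ.rep_pow_smul, σ.rep_rep]
    have hclose : b i₀ • b i₀ ^ n • r = r := by rw [← mul_smul, ← pow_succ', hper]
    have hnt : (b i₀ ^ n • r, i₀) ∈ nonTreeEdges b t := by
      intro h
      simp only at h
      rw [hclose, hlast, ← mul_assoc, ← pow_succ'] at h
      exact b.pow_ne_one i₀ hd (by simpa using h.symm)
    have hmem : g * b i₀ ^ σ.idx a * t r ∈ F' := by
      rw [hH, mul_smul, mul_smul, ht.smul_base _ trivial, σ.pow_smul_rep, ha, smul_inv_smul]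
    refine ⟨⟨_, hnt⟩, ConjClasses.mk_eq_mk_iff_isConj.2 (isConj_iff.2 ⟨⟨_, hmem⟩, ?_⟩)⟩
    ext
    simp only [Subgroup.coe_mul, Subgroup.coe_inv, hB, hu, conj_pow]
    rw [hclose, hlast]
    have hc := pow_mul_comm (b i₀) (σ.idx a) (n + 1)
    calc _ = g * (b i₀ ^ σ.idx a * (b i₀ * b i₀ ^ n)) * (b i₀ ^ σ.idx a)⁻¹ * g⁻¹ := by group
      _ = _ := by rw [← pow_succ', hc]; group
  choose p hp using key
  exact ⟨fun c => B (p c), hp, _, B, B.repr.symm, fun _ => rfl, fun c => ⟨p c, rfl⟩⟩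
end
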